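/- arXiv:0710.3991 — 2 statements merged into one kernel-verified Lean document; each statement's English description precedes it below -/
import Mathlib

section
/- Let F ⊂ Sym²(ℝⁿ) be a Dirichlet set with ray set F⃗, and let Ω ⊂ ℝⁿ be a bounded open set with smooth boundary. If ∂Ω is strictly F⃗-convex at each of its points, then there exist an open set V containing the closure cl(Ω) and a smooth function ρ : V → ℝ such that Ω = {x ∈ V : ρ(x) < 0}, ∇ρ(x) ≠ 0 for every x ∈ ∂Ω, Hess_x ρ ∈ Int F⃗ for every x ∈ cl(Ω), and moreover there exist ε > 0 and R > 0 such that C(Hess_x ρ − εI) ∈ F for every C ≥ R and every x ∈ cl(Ω). -/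
open Set Metric Filter MeasureTheory Asymptotics
open scoped Topology BigOperators RealInnerProductSpace

noncomputable section

abbrev Euc (n : ℕ) : Type := EuclideanSpace ℝ (Fin n)

abbrev SymMat (n : ℕ) : Type := ↥(selfAdjoint (Matrix (Fin n) (Fin n) ℝ))

/-- `u` is subaffine on `X`. -/
def SubaffineOn {n : ℕ} (X : Set (Euc n)) (u : Euc n → EReal) : Prop :=
  ∀ K : Set (Euc n), IsCompact K → K ⊆ X →
    ∀ a : Euc n →ᵃ[ℝ] ℝ,
      (∀ x ∈ frontier K, u x ≤ (a x : EReal)) → ∀ x ∈ K, u x ≤ (a x : EReal)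

/-- The Hessian matrix of `u` at `x`. -/
def hessMat {n : ℕ} (u : Euc n → ℝ) (x : Euc n) : Matrix (Fin n) (Fin n) ℝ :=
  fun i j => iteratedFDeriv ℝ 2 u x ![EuclideanSpace.single i 1, EuclideanSpace.single j 1]

structure IsDirichletSet {n : ℕ} (F : Set (SymMat n)) : Prop where
  nonempty : F.Nonempty
  ne_univ : F ≠ Set.univ
  isClosed : IsClosed F
  add_psd : ∀ A ∈ F, ∀ P : SymMat n, (P : Matrix (Fin n) (Fin n) ℝ).PosSemidef → A + P ∈ F

/-- The Dirichlet dual `F̃ = −(∼ Int F)`. -/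
def dirDual {n : ℕ} (F : Set (SymMat n)) : Set (SymMat n) := {A | -A ∉ interior F}

/-- A C² function `v` on `X` is of type `F`. -/
def IsTypeFC2 {n : ℕ} (F : Set (SymMat n)) (X : Set (Euc n)) (v : Euc n → ℝ) : Prop :=
  ContDiffOn ℝ 2 v X ∧ ∀ x ∈ X, ∃ A ∈ F, (A : Matrix (Fin n) (Fin n) ℝ) = hessMat v x

/-- An u.s.c. function `u` is of type `F` on `X`. -/
def IsTypeF {n : ℕ} (F : Set (SymMat n)) (X : Set (Euc n)) (u : Euc n → EReal) : Prop :=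
  ∀ v : Euc n → ℝ, IsTypeFC2 (dirDual F) X v → SubaffineOn X (fun x => u x + (v x : EReal))

/-- The ray set `F⃗` of `F`. -/
def raySet {n : ℕ} (F : Set (SymMat n)) : Set (SymMat n) :=
  closure {A : SymMat n | ∃ t₀ : ℝ, ∀ t : ℝ, t₀ ≤ t → t • A ∈ F}

/-- The bilinear form `⟨A v, w⟩` of a matrix. -/
def bilin {n : ℕ} (A : Matrix (Fin n) (Fin n) ℝ) (v w : Euc n) : ℝ :=
  ∑ i, ∑ j, A i j * v i * w j

/-- `A` is not negative definite. -/
def NotNegDef {n : ℕ} (A : SymMat n) : Prop :=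
  ¬ (-(A : Matrix (Fin n) (Fin n) ℝ)).PosDef

def IsLocalDefiningFn {n : ℕ} (Ω U : Set (Euc n)) (ρ : Euc n → ℝ) : Prop :=
  IsOpen U ∧ ContDiffOn ℝ (⊤ : ℕ∞) ρ U ∧ Ω ∩ U = {y ∈ U | ρ y < 0} ∧ ∀ y ∈ U, fderiv ℝ ρ y ≠ 0

def HasSmoothBoundary {n : ℕ} (Ω : Set (Euc n)) : Prop :=
  ∀ x ∈ frontier Ω, ∃ U ρ, x ∈ U ∧ IsLocalDefiningFn Ω U ρ

/-- `∂Ω` is strictly `G`-convex at `x`. -/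
def StrictlyConvexAt {n : ℕ} (G : Set (SymMat n)) (Ω : Set (Euc n)) (x : Euc n) : Prop :=
  ∃ U ρ, x ∈ U ∧ IsLocalDefiningFn Ω U ρ ∧
    ∃ B ∈ interior G, ∀ v w : Euc n, fderiv ℝ ρ x v = 0 → fderiv ℝ ρ x w = 0 →
      bilin (hessMat ρ x) v w = bilin (B : Matrix (Fin n) (Fin n) ℝ) v w

def symOne (n : ℕ) : SymMat n := ⟨1, selfAdjoint.mem_iff.mpr (IsSelfAdjoint.one _)⟩

/-- `u` is twice differentiable at `x` with Hessian `A`. -/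
def TwiceDiffWithHessAt {n : ℕ} (u : Euc n → ℝ) (x : Euc n)
    (A : Matrix (Fin n) (Fin n) ℝ) : Prop :=
  ∃ p : Euc n, (fun h : Euc n => u (x + h) - u x - ⟪p, h⟫ - 1/2 * bilin A h h)
      =o[𝓝 (0 : Euc n)] fun h => ‖h‖ ^ 2

/-!
Multiplying a local defining function by a bump function gives a function that is nonpositive on
`Ω` and nonnegative off `Ω`; finitely many of these add up to a global defining function, because
at a boundary point all their differentials are nonnegative multiples of one covector. Two defining
functions `r` and `s` have proportional differentials at a boundary point, and comparing them along
parabolas orders their Hessians on the tangent space after the same scaling. Strict convexity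
therefore gives `Hess r + l • dr ⊗ dr ∈ Int F⃗` on `∂Ω` for one large `l`, which up to a positive
factor is the Hessian of `exp (l * r) - 1`.

By compactness the Hessian of this new function `q` lies in `Int F⃗` on a collar `-a < q` of the
boundary. Composing `q` with a convex ramp that is constant on `(-∞, -a]` keeps the Hessian in
`Int F⃗` on the collar and makes it vanish, hence lie in `F⃗`, elsewhere on `closure Ω`. A small
multiple of a cut-off of `‖y‖² - D²` then moves it into `Int F⃗` everywhere.

The quantitative conclusion rests on monotonicity: an interior point of `F⃗` dominates a direction
whose ray eventually stays in `F`, so its own ray eventually stays in `F`, and compactness of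
`closure Ω` makes this uniform.
-/

section OrderedTopologicalVectorSpace

open scoped Pointwise

variable {X E : Type*} [AddCommGroup E]

/-- The directions `A` whose rays `t • A` eventually stay in `F`; the closure of this set is the
ray set of `F`. -/
def eventualRays [SMul ℝ E] (F : Set E) : Set E :=
  {A | ∀ᶠ t : ℝ in atTop, t • A ∈ F}

lemma smul_eventualRays [Module ℝ E] (F : Set E) {c : ℝ} (hc : 0 < c) :
    c • eventualRays F = eventualRays F := by
  have hmaps : ∀ {a : ℝ}, 0 < a → ∀ {A : E}, A ∈ eventualRays F → a • A ∈ eventualRays F := by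
    intro a ha A hA
    filter_upwards [(tendsto_id.atTop_mul_const ha).eventually hA] with t ht
    simpa only [id, mul_smul] using ht
  refine Subset.antisymm (image_subset_iff.2 fun A hA => hmaps hc hA) fun A hA => ?_
  exact (mem_smul_set_iff_inv_smul_mem₀ hc.ne' _ _).2 (hmaps (inv_pos.2 hc) hA)

lemma isUpperSet_eventualRays [PartialOrder E] [Module ℝ E] [PosSMulMono ℝ E] {F : Set E}
    (hF : IsUpperSet F) : IsUpperSet (eventualRays F) := by
  intro A B hAB hA
  filter_upwards [hA, eventually_ge_atTop 0] with t htA ht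
  exact hF (smul_le_smul_of_nonneg_left hAB ht) htA

variable [TopologicalSpace E]

lemma smul_mem_interior_closure_eventualRays [Module ℝ E] [ContinuousSMul ℝ E] {F : Set E} {A : E}
    (hA : A ∈ interior (closure (eventualRays F))) {c : ℝ} (hc : 0 < c) :
    c • A ∈ interior (closure (eventualRays F)) := by
  have hinv : c • interior (closure (eventualRays F)) = interior (closure (eventualRays F)) := by
    rw [← interior_smul₀ hc.ne', ← closure_smul₀' hc.ne', smul_eventualRays F hc]
  exact hinv ▸ smul_mem_smul_set hA

section Module

variable [Module ℝ E] [ContinuousSMul ℝ E] [IsTopologicalAddGroup E]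

lemma exists_pos_sub_smul_mem_of_isOpen {G : Set E} (hG : IsOpen G) {A : E} (hA : A ∈ G) (p : E) :
    ∃ δ : ℝ, 0 < δ ∧ A - δ • p ∈ G := by
  have hcont : Continuous fun δ : ℝ => A - δ • p := by fun_prop
  have hev : ∀ᶠ δ : ℝ in 𝓝 0, A - δ • p ∈ G :=
    hcont.continuousAt.eventually_mem (hG.mem_nhds (by simpa using hA))
  obtain ⟨δ, hδ, hpos⟩ := ((hev.filter_mono nhdsWithin_le_nhds).and self_mem_nhdsWithin).exists
    (f := 𝓝[>] 0)
  exact ⟨δ, hpos, hδ⟩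

end Module

variable [PartialOrder E]

lemma smul_mem_interior_Ici [Module ℝ E] [ContinuousSMul ℝ E] [PosSMulMono ℝ E] {p : E}
    (hp : p ∈ interior (Ici (0 : E))) {c : ℝ} (hc : 0 < c) : c • p ∈ interior (Ici (0 : E)) := by
  have hsub : c • Ici (0 : E) ⊆ Ici 0 := by
    rintro _ ⟨x, hx, rfl⟩
    exact smul_nonneg hc.le hx
  exact interior_mono hsub (interior_smul₀ hc.ne' (Ici (0 : E)) ▸ smul_mem_smul_set hp)

variable [IsOrderedAddMonoid E] [IsTopologicalAddGroup E] {F G : Set E} {A p e : E}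

lemma add_mem_interior_of_isUpperSet (hG : IsUpperSet G) (hA : A ∈ G)
    (hp : p ∈ interior (Ici 0)) : A + p ∈ interior G := by
  have hsub : G + Ici 0 ⊆ G := by
    rintro _ ⟨B, hB, q, hq, rfl⟩
    exact hG (le_add_of_nonneg_right hq) hB
  exact interior_mono hsub (subset_interior_add_right (add_mem_add hA hp))

variable [Module ℝ E] [ContinuousSMul ℝ E] [PosSMulMono ℝ E]

lemma interior_closure_subset_of_isUpperSet (hG : IsUpperSet G)
    (he : e ∈ interior (Ici (0 : E))) : interior (closure G) ⊆ G := by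
  intro A hA
  obtain ⟨δ, hδ, hAδ⟩ := exists_pos_sub_smul_mem_of_isOpen isOpen_interior hA e
  have hopen : IsOpen {B | A - B ∈ interior (Ici (0 : E))} :=
    isOpen_interior.preimage (continuous_const.sub continuous_id)
  have hmem : A - δ • e ∈ {B | A - B ∈ interior (Ici (0 : E))} := by
    simpa using smul_mem_interior_Ici he hδ
  obtain ⟨B, hBA, hBG⟩ := mem_closure_iff.1 (interior_subset hAδ) _ hopen hmem
  exact hG (sub_nonneg.1 (interior_subset hBA)) hBG

lemma zero_mem_closure_eventualRays (hF : IsUpperSet F) (hne : F.Nonempty)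
    (he : e ∈ interior (Ici (0 : E))) : (0 : E) ∈ closure (eventualRays F) := by
  obtain ⟨A, hA⟩ := hne
  have hray : e ∈ eventualRays F := by
    have hlim : Tendsto (fun t : ℝ => e - t⁻¹ • A) atTop (𝓝 e) := by
      simpa using tendsto_const_nhds.sub ((tendsto_inv_atTop_zero (𝕜 := ℝ)).smul_const A)
    filter_upwards [hlim.eventually_mem (isOpen_interior.mem_nhds he), eventually_gt_atTop 0]
      with t ht htpos
    refine hF ?_ hA
    simpa [smul_sub, smul_smul, htpos.ne'] using smul_nonneg htpos.le (interior_subset ht)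
  have hlim : Tendsto (fun c : ℝ => c • e) (𝓝[>] 0) (𝓝 0) := by
    have hcont : Continuous fun c : ℝ => c • e := by fun_prop
    simpa using (hcont.tendsto 0).mono_left nhdsWithin_le_nhds
  refine mem_closure_of_tendsto hlim ?_
  filter_upwards [self_mem_nhdsWithin] with c hc
  exact smul_eventualRays F hc ▸ smul_mem_smul_set hray

lemma exists_pos_eventually_smul_sub_smul_mem (hF : IsUpperSet F)
    (he : e ∈ interior (Ici (0 : E))) {K : Set E} (hK : IsCompact K)
    (hKF : K ⊆ interior (closure (eventualRays F))) :
    ∃ ε : ℝ, 0 < ε ∧ ∀ᶠ C : ℝ in atTop, ∀ A ∈ K, C • (A - ε • e) ∈ F := by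
  have hanti : ∀ {A : E} {C ε ε' : ℝ}, 0 ≤ C → ε' ≤ ε → C • (A - ε • e) ∈ F →
      C • (A - ε' • e) ∈ F := fun hC hε =>
    hF (smul_le_smul_of_nonneg_left
      (sub_le_sub_left (smul_le_smul_of_nonneg_right hε (interior_subset he)) _) hC)
  refine hK.induction_on (p := fun S => ∃ ε : ℝ, 0 < ε ∧ ∀ᶠ C : ℝ in atTop,
    ∀ A ∈ S, C • (A - ε • e) ∈ F) ⟨1, one_pos, by simp⟩ ?_ ?_ ?_
  · rintro S T hST ⟨ε, hε, hT⟩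
    exact ⟨ε, hε, hT.mono fun C hC A hA => hC A (hST hA)⟩
  · rintro S T ⟨ε, hε, hS⟩ ⟨ε', hε', hT⟩
    refine ⟨min ε ε', lt_min hε hε', ?_⟩
    filter_upwards [hS, hT, eventually_ge_atTop 0] with C hCS hCT hC
    rintro A (hA | hA)
    · exact hanti hC (min_le_left _ _) (hCS A hA)
    · exact hanti hC (min_le_right _ _) (hCT A hA)
  · intro A hA
    obtain ⟨δ, hδ, hAδ⟩ := exists_pos_sub_smul_mem_of_isOpen isOpen_interior (hKF hA) e
    have hray : A - δ • e ∈ eventualRays F :=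
      interior_closure_subset_of_isUpperSet (isUpperSet_eventualRays hF) he hAδ
    have hcont : Continuous fun B => B - A + (δ / 2) • e := by fun_prop
    have hnear : ∀ᶠ B in 𝓝 A, B - A + (δ / 2) • e ∈ interior (Ici 0) :=
      hcont.continuousAt.eventually_mem (isOpen_interior.mem_nhds
        (by simpa using smul_mem_interior_Ici he (half_pos hδ)))
    refine ⟨_, mem_nhdsWithin_of_mem_nhds hnear, δ / 2, half_pos hδ, ?_⟩
    filter_upwards [hray, eventually_ge_atTop 0] with C hCF hC B hB
    refine hF (smul_le_smul_of_nonneg_left (sub_nonneg.1 ?_) hC) hCF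
    have hnonneg : 0 ≤ B - A + (δ / 2) • e := interior_subset hB
    convert hnonneg using 1
    module

variable [TopologicalSpace X] {K : Set X} {H P : X → E}

lemma eventually_forall_add_smul_mem_interior (hG : IsUpperSet G) (hK : IsCompact K)
    (hH : Continuous H) (hP : Continuous P) (hHG : ∀ x ∈ K, H x ∈ G)
    (hint : ∀ x ∈ K, P x ∉ interior (Ici 0) → H x ∈ interior G) :
    ∀ᶠ ε : ℝ in 𝓝[>] 0, ∀ x ∈ K, H x + ε • P x ∈ interior G := by
  have hcompact : IsCompact (K \ P ⁻¹' interior (Ici 0)) :=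
    hK.diff (isOpen_interior.preimage hP)
  have hcont : Continuous fun z : ℝ × X => H z.2 + z.1 • P z.2 := by fun_prop
  have hfar : ∀ᶠ ε : ℝ in 𝓝 0, ∀ x ∈ K \ P ⁻¹' interior (Ici 0), H x + ε • P x ∈ interior G := by
    refine hcompact.eventually_forall_of_forall_eventually fun x hx => ?_
    exact (hcont.tendsto (0, x)).eventually_mem
      (isOpen_interior.mem_nhds (by simpa using hint x hx.1 hx.2))
  filter_upwards [hfar.filter_mono nhdsWithin_le_nhds, self_mem_nhdsWithin] with ε hε hpos x hx
  by_cases hPx : P x ∈ interior (Ici 0)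
  · exact add_mem_interior_of_isUpperSet hG (hHG x hx) (smul_mem_interior_Ici hPx hpos)
  · exact hε x ⟨hx, hPx⟩

lemma exists_pos_forall_add_smul_mem (hG : IsUpperSet G) (hGo : IsOpen G) (hK : IsCompact K)
    (hH : Continuous H) (hP : Continuous P) (hP0 : 0 ≤ P)
    (hHG : ∀ x ∈ K, ∃ l : ℝ, H x + l • P x ∈ G) :
    ∃ l : ℝ, 0 < l ∧ ∀ x ∈ K, H x + l • P x ∈ G := by
  have hmono : Monotone fun l : ℝ => {x | H x + l • P x ∈ G} := fun l m hlm x hx =>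
    hG (add_le_add_right (smul_le_smul_of_nonneg_right hlm (hP0 x)) _) hx
  obtain ⟨l, hl⟩ := hK.elim_directed_cover (fun l : ℝ => {x | H x + l • P x ∈ G})
    (fun l => hGo.preimage (hH.add (hP.const_smul l))) (fun x hx => mem_iUnion.2 (hHG x hx))
    hmono.directed_le
  exact ⟨max l 1, by positivity, fun x hx => hmono (le_max_left l 1) (hl hx)⟩

end OrderedTopologicalVectorSpace

instance instContinuousSMulSelfAdjoint {A : Type*} [AddCommGroup A] [StarAddMonoid A] [Module ℝ A]
    [StarModule ℝ A] [TopologicalSpace A] [ContinuousSMul ℝ A] :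
    ContinuousSMul ℝ (selfAdjoint A) where
  continuous_smul :=
    (continuous_fst.smul (continuous_subtype_val.comp continuous_snd)).subtype_mk _

section LoewnerOrder

open scoped MatrixOrder

variable {n : ℕ}

instance instPosSMulMonoSymMat : PosSMulMono ℝ (SymMat n) where
  smul_le_smul_of_nonneg_left _ hc A B hAB :=
    smul_le_smul_of_nonneg_left (b₁ := A.1) (b₂ := B.1) hAB hc

lemma bilin_eq_toBilin' (A : Matrix (Fin n) (Fin n) ℝ) (v w : Euc n) :
    bilin A v w = Matrix.toBilin' A v w := by
  simp only [bilin, Matrix.toBilin'_apply, mul_comm (v _)]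

lemma le_iff_forall_bilin_le {A B : SymMat n} : A ≤ B ↔ ∀ v : Euc n, bilin A v v ≤ bilin B v v := by
  have hherm : ((B - A : SymMat n) : Matrix (Fin n) (Fin n) ℝ).IsHermitian := (B - A).2
  have hdiff : ∀ v : Euc n, bilin B v v - bilin A v v = star v.ofLp ⬝ᵥ (B.1 - A.1).mulVec v.ofLp :=
    fun v => by
      simp only [bilin_eq_toBilin', Matrix.toBilin'_apply', Matrix.sub_mulVec, dotProduct_sub,
        star_trivial]
  rw [← Subtype.coe_le_coe, Matrix.le_iff, Matrix.posSemidef_iff_dotProduct_mulVec]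
  refine ⟨fun h v => sub_nonneg.1 (hdiff v ▸ h.2 v.ofLp), fun h => ⟨hherm, fun v => ?_⟩⟩
  exact hdiff (WithLp.toLp 2 v) ▸ sub_nonneg.2 (h _)

lemma le_of_forall_sphere_bilin_le {A B : SymMat n}
    (h : ∀ v ∈ sphere (0 : Euc n) 1, bilin A v v ≤ bilin B v v) : A ≤ B := by
  refine le_iff_forall_bilin_le.2 fun v => ?_
  obtain rfl | hv := eq_or_ne v 0
  · simp [bilin]
  · have hunit := h (‖v‖⁻¹ • v) (by simp [norm_smul, hv])
    simp only [bilin_eq_toBilin', WithLp.ofLp_smul, map_smul, LinearMap.smul_apply,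
      smul_eq_mul] at hunit ⊢
    have : 0 < ‖v‖⁻¹ := by positivity
    exact le_of_mul_le_mul_left (le_of_mul_le_mul_left hunit this) this

lemma bilin_one (v : Euc n) : bilin (1 : SymMat n) v v = ‖v‖ ^ 2 := by
  simp [EuclideanSpace.real_norm_sq_eq, bilin, Matrix.one_apply, ← pow_two]

lemma continuous_bilin : Continuous fun z : SymMat n × Euc n => bilin z.1 z.2 z.2 := by
  have hentry : ∀ i j, Continuous fun z : SymMat n × Euc n => z.1.1 i j :=
    fun i j => (continuous_subtype_val.comp continuous_fst).matrix_elem i j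
  exact continuous_finsetSum _ fun i _ => continuous_finsetSum _ fun j _ =>
    ((hentry i j).mul (by fun_prop)).mul (by fun_prop)

lemma one_mem_interior_Ici_zero : (1 : SymMat n) ∈ interior (Ici 0) := by
  have hpos : ∀ᶠ A : SymMat n in 𝓝 1, ∀ v ∈ sphere (0 : Euc n) 1, 0 < bilin A v v := by
    refine (isCompact_sphere _ _).eventually_forall_of_forall_eventually fun v hv => ?_
    refine (continuous_bilin.tendsto (1, v)).eventually_const_lt ?_
    rw [bilin_one, mem_sphere_zero_iff_norm.1 hv]
    norm_num
  refine mem_interior_iff_mem_nhds.2 (hpos.mono fun A hA => ?_)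
  exact le_of_forall_sphere_bilin_le fun v hv => by simpa [bilin] using (hA v hv).le

lemma isUpperSet_of_forall_add_posSemidef_mem {F : Set (SymMat n)}
    (hF : ∀ A ∈ F, ∀ P : SymMat n, (P : Matrix (Fin n) (Fin n) ℝ).PosSemidef → A + P ∈ F) :
    IsUpperSet F := fun A B hAB hA => by
  simpa using hF A hA (B - A) (Matrix.le_iff.1 hAB)

lemma raySet_eq_closure_eventualRays (F : Set (SymMat n)) :
    raySet F = closure (eventualRays F) := by
  simp only [raySet, eventualRays, eventually_atTop]

/-- The symmetric part of the matrix of a bilinear form on `ℝⁿ` in the standard basis. -/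
def symMat : (Euc n →L[ℝ] Euc n →L[ℝ] ℝ) →ₗ[ℝ] SymMat n :=
  selfAdjointPart ℝ ∘ₗ
    { toFun := fun b => Matrix.of fun i j =>
        b (EuclideanSpace.single i 1) (EuclideanSpace.single j 1)
      map_add' := fun _ _ => rfl
      map_smul' := fun _ _ => rfl }

lemma continuous_symMat : Continuous (symMat (n := n)) := by
  have hmat : Continuous fun b : Euc n →L[ℝ] Euc n →L[ℝ] ℝ =>
      Matrix.of fun i j => b (EuclideanSpace.single i 1) (EuclideanSpace.single j 1) :=
    continuous_matrix fun i j => by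
      simp only [Matrix.of_apply]
      fun_prop
  exact ((hmat.add hmat.star).const_smul (⅟2 : ℝ)).subtype_mk _

lemma coe_symMat_apply (b : Euc n →L[ℝ] Euc n →L[ℝ] ℝ) (i j : Fin n) :
    (symMat b : Matrix (Fin n) (Fin n) ℝ) i j =
      2⁻¹ * (b (EuclideanSpace.single i 1) (EuclideanSpace.single j 1) +
        b (EuclideanSpace.single j 1) (EuclideanSpace.single i 1)) := by
  simp only [symMat, LinearMap.comp_apply, selfAdjointPart_apply_coe, invOf_eq_inv]
  rfl

lemma bilin_symMat_self (b : Euc n →L[ℝ] Euc n →L[ℝ] ℝ) (v : Euc n) :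
    bilin (symMat b) v v = b v v := by
  have hexp : b v v = ∑ i, ∑ j,
      b (EuclideanSpace.single i 1) (EuclideanSpace.single j 1) * v i * v j := by
    have hv : v = ∑ i, v i • EuclideanSpace.single i (1 : ℝ) := by
      simpa using ((EuclideanSpace.basisFun (Fin n) ℝ).sum_repr v).symm
    conv_lhs => rw [hv]
    simp only [map_sum, map_smul, _root_.sum_apply, _root_.smul_apply, smul_eq_mul,
      Finset.mul_sum]
    rw [Finset.sum_comm]
    exact Finset.sum_congr rfl fun i _ => Finset.sum_congr rfl fun j _ => by ring
  have hcomm : b v v = ∑ i, ∑ j,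
      b (EuclideanSpace.single j 1) (EuclideanSpace.single i 1) * v i * v j := by
    rw [hexp, Finset.sum_comm]
    simp only [mul_right_comm]
  calc bilin (symMat b) v v = 2⁻¹ * (b v v + b v v) := by
        conv_rhs => enter [2, 1]; rw [hexp]
        conv_rhs => enter [2, 2]; rw [hcomm]
        simp only [bilin, coe_symMat_apply, mul_add, add_mul, Finset.sum_add_distrib,
          Finset.mul_sum, mul_assoc]
    _ = b v v := by ring

/-- The symmetrized Hessian of `u` at `x`. -/
def symHess (u : Euc n → ℝ) (x : Euc n) : SymMat n :=
  symMat (fderiv ℝ (fderiv ℝ u) x)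

lemma coe_symHess {u : Euc n → ℝ} {x : Euc n} (hu : ContDiffAt ℝ 2 u x) :
    (symHess u x : Matrix (Fin n) (Fin n) ℝ) = hessMat u x := by
  have hsymm : IsSymmSndFDerivAt ℝ u x := hu.isSymmSndFDerivAt (by simp)
  ext i j
  rw [symHess, coe_symMat_apply, hsymm.eq (EuclideanSpace.single j 1), hessMat,
    iteratedFDeriv_two_apply]
  simp only [Matrix.cons_val_zero, Matrix.cons_val_one]
  ring

lemma bilin_hessMat_self {u : Euc n → ℝ} {x : Euc n} (hu : ContDiffAt ℝ 2 u x) (v : Euc n) :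
    bilin (hessMat u x) v v = fderiv ℝ (fderiv ℝ u) x v v := by
  rw [← coe_symHess hu, symHess, bilin_symMat_self]

/-- The rank one form `ν ⊗ ν` as a symmetric matrix. -/
def dualSq (ν : Euc n →L[ℝ] ℝ) : SymMat n := symMat (ν.smulRight ν)

lemma continuous_dualSq : Continuous (dualSq (n := n)) := by
  have hsmulRight : Continuous fun ν : Euc n →L[ℝ] ℝ => ν.smulRight ν :=
    (ContinuousLinearMap.smulRightL ℝ (Euc n) (Euc n →L[ℝ] ℝ)).continuous₂.comp
      (continuous_id.prodMk continuous_id)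
  exact continuous_symMat.comp hsmulRight

lemma bilin_dualSq (ν : Euc n →L[ℝ] ℝ) (v : Euc n) : bilin (dualSq ν) v v = ν v ^ 2 := by
  simp [dualSq, bilin_symMat_self, pow_two]

lemma dualSq_nonneg (ν : Euc n →L[ℝ] ℝ) : 0 ≤ dualSq ν :=
  le_iff_forall_bilin_le.2 fun v => by
    rw [bilin_dualSq]
    simpa [bilin] using sq_nonneg (ν v)

lemma exists_add_smul_dualSq_mem_interior {G : Set (SymMat n)} (hG : IsUpperSet G) {B H : SymMat n}
    (hB : B ∈ interior G) {ν : Euc n →L[ℝ] ℝ}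
    (hBH : ∀ v : Euc n, ν v = 0 → bilin B v v ≤ bilin H v v) :
    ∃ l : ℝ, H + l • dualSq ν ∈ interior G := by
  obtain ⟨δ, hδ, hBδ⟩ := exists_pos_sub_smul_mem_of_isOpen isOpen_interior hB 1
  have hcont : ∀ A : SymMat n, Continuous fun v : Euc n => bilin A v v := fun A =>
    continuous_bilin.comp (continuous_const.prodMk continuous_id)
  have hsphere : ∃ l : ℝ, 0 < l ∧ ∀ v ∈ sphere (0 : Euc n) 1,
      (bilin H v v - bilin B v v + δ) + l • ν v ^ 2 ∈ Ioi 0 := by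
    refine exists_pos_forall_add_smul_mem (isUpperSet_Ioi 0) isOpen_Ioi (isCompact_sphere _ _)
      (((hcont H).sub (hcont B)).add_const δ) (by fun_prop) (fun v => sq_nonneg (ν v))
      fun v _ => ?_
    by_cases hνv : ν v = 0
    · refine ⟨0, ?_⟩
      rw [mem_Ioi, zero_smul]
      linarith [hBH v hνv]
    · refine ⟨(1 - (bilin H v v - bilin B v v + δ)) / ν v ^ 2, ?_⟩
      simp [hνv]
  obtain ⟨l, -, hl⟩ := hsphere
  refine ⟨l, hG.interior (le_of_forall_sphere_bilin_le fun v hv => ?_) hBδ⟩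
  have hleft : bilin (B - δ • 1 : SymMat n) v v = bilin B v v - δ * ‖v‖ ^ 2 := by
    rw [← bilin_one]
    simp [bilin_eq_toBilin']
  have hright : bilin (H + l • dualSq ν : SymMat n) v v = bilin H v v + l • ν v ^ 2 := by
    rw [← bilin_dualSq]
    simp [bilin_eq_toBilin']
  have hlv : 0 < bilin H v v - bilin B v v + δ + l • ν v ^ 2 := hl v hv
  rw [hleft, hright, mem_sphere_zero_iff_norm.1 hv]
  linarith

lemma fderiv_fderiv_comp {E : Type*} [NormedAddCommGroup E] [NormedSpace ℝ E] {φ : ℝ → ℝ}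
    {u : E → ℝ} (hφ : ContDiff ℝ 2 φ) (hu : ContDiff ℝ 2 u) (x : E) :
    fderiv ℝ (fderiv ℝ (φ ∘ u)) x = deriv φ (u x) • fderiv ℝ (fderiv ℝ u) x +
      deriv (deriv φ) (u x) • (fderiv ℝ u x).smulRight (fderiv ℝ u x) := by
  have hu' : Differentiable ℝ u := hu.differentiable two_ne_zero
  have hdu : Differentiable ℝ (fderiv ℝ u) :=
    (hu.fderiv_right (m := 1) (by norm_num)).differentiable one_ne_zero
  have hdφ : Differentiable ℝ (deriv φ) :=
    ((contDiff_succ_iff_deriv (n := 1)).1 hφ).2.2.differentiable one_ne_zero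
  have hfirst : fderiv ℝ (φ ∘ u) = fun y => deriv φ (u y) • fderiv ℝ u y := funext fun y =>
    ((hφ.differentiable two_ne_zero (u y)).hasDerivAt.comp_hasFDerivAt y
      (hu' y).hasFDerivAt).fderiv
  rw [hfirst]
  refine (((hdφ (u x)).hasDerivAt.comp_hasFDerivAt x (hu' x).hasFDerivAt).fun_smul
    (hdu x).hasFDerivAt).fderiv.trans ?_
  ext v w
  simp [mul_assoc]

lemma symHess_comp {φ : ℝ → ℝ} {u : Euc n → ℝ} (hφ : ContDiff ℝ 2 φ) (hu : ContDiff ℝ 2 u)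
    (x : Euc n) : symHess (φ ∘ u) x =
      deriv φ (u x) • symHess u x + deriv (deriv φ) (u x) • dualSq (fderiv ℝ u x) := by
  simp only [symHess, dualSq, fderiv_fderiv_comp hφ hu, map_add, map_smul]

lemma symHess_add_const_smul {u ψ : Euc n → ℝ} (hu : ContDiff ℝ 2 u) (hψ : ContDiff ℝ 2 ψ)
    (c : ℝ) (x : Euc n) : symHess (u + c • ψ) x = symHess u x + c • symHess ψ x := by
  have hdiff : ∀ {f : Euc n → ℝ}, ContDiff ℝ 2 f → Differentiable ℝ f ∧
      Differentiable ℝ (fderiv ℝ f) := fun hf => ⟨hf.differentiable two_ne_zero,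
    (hf.fderiv_right (m := 1) (by norm_num)).differentiable one_ne_zero⟩
  obtain ⟨hu₁, hu₂⟩ := hdiff hu
  obtain ⟨hψ₁, hψ₂⟩ := hdiff hψ
  have hfirst : fderiv ℝ (u + c • ψ) = fderiv ℝ u + c • fderiv ℝ ψ := funext fun y =>
    ((hu₁ y).hasFDerivAt.add ((hψ₁ y).hasFDerivAt.const_smul c)).fderiv
  have hsecond : fderiv ℝ (fderiv ℝ u + c • fderiv ℝ ψ) x =
      fderiv ℝ (fderiv ℝ u) x + c • fderiv ℝ (fderiv ℝ ψ) x :=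
    ((hu₂ x).hasFDerivAt.add ((hψ₂ x).hasFDerivAt.const_smul c)).fderiv
  rw [symHess, hfirst, hsecond, map_add, map_smul, symHess, symHess]

lemma symHess_norm_sq_sub_const (D : ℝ) (x : Euc n) :
    symHess (fun y => ‖y‖ ^ 2 - D) x = (2 : ℝ) • (1 : SymMat n) := by
  have hfirst : fderiv ℝ (fun y : Euc n => ‖y‖ ^ 2 - D) = ((2 : ℝ) • innerSL ℝ : _ →L[ℝ] _) :=
    funext fun y => by
      rw [fderiv_sub_const]
      exact (hasStrictFDerivAt_norm_sq y).hasFDerivAt.fderiv.trans (by simp [two_smul])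
  have hquad : ∀ v : Euc n, bilin (symHess (fun y => ‖y‖ ^ 2 - D) x) v v =
      bilin ((2 : ℝ) • (1 : SymMat n) : SymMat n) v v := fun v => by
    calc bilin (symHess (fun y => ‖y‖ ^ 2 - D) x) v v = 2 * ⟪v, v⟫ := by
          rw [symHess, bilin_symMat_self, hfirst, ContinuousLinearMap.fderiv]
          rfl
      _ = 2 * bilin (1 : SymMat n) v v := by rw [real_inner_self_eq_norm_sq, bilin_one]
      _ = bilin ((2 : ℝ) • (1 : SymMat n) : SymMat n) v v := by simp [bilin_eq_toBilin']
  exact le_antisymm (le_iff_forall_bilin_le.2 fun v => (hquad v).le)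
    (le_iff_forall_bilin_le.2 fun v => (hquad v).ge)

lemma symHess_congr {u v : Euc n → ℝ} {x : Euc n} (h : u =ᶠ[𝓝 x] v) :
    symHess u x = symHess v x := by
  rw [symHess, h.fderiv.fderiv_eq, symHess]

lemma continuous_symHess {u : Euc n → ℝ} (hu : ContDiff ℝ 2 u) : Continuous (symHess u) :=
  continuous_symMat.comp
    ((hu.fderiv_right (m := 1) (by norm_num)).continuous_fderiv one_ne_zero)

end LoewnerOrder

section DefiningFunction

open scoped ContDiff

variable {E : Type*} [NormedAddCommGroup E] [NormedSpace ℝ E]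

lemma eventually_nhdsGT_lt_of_deriv_deriv_pos {g : ℝ → ℝ} {a : ℝ} (hg : ContDiffAt ℝ 2 g a)
    (hga : deriv g a = 0) (hga' : 0 < deriv (deriv g) a) : ∀ᶠ t in 𝓝[>] a, g a < g t := by
  have hsign := (eventually_nhdsWithin_sign_eq_of_deriv_pos hga' hga).filter_mono
    (nhdsWithin_le_nhds (s := Ioi a))
  have hcont : ∀ᶠ t in 𝓝[≥] a, ContinuousAt g t :=
    ((hg.eventually (by simp)).mono fun t ht => ht.continuousAt).filter_mono nhdsWithin_le_nhds
  obtain ⟨b, hab, hb⟩ := mem_nhdsGT_iff_exists_Ioo_subset.1 hsign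
  obtain ⟨c, hac, hc⟩ := mem_nhdsGE_iff_exists_Ico_subset.1 hcont
  filter_upwards [Ioo_mem_nhdsGT (lt_min hab hac)] with t ht
  have hmono : StrictMonoOn g (Icc a t) := by
    refine strictMonoOn_of_deriv_pos (convex_Icc a t)
      (fun y hy => ContinuousAt.continuousWithinAt
        (hc ⟨hy.1, hy.2.trans_lt (ht.2.trans_le (min_le_right _ _))⟩)) fun y hy => ?_
    rw [interior_Icc] at hy
    have hy' := hb ⟨hy.1, hy.2.trans (ht.2.trans_le (min_le_left _ _))⟩
    rwa [mem_ofPred_eq, sign_pos (sub_pos.2 hy.1), sign_eq_one_iff] at hy'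
  exact hmono (left_mem_Icc.2 ht.1.le) (right_mem_Icc.2 ht.1.le) ht.1

lemma hasDerivAt_parabola (x v w : E) (t : ℝ) :
    HasDerivAt (fun t : ℝ => x + t • v + (t ^ 2 / 2) • w) (v + t • w) t := by
  have hsq : HasDerivAt (fun t : ℝ => t ^ 2 / 2) t t := by
    simpa using (hasDerivAt_pow 2 t).div_const 2
  have hline : HasDerivAt (fun t : ℝ => x + t • v) v t := by
    simpa using ((hasDerivAt_id t).smul_const v).const_add x
  exact hline.add (hsq.smul_const w)

lemma tendsto_parabola (x v w : E) :
    Tendsto (fun t : ℝ => x + t • v + (t ^ 2 / 2) • w) (𝓝 0) (𝓝 x) := by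
  simpa using (hasDerivAt_parabola x v w 0).continuousAt.tendsto

lemma deriv_comp_parabola_eventuallyEq {f : E → ℝ} {x : E} (hf : ContDiffAt ℝ 1 f x) (v w : E) :
    deriv (fun t : ℝ => f (x + t • v + (t ^ 2 / 2) • w)) =ᶠ[𝓝 0]
      fun t => fderiv ℝ f (x + t • v + (t ^ 2 / 2) • w) (v + t • w) := by
  filter_upwards [(tendsto_parabola x v w).eventually (hf.eventually (by simp))] with t ht
  exact ((ht.differentiableAt one_ne_zero).hasFDerivAt.comp_hasDerivAt t
    (hasDerivAt_parabola x v w t)).deriv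

lemma deriv_deriv_comp_parabola {f : E → ℝ} {x : E} (hf : ContDiffAt ℝ 2 f x) (v w : E) :
    deriv (deriv fun t : ℝ => f (x + t • v + (t ^ 2 / 2) • w)) 0 =
      fderiv ℝ (fderiv ℝ f) x v v + fderiv ℝ f x w := by
  have hdf : HasFDerivAt (fderiv ℝ f) (fderiv ℝ (fderiv ℝ f) x)
      (x + (0 : ℝ) • v + ((0 : ℝ) ^ 2 / 2) • w) := by
    simpa using ((hf.fderiv_right (m := 1) (by norm_num)).differentiableAt
      one_ne_zero).hasFDerivAt
  have hvel : HasDerivAt (fun t : ℝ => v + t • w) w 0 := by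
    simpa using ((hasDerivAt_id (0 : ℝ)).smul_const w).const_add v
  have hdfγ : HasDerivAt (fun t : ℝ => fderiv ℝ f (x + t • v + (t ^ 2 / 2) • w))
      (fderiv ℝ (fderiv ℝ f) x (v + (0 : ℝ) • w)) 0 :=
    HasFDerivAt.comp_hasDerivAt (f := fun t : ℝ => x + t • v + (t ^ 2 / 2) • w) 0 hdf
      (hasDerivAt_parabola x v w 0)
  rw [(deriv_comp_parabola_eventuallyEq (hf.of_le (by norm_num)) v w).deriv_eq,
    (hdfγ.clm_apply hvel).deriv]
  simp

lemma eventually_pos_comp_parabola {f : E → ℝ} {x v w : E} (hf : ContDiffAt ℝ 2 f x) (hx : f x = 0)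
    (hv : fderiv ℝ f x v = 0) (hw : 0 < fderiv ℝ (fderiv ℝ f) x v v + fderiv ℝ f x w) :
    ∀ᶠ t : ℝ in 𝓝[>] 0, 0 < f (x + t • v + (t ^ 2 / 2) • w) := by
  have hcomp : ContDiffAt ℝ 2 (fun t : ℝ => f (x + t • v + (t ^ 2 / 2) • w)) 0 :=
    ContDiffAt.comp (0 : ℝ) (by simpa using hf) (by fun_prop)
  simpa [hx] using eventually_nhdsGT_lt_of_deriv_deriv_pos hcomp
    (by simpa [hv] using
      (deriv_comp_parabola_eventuallyEq (hf.of_le (by norm_num)) v w).eq_of_nhds)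
    (hw.trans_eq (deriv_deriv_comp_parabola hf v w).symm)

section Contact

variable {r s : E → ℝ} {x : E}

-- Otherwise `r < 0 < s` along the parabola with velocity `v` and acceleration `w`.
lemma fderiv_fderiv_add_fderiv_nonpos_of_contact (hr : ContDiffAt ℝ 2 r x)
    (hs : ContDiffAt ℝ 2 s x) (hrx : r x = 0) (hsx : s x = 0)
    (hrs : ∀ᶠ y in 𝓝 x, r y < 0 → s y ≤ 0) {v w : E} (hrv : fderiv ℝ r x v = 0)
    (hsv : fderiv ℝ s x v = 0) (hrw : fderiv ℝ (fderiv ℝ r) x v v + fderiv ℝ r x w < 0) :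
    fderiv ℝ (fderiv ℝ s) x v v + fderiv ℝ s x w ≤ 0 := by
  by_contra! hsw
  have hneg : (fderiv ℝ fun y => -r y) = fun y => -fderiv ℝ r y := funext fun y => fderiv_fun_neg
  have hrpos := eventually_pos_comp_parabola (w := w) hr.neg (neg_eq_zero.2 hrx)
    (by simpa [hneg] using hrv)
    (by simp only [hneg, fderiv_fun_neg, _root_.neg_apply]; linarith)
  have hspos := eventually_pos_comp_parabola hs hsx hsv hsw
  obtain ⟨t, hrt, hst, himp⟩ := (hrpos.and (hspos.and
    (((tendsto_parabola x v w).eventually hrs).filter_mono nhdsWithin_le_nhds))).exists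
  exact hst.not_ge (himp (neg_pos.1 hrt))

lemma fderiv_nonpos_of_contact (hr : ContDiffAt ℝ 2 r x) (hs : ContDiffAt ℝ 2 s x)
    (hrx : r x = 0) (hsx : s x = 0) (hrs : ∀ᶠ y in 𝓝 x, r y < 0 → s y ≤ 0) {w : E}
    (hrw : fderiv ℝ r x w < 0) : fderiv ℝ s x w ≤ 0 := by
  simpa using fderiv_fderiv_add_fderiv_nonpos_of_contact (v := 0) hr hs hrx hsx hrs
    (map_zero _) (map_zero _) (by simpa using hrw)

lemma exists_apply_eq_of_ne_zero {f : E →L[ℝ] ℝ} (hf : f ≠ 0) (b : ℝ) : ∃ w, f w = b :=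
  LinearMap.surjective_of_ne_zero (f := (f : E →ₗ[ℝ] ℝ)) (mod_cast hf) b

lemma exists_pos_eq_smul_of_forall_neg_imp_nonpos {f g : E →L[ℝ] ℝ} (hf : f ≠ 0) (hg : g ≠ 0)
    (hfg : ∀ w, f w < 0 → g w ≤ 0) : ∃ c : ℝ, 0 < c ∧ f = c • g := by
  obtain ⟨N, hN⟩ : ∃ N, f N = 1 := exists_apply_eq_of_ne_zero hf 1
  have hker : ∀ v, f v = 0 → g v = 0 := fun v hv => by
    by_contra hne
    have hk := hfg (-N + ((1 + g N) / g v) • v) (by simp [hN, hv])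
    simp only [map_add, map_neg, map_smul, smul_eq_mul, div_mul_cancel₀ _ hne] at hk
    linarith
  have hprop : g = g N • f := ContinuousLinearMap.ext fun v => by
    have hv := hker (v - f v • N) (by simp [hN])
    simpa [mul_comm, sub_eq_zero] using hv
  have hgN : 0 < g N := by
    refine lt_of_le_of_ne (by simpa using hfg (-N) (by simp [hN])) fun h => hg ?_
    rw [hprop, ← h, zero_smul]
  refine ⟨(g N)⁻¹, inv_pos.2 hgN, ?_⟩
  rw [hprop]
  simp [smul_smul, hN, hgN.ne']

lemma exists_pos_fderiv_eq_smul_and_le_of_contact (hr : ContDiffAt ℝ 2 r x)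
    (hs : ContDiffAt ℝ 2 s x) (hrx : r x = 0) (hsx : s x = 0) (hdr : fderiv ℝ r x ≠ 0)
    (hds : fderiv ℝ s x ≠ 0) (hrs : ∀ᶠ y in 𝓝 x, r y < 0 → s y ≤ 0) :
    ∃ c : ℝ, 0 < c ∧ fderiv ℝ r x = c • fderiv ℝ s x ∧ ∀ v, fderiv ℝ s x v = 0 →
      c * fderiv ℝ (fderiv ℝ s) x v v ≤ fderiv ℝ (fderiv ℝ r) x v v := by
  obtain ⟨c, hc, hrc⟩ := exists_pos_eq_smul_of_forall_neg_imp_nonpos hdr hds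
    fun w => fderiv_nonpos_of_contact hr hs hrx hsx hrs
  refine ⟨c, hc, hrc, fun v hsv => ?_⟩
  by_contra! hlt
  obtain ⟨b, hsb, hbr⟩ := exists_between (neg_lt_neg hlt)
  obtain ⟨w, hw⟩ := exists_apply_eq_of_ne_zero hds (b / c)
  have hrw : fderiv ℝ r x w = b := by simp [hrc, hw, mul_div_cancel₀ b hc.ne']
  have hle := fderiv_fderiv_add_fderiv_nonpos_of_contact hr hs hrx hsx hrs
    (by simp [hrc, hsv]) hsv (w := w) (by linarith)
  have hmul := mul_nonpos_of_nonneg_of_nonpos hc.le hle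
  rw [hw, mul_add, mul_div_cancel₀ b hc.ne'] at hmul
  linarith

end Contact

lemma eq_zero_of_mem_frontier {X : Type*} [TopologicalSpace X] {Ω : Set X} {η : X → ℝ} {y : X}
    (hη : ContinuousAt η y) (hneg : ∀ᶠ z in 𝓝 y, z ∈ Ω → η z ≤ 0)
    (hpos : ∀ᶠ z in 𝓝 y, z ∉ Ω → 0 ≤ η z) (hy : y ∈ frontier Ω) : η y = 0 := by
  rw [frontier_eq_closure_inter_closure] at hy
  exact le_antisymm
    (le_of_tendsto_of_frequently hη
      ((mem_closure_iff_frequently.1 hy.1).mp (hneg.mono fun _ h => h)))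
    (ge_of_tendsto_of_frequently hη
      ((mem_closure_iff_frequently.1 hy.2).mp (hpos.mono fun _ h => h)))

lemma eq_zero_of_mem_frontier_of_inter_eq {X : Type*} [TopologicalSpace X] {Ω U : Set X}
    {ρ : X → ℝ} {x : X} (hU : IsOpen U) (hρ : ContinuousOn ρ U) (hΩ : Ω ∩ U = {y ∈ U | ρ y < 0})
    (hx : x ∈ frontier Ω ∩ U) : ρ x = 0 := by
  have hUx := hU.mem_nhds hx.2
  refine eq_zero_of_mem_frontier (hρ.continuousAt hUx) ?_ ?_ hx.1
  · filter_upwards [hUx] with z hzU hzΩ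
    exact ((Set.ext_iff.1 hΩ z).1 ⟨hzΩ, hzU⟩).2.le
  · filter_upwards [hUx] with z hzU hzΩ
    exact not_lt.1 fun hz => hzΩ ((Set.ext_iff.1 hΩ z).2 ⟨hzU, hz⟩).1

/-- `r` is a smooth function that weakly defines `Ω`, in the sense that `r ≤ 0` on `Ω` and `0 ≤ r`
off `Ω`, and is a genuine defining function along `s`: there it is negative on `Ω` and its
differential does not vanish on `∂Ω`. -/
structure IsDefiningFnOn (Ω s : Set E) (r : E → ℝ) : Prop where
  contDiff : ContDiff ℝ ∞ r
  nonpos : ∀ y ∈ Ω, r y ≤ 0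
  nonneg : ∀ y ∉ Ω, 0 ≤ r y
  neg : ∀ y ∈ Ω ∩ s, r y < 0
  fderiv_ne_zero : ∀ y ∈ frontier Ω ∩ s, fderiv ℝ r y ≠ 0

namespace IsDefiningFnOn

variable {Ω s t : Set E} {r q : E → ℝ} {y : E}

lemma mono (h : IsDefiningFnOn Ω t r) (hst : s ⊆ t) : IsDefiningFnOn Ω s r where
  contDiff := h.contDiff
  nonpos := h.nonpos
  nonneg := h.nonneg
  neg := fun y hy => h.neg y ⟨hy.1, hst hy.2⟩
  fderiv_ne_zero := fun y hy => h.fderiv_ne_zero y ⟨hy.1, hst hy.2⟩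

lemma contDiff_two (h : IsDefiningFnOn Ω s r) : ContDiff ℝ 2 r :=
  h.contDiff.of_le (WithTop.coe_le_coe.2 le_top)

lemma apply_eq_zero (h : IsDefiningFnOn Ω s r) (hy : y ∈ frontier Ω) : r y = 0 :=
  eq_zero_of_mem_frontier h.contDiff.continuous.continuousAt (Eventually.of_forall h.nonpos)
    (Eventually.of_forall h.nonneg) hy

lemma mem_of_neg (h : IsDefiningFnOn Ω s r) (hy : r y < 0) : y ∈ Ω :=
  not_imp_comm.1 (h.nonneg y) hy.not_ge

lemma eq_setOf_neg (h : IsDefiningFnOn Ω (closure Ω) r) : Ω = {y | r y < 0} :=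
  Subset.antisymm (fun y hy => h.neg y ⟨hy, subset_closure hy⟩) fun _ => h.mem_of_neg

lemma fderiv_add_ne_zero (hr : IsDefiningFnOn Ω s r) (hq : IsDefiningFnOn Ω t q)
    (hy : y ∈ frontier Ω ∩ s) : fderiv ℝ (r + q) y ≠ 0 := by
  obtain ⟨w, hw⟩ := exists_apply_eq_of_ne_zero (hr.fderiv_ne_zero y hy) (-1)
  have hqw : fderiv ℝ q y w ≤ 0 := fderiv_nonpos_of_contact hr.contDiff_two.contDiffAt
    hq.contDiff_two.contDiffAt (hr.apply_eq_zero hy.1) (hq.apply_eq_zero hy.1)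
    (Eventually.of_forall fun z hz => hq.nonpos z (hr.mem_of_neg hz)) (by rw [hw]; norm_num)
  rw [fderiv_add (hr.contDiff.differentiable (by simp) y) (hq.contDiff.differentiable (by simp) y)]
  intro h
  have hsum := DFunLike.congr_fun h w
  simp only [_root_.add_apply, hw, _root_.zero_apply] at hsum
  linarith

lemma add (hr : IsDefiningFnOn Ω s r) (hq : IsDefiningFnOn Ω t q) :
    IsDefiningFnOn Ω (s ∪ t) (r + q) where
  contDiff := hr.contDiff.add hq.contDiff
  nonpos := fun y hy => add_nonpos (hr.nonpos y hy) (hq.nonpos y hy)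
  nonneg := fun y hy => add_nonneg (hr.nonneg y hy) (hq.nonneg y hy)
  neg := by
    rintro y ⟨hy, hys | hyt⟩
    · exact add_neg_of_neg_of_nonpos (hr.neg y ⟨hy, hys⟩) (hq.nonpos y hy)
    · exact add_neg_of_nonpos_of_neg (hr.nonpos y hy) (hq.neg y ⟨hy, hyt⟩)
  fderiv_ne_zero := by
    rintro y ⟨hy, hys | hyt⟩
    · exact hr.fderiv_add_ne_zero hq ⟨hy, hys⟩
    · exact add_comm q r ▸ hq.fderiv_add_ne_zero hr ⟨hy, hyt⟩

lemma comp {φ : ℝ → ℝ} (h : IsDefiningFnOn Ω s r) (hφ : ContDiff ℝ ∞ φ) (hφ0 : φ 0 = 0)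
    (hneg : ∀ t < 0, φ t < 0) (hnonneg : ∀ t, 0 ≤ t → 0 ≤ φ t) (hφ' : deriv φ 0 ≠ 0) :
    IsDefiningFnOn Ω s (φ ∘ r) where
  contDiff := hφ.comp h.contDiff
  nonpos := fun y hy => (h.nonpos y hy).eq_or_lt.elim (fun hy0 => by simp [hy0, hφ0])
    fun hlt => (hneg _ hlt).le
  nonneg := fun y hy => hnonneg _ (h.nonneg y hy)
  neg := fun y hy => hneg _ (h.neg y hy)
  fderiv_ne_zero := fun y hy => by
    have hφd : HasDerivAt φ (deriv φ 0) (r y) := by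
      rw [h.apply_eq_zero hy.1]
      exact (hφ.differentiable (by simp) 0).hasDerivAt
    rw [(hφd.comp_hasFDerivAt y (h.contDiff.differentiable (by simp) y).hasFDerivAt).fderiv]
    exact smul_ne_zero hφ' (h.fderiv_ne_zero y hy)

end IsDefiningFnOn

variable {Ω U : Set E} {ρ : E → ℝ} {x : E}

lemma exists_isDefiningFnOn_mem_nhds [FiniteDimensional ℝ E] (hU : IsOpen U) (hxU : x ∈ U)
    (hρ : ContDiffOn ℝ ∞ ρ U) (hΩ : Ω ∩ U = {y ∈ U | ρ y < 0})
    (hdρ : ∀ y ∈ frontier Ω ∩ U, fderiv ℝ ρ y ≠ 0) :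
    ∃ s ∈ 𝓝 x, ∃ r, IsDefiningFnOn Ω s r := by
  obtain ⟨f, hfU, -, hf, hf01, hfx⟩ := exists_contDiff_tsupport_subset (n := ⊤) (hU.mem_nhds hxU)
  have hf0 : ∀ y, 0 ≤ f y := fun y => (hf01 (mem_range_self y)).1
  have hposU : ∀ {y}, 0 < f y → y ∈ U := fun hy => hfU (subset_tsupport f hy.ne')
  have hneg : ∀ {y}, y ∈ Ω → y ∈ U → ρ y < 0 := fun hy hyU => ((Set.ext_iff.1 hΩ _).1 ⟨hy, hyU⟩).2
  refine ⟨{y | 0 < f y}, (isOpen_lt continuous_const hf.continuous).mem_nhds (by simp [hfx]),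
    f * ρ, ?_, fun y hy => ?_, fun y hy => ?_, fun y hy => ?_, fun y hy => ?_⟩
  · refine contMDiff_iff_contDiff.1 (contMDiff_of_tsupport fun y hy => ?_)
    exact (hf.contDiffAt.mul
      (hρ.contDiffAt (hU.mem_nhds (hfU (tsupport_mul_subset_left hy))))).contMDiffAt
  · obtain hfy | hfy := (hf0 y).eq_or_lt
    · simp [← hfy]
    · exact mul_nonpos_of_nonneg_of_nonpos hfy.le (hneg hy (hposU hfy)).le
  · obtain hfy | hfy := (hf0 y).eq_or_lt
    · simp [← hfy]
    · exact mul_nonneg hfy.le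
        (not_lt.1 fun h => hy ((Set.ext_iff.1 hΩ y).2 ⟨hposU hfy, h⟩).1)
  · exact mul_neg_of_pos_of_neg hy.2 (hneg hy.1 (hposU hy.2))
  · have hyU : y ∈ frontier Ω ∩ U := ⟨hy.1, hposU hy.2⟩
    rw [fderiv_mul (hf.differentiable (by simp) y)
        ((hρ.contDiffAt (hU.mem_nhds hyU.2)).differentiableAt (by simp)),
      eq_zero_of_mem_frontier_of_inter_eq hU hρ.continuousOn hΩ hyU, zero_smul, add_zero]
    exact smul_ne_zero hy.2.ne' (hdρ y hyU)

lemma HasSmoothBoundary.exists_isDefiningFnOn {n : ℕ} {Ω : Set (Euc n)} (hsb : HasSmoothBoundary Ω)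
    (hΩo : IsOpen Ω) (hΩb : Bornology.IsBounded Ω) : ∃ r, IsDefiningFnOn Ω (closure Ω) r := by
  refine hΩb.isCompact_closure.induction_on (p := fun s => ∃ r, IsDefiningFnOn Ω s r) ?_ ?_ ?_ ?_
  · exact ⟨0, contDiff_const, by simp, by simp, by simp, by simp⟩
  · exact fun s t hst ⟨r, hr⟩ => ⟨r, hr.mono hst⟩
  · exact fun s t ⟨r, hr⟩ ⟨q, hq⟩ => ⟨r + q, hr.add hq⟩
  · intro x hx
    suffices h : ∃ s ∈ 𝓝 x, ∃ r, IsDefiningFnOn Ω s r from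
      h.imp fun s hs => ⟨mem_nhdsWithin_of_mem_nhds hs.1, hs.2⟩
    by_cases hxΩ : x ∈ Ω
    · exact exists_isDefiningFnOn_mem_nhds hΩo hxΩ (contDiffOn_const (c := -1)) (by simp)
        fun y hy => absurd hy.2 (hΩo.frontier_eq ▸ hy.1).2
    · obtain ⟨U, ρ, hxU, hU, hρ, hΩ, hdρ⟩ := hsb x (hΩo.frontier_eq ▸ ⟨hx, hxΩ⟩)
      exact exists_isDefiningFnOn_mem_nhds hU hxU hρ hΩ fun y hy => hdρ y hy.2

end DefiningFunction

section Convexification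

open scoped MatrixOrder ContDiff

/-- A smooth convex nondecreasing function that vanishes at `0` and is constant exactly on
`(-∞, -a]`. Composing a defining function with it flattens the function away from `∂Ω`. -/
def flatRamp (a t : ℝ) : ℝ := ∫ s in (0 : ℝ)..t, expNegInvGlue (s + a)

variable {a t : ℝ}

lemma continuous_expNegInvGlue_add (a : ℝ) : Continuous fun t => expNegInvGlue (t + a) :=
  (expNegInvGlue.contDiff (n := 0)).continuous.comp (continuous_add_const a)

lemma deriv_flatRamp (a : ℝ) : deriv (flatRamp a) = fun t => expNegInvGlue (t + a) :=
  funext fun t => (continuous_expNegInvGlue_add a).deriv_integral _ 0 t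

lemma contDiff_flatRamp (a : ℝ) : ContDiff ℝ ∞ (flatRamp a) := by
  refine contDiff_infty_iff_deriv.2 ⟨fun t => ?_, ?_⟩
  · exact ((continuous_expNegInvGlue_add a).integral_hasStrictDerivAt
      0 t).hasDerivAt.differentiableAt
  · rw [deriv_flatRamp]
    exact expNegInvGlue.contDiff.comp (contDiff_id.add contDiff_const)

lemma flatRamp_neg (ha : 0 < a) (ht : t < 0) : flatRamp a t < 0 := by
  rw [flatRamp, intervalIntegral.integral_symm, neg_lt_zero]
  exact intervalIntegral.integral_pos ht (continuous_expNegInvGlue_add a).continuousOn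
    (fun s _ => expNegInvGlue.nonneg _)
    ⟨0, right_mem_Icc.2 ht.le, expNegInvGlue.pos_of_pos (by simpa using ha)⟩

lemma flatRamp_nonneg (a : ℝ) (ht : 0 ≤ t) : 0 ≤ flatRamp a t :=
  intervalIntegral.integral_nonneg ht fun s _ => expNegInvGlue.nonneg (s + a)

lemma deriv_flatRamp_pos (ht : -a < t) : 0 < deriv (flatRamp a) t := by
  rw [deriv_flatRamp]
  exact expNegInvGlue.pos_of_pos (by linarith)

lemma deriv_flatRamp_of_le (ht : t ≤ -a) : deriv (flatRamp a) t = 0 := by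
  rw [deriv_flatRamp]
  exact expNegInvGlue.zero_of_nonpos (by linarith)

lemma deriv_deriv_flatRamp_nonneg (a t : ℝ) : 0 ≤ deriv (deriv (flatRamp a)) t := by
  rw [deriv_flatRamp]
  exact (expNegInvGlue.monotone.comp (add_left_mono (a := a))).deriv_nonneg

-- The first derivative attains its minimum `0` there.
lemma deriv_deriv_flatRamp_of_le (ht : t ≤ -a) : deriv (deriv (flatRamp a)) t = 0 := by
  refine IsLocalMin.deriv_eq_zero (Eventually.of_forall fun s => ?_)
  rw [deriv_flatRamp_of_le ht, deriv_flatRamp]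
  exact expNegInvGlue.nonneg _

lemma IsDefiningFnOn.flatRamp_comp {E : Type*} [NormedAddCommGroup E] [NormedSpace ℝ E]
    {Ω s : Set E} {r : E → ℝ} (hr : IsDefiningFnOn Ω s r) (ha : 0 < a) :
    IsDefiningFnOn Ω s (flatRamp a ∘ r) :=
  hr.comp (contDiff_flatRamp a) (by simp [flatRamp]) (fun _ => flatRamp_neg ha)
    (fun _ => flatRamp_nonneg a) (deriv_flatRamp_pos (neg_lt_zero.2 ha)).ne'

lemma IsDefiningFnOn.const_smul {E : Type*} [NormedAddCommGroup E] [NormedSpace ℝ E]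
    {Ω s : Set E} {r : E → ℝ} (hr : IsDefiningFnOn Ω s r) {c : ℝ} (hc : 0 < c) :
    IsDefiningFnOn Ω s (c • r) :=
  hr.comp (φ := fun t => c * t) (by fun_prop) (mul_zero c)
    (fun _ => mul_neg_of_pos_of_neg hc) (fun _ => mul_nonneg hc.le) (by simpa using hc.ne')

variable {n : ℕ} {G : Set (SymMat n)} {Ω s : Set (Euc n)} {r : Euc n → ℝ} {x : Euc n}

lemma StrictlyConvexAt.exists_add_smul_dualSq_mem_interior (hconv : StrictlyConvexAt G Ω x)
    (hG : IsUpperSet G) (hGc : ∀ c : ℝ, 0 < c → ∀ A ∈ interior G, c • A ∈ interior G)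
    (hx : x ∈ frontier Ω) (hr : IsDefiningFnOn Ω (closure Ω) r) :
    ∃ l : ℝ, symHess r x + l • dualSq (fderiv ℝ r x) ∈ interior G := by
  obtain ⟨U, ρ, hxU, ⟨hU, hρ, hΩ, hdρ⟩, B, hB, hBρ⟩ := hconv
  have hρ₂ : ContDiffAt ℝ 2 ρ x :=
    (hρ.contDiffAt (hU.mem_nhds hxU)).of_le (WithTop.coe_le_coe.2 le_top)
  have hr₂ : ContDiffAt ℝ 2 r x := hr.contDiff_two.contDiffAt
  have himp : ∀ᶠ y in 𝓝 x, r y < 0 → ρ y ≤ 0 := by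
    filter_upwards [hU.mem_nhds hxU] with y hyU hy
    exact ((Set.ext_iff.1 hΩ y).1 ⟨hr.mem_of_neg hy, hyU⟩).2.le
  obtain ⟨c, hc, hdr, hle⟩ := exists_pos_fderiv_eq_smul_and_le_of_contact hr₂ hρ₂
    (hr.apply_eq_zero hx) (eq_zero_of_mem_frontier_of_inter_eq hU hρ.continuousOn hΩ ⟨hx, hxU⟩)
    (hr.fderiv_ne_zero x ⟨hx, hx.1⟩) (hdρ x hxU) himp
  refine _root_.exists_add_smul_dualSq_mem_interior hG (hGc c hc B hB) fun v hrv => ?_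
  have hρv : fderiv ℝ ρ x v = 0 := by simpa [hdr, hc.ne'] using hrv
  calc bilin (c • B : SymMat n) v v = c * bilin B v v := by simp [bilin_eq_toBilin']
    _ = c * fderiv ℝ (fderiv ℝ ρ) x v v := by rw [← hBρ v v hρv hρv, bilin_hessMat_self hρ₂]
    _ ≤ fderiv ℝ (fderiv ℝ r) x v v := hle v hρv
    _ = bilin (symHess r x) v v := by rw [coe_symHess hr₂, bilin_hessMat_self hr₂]

lemma symHess_exp_mul_sub_one_comp {u : Euc n → ℝ} (hu : ContDiff ℝ 2 u) (l : ℝ) (x : Euc n) :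
    symHess ((fun t => Real.exp (l * t) - 1) ∘ u) x =
      (l * Real.exp (l * u x)) • (symHess u x + l • dualSq (fderiv ℝ u x)) := by
  have hexp : ∀ t, HasDerivAt (fun t => Real.exp (l * t)) (l * Real.exp (l * t)) t := fun t => by
    simpa [mul_comm] using ((hasDerivAt_id t).const_mul l).exp
  have hfirst : deriv (fun t => Real.exp (l * t) - 1) = fun t => l * Real.exp (l * t) :=
    funext fun t => ((hexp t).sub_const 1).deriv
  rw [symHess_comp (by fun_prop) hu, hfirst, ((hexp (u x)).const_mul l).deriv]
  module

lemma exists_isDefiningFnOn_forall_frontier_symHess_mem (hG : IsUpperSet G)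
    (hGc : ∀ c : ℝ, 0 < c → ∀ A ∈ interior G, c • A ∈ interior G) (hΩb : Bornology.IsBounded Ω)
    (hr : IsDefiningFnOn Ω (closure Ω) r) (hconv : ∀ x ∈ frontier Ω, StrictlyConvexAt G Ω x) :
    ∃ q, IsDefiningFnOn Ω (closure Ω) q ∧ ∀ x ∈ frontier Ω, symHess q x ∈ interior G := by
  have hν : Continuous fun x => dualSq (fderiv ℝ r x) :=
    continuous_dualSq.comp (hr.contDiff.continuous_fderiv (by simp))
  obtain ⟨l, hl, hHess⟩ := exists_pos_forall_add_smul_mem hG.interior isOpen_interior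
    (hΩb.isCompact_closure.of_isClosed_subset isClosed_frontier frontier_subset_closure)
    (continuous_symHess hr.contDiff_two) hν (fun x => dualSq_nonneg _)
    fun x hx => (hconv x hx).exists_add_smul_dualSq_mem_interior hG hGc hx hr
  refine ⟨(fun t => Real.exp (l * t) - 1) ∘ r, hr.comp (by fun_prop) (by simp)
    (fun t ht => ?_) (fun t ht => ?_) ?_, fun x hx => ?_⟩
  · simpa using mul_neg_of_pos_of_neg hl ht
  · simpa using mul_nonneg hl.le ht
  · have hderiv : HasDerivAt (fun t => Real.exp (l * t) - 1) l 0 := by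
      simpa using (((hasDerivAt_id (0 : ℝ)).const_mul l).exp.sub_const 1)
    rw [hderiv.deriv]
    exact hl.ne'
  · rw [symHess_exp_mul_sub_one_comp hr.contDiff_two]
    exact hGc _ (by positivity) _ (hHess x hx)

lemma exists_pos_forall_neg_lt_symHess_mem (hGo : IsOpen G) (hΩb : Bornology.IsBounded Ω)
    (hr : IsDefiningFnOn Ω (closure Ω) r) (hHess : ∀ x ∈ frontier Ω, symHess r x ∈ G) :
    ∃ a : ℝ, 0 < a ∧ ∀ y ∈ closure Ω, -a < r y → symHess r y ∈ G := by
  have hcompact : IsCompact (closure Ω \ symHess r ⁻¹' G) :=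
    hΩb.isCompact_closure.diff (hGo.preimage (continuous_symHess hr.contDiff_two))
  have hneg : ∀ y ∈ closure Ω \ symHess r ⁻¹' G, 0 < -r y := fun y hy => by
    refine neg_pos.2 (hr.neg y ⟨?_, hy.1⟩)
    rw [closure_eq_self_union_frontier] at hy
    exact hy.1.resolve_right fun hyf => hy.2 (hHess y hyf)
  obtain ⟨a, ha, har⟩ := hcompact.exists_forall_le' hr.contDiff.continuous.neg.continuousOn hneg
  refine ⟨a, ha, fun y hy hay => ?_⟩
  by_contra hyG
  exact (le_neg.1 (har y ⟨hy, hyG⟩)).not_gt hay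

lemma symHess_flatRamp_comp_of_le (hr : ContDiff ℝ 2 r) (hx : r x ≤ -a) :
    symHess (flatRamp a ∘ r) x = 0 := by
  rw [symHess_comp ((contDiff_flatRamp a).of_le (WithTop.coe_le_coe.2 le_top)) hr,
    deriv_flatRamp_of_le hx, deriv_deriv_flatRamp_of_le hx, zero_smul, zero_smul, add_zero]

lemma symHess_flatRamp_comp_mem_interior (hG : IsUpperSet G)
    (hGc : ∀ c : ℝ, 0 < c → ∀ A ∈ interior G, c • A ∈ interior G) (hr : ContDiff ℝ 2 r)
    (hx : -a < r x) (hHess : symHess r x ∈ interior G) :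
    symHess (flatRamp a ∘ r) x ∈ interior G := by
  rw [symHess_comp ((contDiff_flatRamp a).of_le (WithTop.coe_le_coe.2 le_top)) hr]
  exact hG.interior (le_add_of_nonneg_right
    (smul_nonneg (deriv_deriv_flatRamp_nonneg a (r x)) (dualSq_nonneg _)))
    (hGc _ (deriv_flatRamp_pos hx) _ hHess)

lemma exists_isDefiningFnOn_empty_symHess_eq (ha : 0 < a) (hΩb : Bornology.IsBounded Ω)
    (hr : IsDefiningFnOn Ω s r) :
    ∃ ψ, IsDefiningFnOn Ω ∅ ψ ∧ ∀ y, r y ≤ -a → symHess ψ y = (2 : ℝ) • (1 : SymMat n) := by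
  obtain ⟨D, hD⟩ := hΩb.exists_norm_le
  refine ⟨fun y => Real.smoothTransition (-(2 * r y) / a) * (‖y‖ ^ 2 - D ^ 2),
    ⟨?_, fun y hy => ?_, fun y hy => ?_, by simp, by simp⟩, fun y hy => ?_⟩
  · have hratio : ContDiff ℝ ∞ fun y => -(2 * r y) / a :=
      (contDiff_const.mul hr.contDiff).neg.div_const a
    exact (Real.smoothTransition.contDiff.comp hratio).mul
      ((contDiff_norm_sq ℝ).sub contDiff_const)
  · refine mul_nonpos_of_nonneg_of_nonpos (Real.smoothTransition.nonneg _) (sub_nonpos.2 ?_)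
    exact pow_le_pow_left₀ (norm_nonneg y) (hD y hy) 2
  · have hry : -(2 * r y) / a ≤ 0 :=
      div_nonpos_of_nonpos_of_nonneg (by linarith [hr.nonneg y hy]) ha.le
    rw [Real.smoothTransition.zero_of_nonpos hry, zero_mul]
  · rw [← symHess_norm_sq_sub_const (D ^ 2) y]
    refine symHess_congr ?_
    have hnear : ∀ᶠ z in 𝓝 y, r z < -(a / 2) :=
      hr.contDiff.continuous.continuousAt.eventually_lt_const (by linarith)
    filter_upwards [hnear] with z hz
    have hone : 1 ≤ -(2 * r z) / a := by
      rw [le_div_iff₀ ha]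
      linarith
    rw [Real.smoothTransition.one_of_one_le hone, one_mul]

theorem exists_isDefiningFnOn_forall_closure_symHess_mem (hG : IsUpperSet G)
    (hGc : ∀ c : ℝ, 0 < c → ∀ A ∈ interior G, c • A ∈ interior G) (hG0 : 0 ∈ G)
    (hΩo : IsOpen Ω) (hΩb : Bornology.IsBounded Ω) (hsb : HasSmoothBoundary Ω)
    (hconv : ∀ x ∈ frontier Ω, StrictlyConvexAt G Ω x) :
    ∃ ρ, IsDefiningFnOn Ω (closure Ω) ρ ∧ ∀ x ∈ closure Ω, symHess ρ x ∈ interior G := by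
  obtain ⟨r, hr⟩ := hsb.exists_isDefiningFnOn hΩo hΩb
  obtain ⟨q, hq, hqf⟩ := exists_isDefiningFnOn_forall_frontier_symHess_mem hG hGc hΩb hr hconv
  obtain ⟨a, ha, hqa⟩ := exists_pos_forall_neg_lt_symHess_mem isOpen_interior hΩb hq hqf
  obtain ⟨ψ, hψ, hψa⟩ := exists_isDefiningFnOn_empty_symHess_eq ha hΩb hq
  have hu : IsDefiningFnOn Ω (closure Ω) (flatRamp a ∘ q) := hq.flatRamp_comp ha
  have hint : ∀ x ∈ closure Ω, -a < q x → symHess (flatRamp a ∘ q) x ∈ interior G :=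
    fun x hx hax => symHess_flatRamp_comp_mem_interior hG hGc hq.contDiff_two hax (hqa x hx hax)
  have hmem : ∀ x ∈ closure Ω, symHess (flatRamp a ∘ q) x ∈ G := fun x hx => by
    obtain hax | hax := lt_or_ge (-a) (q x)
    · exact interior_subset (hint x hx hax)
    · rwa [symHess_flatRamp_comp_of_le hq.contDiff_two hax]
  have hψint : ∀ x, q x ≤ -a → symHess ψ x ∈ interior (Ici 0) := fun x hx => by
    rw [hψa x hx]
    exact smul_mem_interior_Ici one_mem_interior_Ici_zero two_pos
  obtain ⟨ε, hε, hpos⟩ := ((eventually_forall_add_smul_mem_interior hG hΩb.isCompact_closure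
    (continuous_symHess hu.contDiff_two) (continuous_symHess hψ.contDiff_two) hmem
    fun x hx hxψ => hint x hx (not_le.1 fun h => hxψ (hψint x h))).and self_mem_nhdsWithin).exists
  refine ⟨flatRamp a ∘ q + ε • ψ, (hu.add (hψ.const_smul hpos)).mono subset_union_left, ?_⟩
  exact fun x hx => symHess_add_const_smul hu.contDiff_two hψ.contDiff_two ε x ▸ hε x hx

theorem global_defining_function_general (F : Set (SymMat n)) (hne : F.Nonempty)
    (hF : ∀ A ∈ F, ∀ P : SymMat n, (P : Matrix (Fin n) (Fin n) ℝ).PosSemidef → A + P ∈ F)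
    (Ω : Set (Euc n)) (hΩo : IsOpen Ω) (hΩb : Bornology.IsBounded Ω) (hsb : HasSmoothBoundary Ω)
    (hconv : ∀ x ∈ frontier Ω, StrictlyConvexAt (raySet F) Ω x) :
    ∃ ρ : Euc n → ℝ, ContDiff ℝ ∞ ρ ∧ Ω = {x | ρ x < 0} ∧
      (∀ x ∈ frontier Ω, fderiv ℝ ρ x ≠ 0) ∧
      (∀ x ∈ closure Ω,
        ∃ A ∈ interior (raySet F), (A : Matrix (Fin n) (Fin n) ℝ) = hessMat ρ x) ∧
      ∃ ε : ℝ, 0 < ε ∧ ∃ R : ℝ, 0 < R ∧ ∀ C : ℝ, R ≤ C → ∀ x ∈ closure Ω,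
        ∃ A ∈ F, (A : Matrix (Fin n) (Fin n) ℝ)
          = C • (hessMat ρ x - ε • (1 : Matrix (Fin n) (Fin n) ℝ)) := by
  have hFu : IsUpperSet F := isUpperSet_of_forall_add_posSemidef_mem hF
  simp only [raySet_eq_closure_eventualRays] at hconv ⊢
  obtain ⟨ρ, hρ, hHess⟩ := exists_isDefiningFnOn_forall_closure_symHess_mem
    (isUpperSet_eventualRays hFu).closure
    (fun c hc A hA => smul_mem_interior_closure_eventualRays hA hc)
    (zero_mem_closure_eventualRays hFu hne one_mem_interior_Ici_zero) hΩo hΩb hsb hconv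
  have hcoe : ∀ x, (symHess ρ x : Matrix (Fin n) (Fin n) ℝ) = hessMat ρ x :=
    fun x => coe_symHess hρ.contDiff_two.contDiffAt
  obtain ⟨ε, hε, hlarge⟩ := exists_pos_eventually_smul_sub_smul_mem hFu one_mem_interior_Ici_zero
    (hΩb.isCompact_closure.image (continuous_symHess hρ.contDiff_two)) (image_subset_iff.2 hHess)
  obtain ⟨R, hR, hRF⟩ := (atTop_basis_Ioi' (0 : ℝ)).eventually_iff.1 hlarge
  refine ⟨ρ, hρ.contDiff, hρ.eq_setOf_neg, fun x hx => hρ.fderiv_ne_zero x ⟨hx, hx.1⟩,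
    fun x hx => ⟨_, hHess x hx, hcoe x⟩, ε, hε, R + 1, by linarith, fun C hC x hx =>
      ⟨_, hRF (mem_Ioi.2 (by linarith)) _ (mem_image_of_mem _ hx), ?_⟩⟩
  rw [← hcoe]
  rfl

end Convexification

/-- Theorem 5.12: a bounded domain with smooth, strictly `F⃗`-convex
boundary admits a global defining function which is strictly of type `F⃗` on the
closure, with the additional quantitative property (5.4). -/
theorem global_defining_function {n : ℕ} (F : Set (SymMat n)) (hF : IsDirichletSet F)
    (Ω : Set (Euc n)) (hΩo : IsOpen Ω) (hΩb : Bornology.IsBounded Ω)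
    (hsb : HasSmoothBoundary Ω)
    (hconv : ∀ x ∈ frontier Ω, StrictlyConvexAt (raySet F) Ω x) :
    ∃ V : Set (Euc n), IsOpen V ∧ closure Ω ⊆ V ∧ ∃ ρ : Euc n → ℝ,
      ContDiffOn ℝ (⊤ : ℕ∞) ρ V ∧ Ω = {x ∈ V | ρ x < 0} ∧
      (∀ x ∈ frontier Ω, fderiv ℝ ρ x ≠ 0) ∧
      (∀ x ∈ closure Ω,
        ∃ A ∈ interior (raySet F), (A : Matrix (Fin n) (Fin n) ℝ) = hessMat ρ x) ∧
      ∃ ε : ℝ, 0 < ε ∧ ∃ R : ℝ, 0 < R ∧ ∀ C : ℝ, R ≤ C → ∀ x ∈ closure Ω,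
        ∃ A ∈ F, (A : Matrix (Fin n) (Fin n) ℝ)
          = C • (hessMat ρ x - ε • (1 : Matrix (Fin n) (Fin n) ℝ)) := by
  obtain ⟨ρ, hρ, hΩ, hrest⟩ :=
    global_defining_function_general F hF.nonempty hF.add_psd Ω hΩo hΩb hsb hconv
  exact ⟨univ, isOpen_univ, subset_univ _, ρ, hρ.contDiffOn, by simpa using hΩ, hrest⟩
end
end

section
/- Let F ⊂ Sym²(ℝⁿ) be a Dirichlet set with Dirichlet dual F̃, and let F⃗ and F̃⃗ denote the ray sets of F and F̃ respectively. Let Ω ⊂ ℝⁿ be a bounded open set with smooth boundary which is both strictly F⃗-convex and strictly F̃⃗-convex at each boundary point. Then for every continuous function φ : ∂Ω → ℝ there exists a unique continuous function u : cl(Ω) → ℝ such that u = φ on ∂Ω, the restriction of u to Ω is of type F, and the restriction of −u to Ω is of type F̃. -/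
open Set Metric Filter MeasureTheory Asymptotics
open scoped Topology BigOperators RealInnerProductSpace

noncomputable section

/-!
A continuous function is of type `F` if and only if it is a viscosity subsolution: the Hessian of
every quadratic polynomial touching it from above lies in `F`. For such functions comparison holds:
if `u` is a subsolution for `F` and `v` one for `F̃`, then `u + v` obeys the maximum principle.
Otherwise replace `u` and `v` by their sup-convolutions, which are semiconvex. By Alexandrov's
theorem and Jensen's lemma, the set of points where a slightly tilted hyperplane touches the graph
of the sum from above has positive measure, hence contains a point at which both summands are twice
differentiable. There the sum of the Hessians is at most `0`, which the definition of `F̃` excludes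
once a small multiple of `‖x‖ ^ 2` has been added to `v`.

Uniqueness is comparison. For existence, Perron's method takes the supremum of all continuous
subsolutions with boundary values at most `φ`. Strict convexity of `∂Ω` with respect to the two ray
sets gives barriers from below and, via comparison, from above. Walsh's translation argument
propagates the resulting boundary modulus of continuity into `Ω`, and a bump construction shows that
the negative of the supremum is of type `F̃`.
-/

theorem eventually_abs_apply_self_sub_le {X E : Type*} [TopologicalSpace X] [NormedAddCommGroup E]
    [NormedSpace ℝ E] {Q : X → E →L[ℝ] E →L[ℝ] ℝ} {x : X} (hQ : ContinuousAt Q x) {ε : ℝ}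
    (hε : 0 < ε) : ∀ᶠ y in 𝓝 x, ∀ h, |Q y h h - Q x h h| ≤ ε * ‖h‖ ^ 2 := by
  filter_upwards [hQ.eventually_mem (Metric.ball_mem_nhds (Q x) hε)] with y hy h
  calc |Q y h h - Q x h h| = ‖(Q y - Q x) h h‖ := rfl
    _ ≤ ‖Q y - Q x‖ * ‖h‖ * ‖h‖ := ContinuousLinearMap.le_opNorm₂ _ _ _
    _ ≤ ε * ‖h‖ * ‖h‖ := by
      gcongr
      exact (dist_eq_norm (Q y) (Q x)).symm.trans_le (mem_ball.1 hy).le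
    _ = ε * ‖h‖ ^ 2 := by ring

section SymForm

variable {n : ℕ} {A : SymMat n}

/-- The bilinear form `(v, w) ↦ ⟪A v, w⟫` of a symmetric matrix `A`, as a continuous bilinear map
depending linearly on `A`. -/
def symForm : SymMat n →ₗ[ℝ] Euc n →L[ℝ] Euc n →L[ℝ] ℝ where
  toFun A := innerSL ℝ ∘L Matrix.toEuclideanCLM (𝕜 := ℝ) (A : Matrix (Fin n) (Fin n) ℝ)
  map_add' A B := by simp [ContinuousLinearMap.comp_add]
  map_smul' t A := by simp

theorem symForm_comm (A : SymMat n) (v w : Euc n) : symForm A v w = symForm A w v := by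
  have selfAdjoint_toEuclideanCLM :
      IsSelfAdjoint (Matrix.toEuclideanCLM (n := Fin n) (𝕜 := ℝ) A.1) :=
    A.2.map Matrix.toEuclideanCLM
  exact (selfAdjoint_toEuclideanCLM.isSymmetric v w).trans (real_inner_comm _ _)

theorem symForm_apply (A : SymMat n) (v w : Euc n) :
    symForm A v w = bilin (A : Matrix (Fin n) (Fin n) ℝ) v w := by
  have inner_form : symForm A w v = ⟪Matrix.toEuclideanCLM (𝕜 := ℝ) A.1 w, v⟫ := rfl
  rw [symForm_comm, inner_form, PiLp.inner_apply, bilin]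
  refine Finset.sum_congr rfl fun i _ => ?_
  simp only [Matrix.ofLp_toEuclideanCLM, Matrix.mulVec, dotProduct, RCLike.inner_apply,
    conj_trivial, Finset.mul_sum]
  exact Finset.sum_congr rfl fun j _ => by ring

theorem symForm_one (v w : Euc n) : symForm 1 v w = ⟪v, w⟫ := by
  have inner_form : symForm 1 v w = ⟪Matrix.toEuclideanCLM (𝕜 := ℝ) (1 : SymMat n).1 v, w⟫ := rfl
  rw [inner_form, selfAdjoint.val_one, map_one, one_apply_eq_self]

theorem symForm_add_smul_one (A : SymMat n) (t : ℝ) (v : Euc n) :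
    symForm (A + t • 1) v v = symForm A v v + t * ‖v‖ ^ 2 := by
  simp [symForm_one]

theorem symForm_sub_smul_one (A : SymMat n) (t : ℝ) (v : Euc n) :
    symForm (A - t • 1) v v = symForm A v v - t * ‖v‖ ^ 2 := by
  simp [symForm_one]

instance : FiniteDimensional ℝ (SymMat n) :=
  inferInstanceAs (FiniteDimensional ℝ
    (selfAdjoint.submodule ℝ (Matrix (Fin n) (Fin n) ℝ) : Submodule ℝ _))

instance : ContinuousSMul ℝ (SymMat n) :=
  inferInstanceAs (ContinuousSMul ℝ (selfAdjoint.submodule ℝ (Matrix (Fin n) (Fin n) ℝ)))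

theorem continuous_symForm : Continuous (symForm (n := n)) :=
  LinearMap.continuous_of_finiteDimensional (F' := Euc n →L[ℝ] Euc n →L[ℝ] ℝ) _

theorem eventually_abs_symForm_sub_le (A : SymMat n) {ε : ℝ} (hε : 0 < ε) :
    ∀ᶠ B in 𝓝 A, ∀ h, |symForm B h h - symForm A h h| ≤ ε * ‖h‖ ^ 2 :=
  eventually_abs_apply_self_sub_le continuous_symForm.continuousAt hε

theorem posSemidef_iff_symForm_nonneg :
    (A : Matrix (Fin n) (Fin n) ℝ).PosSemidef ↔ ∀ h, 0 ≤ symForm A h h := by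
  rw [← Matrix.isPositive_toEuclideanLin_iff, LinearMap.isPositive_iff]
  exact and_iff_right fun v w =>
    (symForm_comm A v w).trans (real_inner_comm v (Matrix.toEuclideanLin A.1 w))

theorem exists_symForm_self_eq (T : Euc n →L[ℝ] Euc n) :
    ∃ A : SymMat n, ∀ h, symForm A h h = ⟪T h, h⟫ := by
  let M := (Matrix.toEuclideanCLM (n := Fin n) (𝕜 := ℝ)).symm T
  have map_M : Matrix.toEuclideanCLM (𝕜 := ℝ) M = T := Matrix.toEuclideanCLM.apply_symm_apply T
  refine ⟨selfAdjointPart ℝ M, fun h => ?_⟩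
  have inner_form : symForm (selfAdjointPart ℝ M) h h =
      ⟪Matrix.toEuclideanCLM (𝕜 := ℝ) (selfAdjointPart ℝ M).1 h, h⟫ := rfl
  rw [inner_form, selfAdjointPart_apply_coe, map_smul, map_add, map_star, map_M,
    ContinuousLinearMap.star_eq_adjoint, smul_apply, add_apply, invOf_eq_inv, real_inner_smul_left,
    inner_add_left, ContinuousLinearMap.adjoint_inner_left, real_inner_comm (T h) h]
  ring

end SymForm

section DirichletSet

variable {n : ℕ} {F : Set (SymMat n)} {A B : SymMat n}

theorem tendsto_add_smul_one (A : SymMat n) :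
    Tendsto (fun t : ℝ => A + t • 1) (𝓝[>] 0) (𝓝 A) := by
  have continuous_path : Continuous fun t : ℝ => A + t • (1 : SymMat n) := by fun_prop
  simpa using (continuous_path.tendsto 0).mono_left nhdsWithin_le_nhds

theorem tendsto_sub_smul_one (A : SymMat n) :
    Tendsto (fun t : ℝ => A - t • 1) (𝓝[>] 0) (𝓝 A) := by
  have continuous_path : Continuous fun t : ℝ => A - t • (1 : SymMat n) := by fun_prop
  simpa using (continuous_path.tendsto 0).mono_left nhdsWithin_le_nhds

theorem mem_of_forall_add_smul_one_mem (hF : IsClosed F) (h : ∀ ε > (0 : ℝ), A + ε • 1 ∈ F) :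
    A ∈ F :=
  hF.mem_of_tendsto (tendsto_add_smul_one A) (eventually_mem_nhdsWithin.mono h)

theorem exists_sub_smul_one_mem_interior (hA : A ∈ interior F) :
    ∃ δ > (0 : ℝ), A - δ • 1 ∈ interior F :=
  ((eventually_mem_nhdsWithin (s := Ioi 0)).and
    ((tendsto_sub_smul_one A).eventually_mem (isOpen_interior.mem_nhds hA))).exists

namespace IsDirichletSet

theorem mem_of_symForm_le (hF : IsDirichletSet F) (hA : A ∈ F)
    (hAB : ∀ h, symForm A h h ≤ symForm B h h) : B ∈ F := by
  have sub_posSemidef : ((B - A : SymMat n) : Matrix (Fin n) (Fin n) ℝ).PosSemidef :=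
    posSemidef_iff_symForm_nonneg.2 fun h => by simpa using hAB h
  simpa using hF.add_psd A hA (B - A) sub_posSemidef

theorem mem_interior_iff (hF : IsDirichletSet F) :
    A ∈ interior F ↔ ∃ δ > (0 : ℝ), A - δ • 1 ∈ F := by
  refine ⟨fun hA => ?_, ?_⟩
  · obtain ⟨δ, hδ, hmem⟩ := exists_sub_smul_one_mem_interior hA
    exact ⟨δ, hδ, interior_subset hmem⟩
  · rintro ⟨δ, hδ, hmem⟩
    rw [mem_interior_iff_mem_nhds]
    filter_upwards [eventually_abs_symForm_sub_le A hδ] with B hB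
    refine hF.mem_of_symForm_le hmem fun h => ?_
    rw [symForm_sub_smul_one]
    linarith [(abs_le.1 (hB h)).1]

theorem dual (hF : IsDirichletSet F) : IsDirichletSet (dirDual F) where
  nonempty := by
    obtain ⟨A, hA⟩ := (ne_univ_iff_exists_notMem F).1 hF.ne_univ
    exact ⟨-A, fun h => hA (interior_subset (by simpa using h))⟩
  ne_univ := by
    obtain ⟨A, hA⟩ := hF.nonempty
    refine (ne_univ_iff_exists_notMem _).2 ⟨-(A + (1 : ℝ) • 1), fun h => h ?_⟩
    exact hF.mem_interior_iff.2 ⟨1, one_pos, by simpa using hA⟩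
  isClosed := isOpen_interior.isClosed_compl.preimage continuous_neg
  add_psd A hA P hP h := by
    obtain ⟨δ, hδ, hmem⟩ := hF.mem_interior_iff.1 h
    refine hA (hF.mem_interior_iff.2 ⟨δ, hδ, ?_⟩)
    convert hF.add_psd _ hmem P hP using 1
    abel

end IsDirichletSet

theorem exists_ray_add_smul_one_le_of_mem_interior_raySet (hB : B ∈ interior (raySet F)) :
    ∃ A : SymMat n, ∃ δ > 0, ∃ t₀ : ℝ, (∀ t, t₀ ≤ t → t • A ∈ F) ∧
      ∀ h, symForm A h h + δ * ‖h‖ ^ 2 ≤ symForm B h h := by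
  obtain ⟨δ, hδ, hmem⟩ := exists_sub_smul_one_mem_interior hB
  obtain ⟨A, ⟨t₀, ray⟩, close⟩ :=
    ((mem_closure_iff_frequently.1 (interior_subset hmem)).and_eventually
      (eventually_abs_symForm_sub_le (B - δ • 1) (half_pos hδ))).exists
  refine ⟨A, δ / 2, half_pos hδ, t₀, ray, fun h => ?_⟩
  have upper := (abs_le.1 (close h)).2
  rw [symForm_sub_smul_one] at upper
  linarith

end DirichletSet

section QuadraticExpansion

variable {E : Type*} [NormedAddCommGroup E] [NormedSpace ℝ E] {f g : E → ℝ} {x y : E} {c : ℝ}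
  {L M : E →L[ℝ] ℝ} {Q R : E →L[ℝ] E →L[ℝ] ℝ}

/-- The quadratic polynomial whose `2`-jet at `x` has value `c`, differential `L` and second
derivative `Q`. -/
def quadJet (x : E) (c : ℝ) (L : E →L[ℝ] ℝ) (Q : E →L[ℝ] E →L[ℝ] ℝ) (y : E) : ℝ :=
  c + L (y - x) + 1 / 2 * Q (y - x) (y - x)

@[simp]
theorem quadJet_self : quadJet x c L Q x = c := by simp [quadJet]

theorem contDiff_quadJet {k : WithTop ℕ∞} : ContDiff ℝ k (quadJet x c L Q) := by
  unfold quadJet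
  fun_prop

theorem hasFDerivAt_quadJet (hQ : ∀ v w, Q v w = Q w v) (x y : E) :
    HasFDerivAt (quadJet x c L Q) (L + Q (y - x)) y := by
  have sub_const : HasFDerivAt (fun y => y - x) (ContinuousLinearMap.id ℝ E) y :=
    (hasFDerivAt_id y).sub_const x
  have lin := (L.hasFDerivAt.comp y sub_const).const_add c
  have quad := ((Q.hasFDerivAt.comp y sub_const).clm_apply sub_const).const_mul (1 / 2)
  refine (lin.add quad).congr_fderiv ?_
  ext v
  simp only [hQ v (y - x), Function.comp_apply, ContinuousLinearMap.comp_id, add_apply, smul_apply,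
    ContinuousLinearMap.flip_apply, smul_eq_mul]
  ring

theorem quadJet_eq_quadJet (hQ : ∀ v w, Q v w = Q w v) (x y : E) :
    quadJet x c L Q = quadJet y (quadJet x c L Q y) (L + Q (y - x)) Q := by
  ext z
  have split : z - x = (z - y) + (y - x) := by abel
  simp only [quadJet, split, map_add, add_apply, hQ (z - y) (y - x)]
  ring

/-- `f` has a second-order Peano expansion at `x`, with linear part `L` and quadratic part `Q`.
This does not require `f` to be differentiable at any point other than `x`. -/
def HasQuadExpansionAt (f : E → ℝ) (L : E →L[ℝ] ℝ) (Q : E →L[ℝ] E →L[ℝ] ℝ) (x : E) : Prop :=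
  (fun y => f y - quadJet x (f x) L Q y) =o[𝓝 x] fun y => ‖y - x‖ ^ 2

namespace HasQuadExpansionAt

theorem add (hf : HasQuadExpansionAt f L Q x) (hg : HasQuadExpansionAt g M R x) :
    HasQuadExpansionAt (fun y => f y + g y) (L + M) (Q + R) x := by
  refine (IsLittleO.add hf hg).congr_left fun y => ?_
  simp only [quadJet, add_apply]
  ring

theorem neg (hf : HasQuadExpansionAt f L Q x) :
    HasQuadExpansionAt (fun y => -f y) (-L) (-Q) x := by
  refine (IsLittleO.neg_left hf).congr_left fun y => ?_
  simp only [quadJet, neg_apply]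
  ring

theorem sub (hf : HasQuadExpansionAt f L Q x) (hg : HasQuadExpansionAt g M R x) :
    HasQuadExpansionAt (fun y => f y - g y) (L - M) (Q - R) x := by
  simpa only [sub_eq_add_neg (G := ℝ), sub_eq_add_neg L, sub_eq_add_neg Q] using hf.add hg.neg

theorem comp_add_const {a : E} (hf : HasQuadExpansionAt f L Q (x + a)) :
    HasQuadExpansionAt (fun y => f (y + a)) L Q x := by
  have translation : Tendsto (· + a) (𝓝 x) (𝓝 (x + a)) := (continuous_add_const a).tendsto x
  refine (IsLittleO.comp_tendsto hf translation).congr (fun y => ?_) fun y => ?_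
  · simp only [Function.comp_apply, quadJet, add_sub_add_right_eq_sub]
  · simp only [Function.comp_apply, add_sub_add_right_eq_sub]

theorem const_add (c : ℝ) (hf : HasQuadExpansionAt f L Q x) :
    HasQuadExpansionAt (fun y => c + f y) L Q x := by
  refine IsLittleO.congr_left hf fun y => ?_
  simp only [quadJet]
  ring

theorem const_mul (c : ℝ) (hf : HasQuadExpansionAt f L Q x) :
    HasQuadExpansionAt (fun y => c * f y) (c • L) (c • Q) x := by
  refine (IsLittleO.const_mul_left hf c).congr_left fun y => ?_
  simp only [quadJet, smul_apply, smul_eq_mul]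
  ring

theorem eventually_abs_sub_le (hf : HasQuadExpansionAt f L Q x) {ε : ℝ} (hε : 0 < ε) :
    ∀ᶠ y in 𝓝 x, |f y - quadJet x (f x) L Q y| ≤ ε * ‖y - x‖ ^ 2 := by
  simpa only [Real.norm_eq_abs, abs_pow, abs_norm] using hf.def hε

theorem of_hasFDerivAt {f' : E → E →L[ℝ] ℝ} (hf : ∀ᶠ y in 𝓝 x, HasFDerivAt f (f' y) y)
    (hf' : HasFDerivAt f' Q x) : HasQuadExpansionAt f (f' x) Q x := by
  have symm_Q (v w : E) : Q v w = Q w v := second_derivative_symmetric_of_eventually hf hf' v w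
  obtain ⟨r, hr, hball⟩ := Metric.eventually_nhds_iff_ball.1 hf
  have hasFDerivAt_remainder : ∀ y ∈ ball x r, HasFDerivWithinAt
      (fun y => f y - quadJet x (f x) (f' x) Q y) (f' y - f' x - Q (y - x)) (ball x r) y := by
    intro y hy
    have diff := (hball y hy).sub (hasFDerivAt_quadJet (c := f x) (L := f' x) symm_Q x y)
    exact (diff.congr_fderiv (by abel)).hasFDerivWithinAt
  have remainder_isLittleO := (convex_ball x r).isLittleO_pow_succ (n := 1) (mem_ball_self hr)
    hasFDerivAt_remainder (by
      rw [isOpen_ball.nhdsWithin_eq (mem_ball_self hr)]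
      simpa using (hasFDerivAt_iff_isLittleO.1 hf').norm_right)
  rw [isOpen_ball.nhdsWithin_eq (mem_ball_self hr)] at remainder_isLittleO
  simpa [HasQuadExpansionAt] using remainder_isLittleO

theorem of_contDiffAt (hf : ContDiffAt ℝ 2 f x) :
    HasQuadExpansionAt f (fderiv ℝ f x) (fderiv ℝ (fderiv ℝ f) x) x :=
  .of_hasFDerivAt
    ((hf.eventually (by simp)).mono fun _ hy => (hy.differentiableAt (by simp)).hasFDerivAt)
    ((hf.fderiv_right (m := 1) (by norm_num)).differentiableAt (by simp)).hasFDerivAt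

theorem nonneg_of_isLocalMin (hf : HasQuadExpansionAt f L Q x) (hmin : IsLocalMin f x) (h : E) :
    0 ≤ Q h h := by
  have line_tendsto (v : E) : Tendsto (fun t : ℝ => x + t • v) (𝓝[>] 0) (𝓝 x) := by
    have continuous_line : Continuous fun t : ℝ => x + t • v := by fun_prop
    simpa using (continuous_line.tendsto 0).mono_left nhdsWithin_le_nhds
  have almost_nonneg : ∀ ε > 0, 0 ≤ Q h h + 2 * ε * ‖h‖ ^ 2 := by
    intro ε hε
    have near := hmin.and (hf.eventually_abs_sub_le hε)
    obtain ⟨t, ⟨⟨min_pos, exp_pos⟩, min_neg, exp_neg⟩, ht⟩ :=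
      (((line_tendsto h).eventually near).and ((line_tendsto (-h)).eventually near)).and
        eventually_mem_nhdsWithin |>.exists
    have t_pos : 0 < t := ht
    simp only [quadJet, add_sub_cancel_left, map_smul, map_neg, smul_apply, neg_apply,
      smul_eq_mul, norm_smul, norm_neg, Real.norm_eq_abs, mul_pow, sq_abs] at exp_pos exp_neg
    have scaled : 0 ≤ t ^ 2 * (Q h h + 2 * ε * ‖h‖ ^ 2) := by
      linarith [(abs_le.1 exp_pos).2, (abs_le.1 exp_neg).2]
    exact nonneg_of_mul_nonneg_right scaled (by positivity)
  have limit : Tendsto (fun ε : ℝ => Q h h + 2 * ε * ‖h‖ ^ 2) (𝓝[>] 0) (𝓝 (Q h h)) := by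
    have : Continuous fun ε : ℝ => Q h h + 2 * ε * ‖h‖ ^ 2 := by fun_prop
    simpa using (this.tendsto 0).mono_left nhdsWithin_le_nhds
  exact ge_of_tendsto limit (eventually_mem_nhdsWithin.mono almost_nonneg)

end HasQuadExpansionAt

theorem hasQuadExpansionAt_quadJet (hQ : ∀ v w, Q v w = Q w v) (x y : E) :
    HasQuadExpansionAt (quadJet x c L Q) (L + Q (y - x)) Q y := by
  simp only [HasQuadExpansionAt, ← quadJet_eq_quadJet hQ x y, sub_self, isLittleO_zero]

theorem hasQuadExpansionAt_quadJet_self : HasQuadExpansionAt (quadJet x c L Q) L Q x := by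
  simp [HasQuadExpansionAt]

theorem HasQuadExpansionAt.nonpos_of_eventually_le (hf : HasQuadExpansionAt f L Q x)
    (hle : ∀ᶠ y in 𝓝 x, f y ≤ f x + M (y - x)) (h : E) : Q h h ≤ 0 := by
  have gap_min : IsLocalMin (fun y => quadJet x (f x) M 0 y - f y) x := by
    filter_upwards [hle] with y hy
    rw [quadJet_self, quadJet, zero_apply, zero_apply]
    linarith
  have gap_nonneg := (hasQuadExpansionAt_quadJet_self.sub hf).nonneg_of_isLocalMin gap_min h
  rwa [sub_apply, sub_apply, zero_apply, zero_apply, zero_sub, neg_nonneg] at gap_nonneg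

theorem hasQuadExpansionAt_sq_sub (ℓ : E →L[ℝ] ℝ) (c x : E) :
    HasQuadExpansionAt (fun y => ℓ (y - c) ^ 2) ((2 * ℓ (x - c)) • ℓ) ((2 : ℝ) • ℓ.smulRight ℓ)
      x := by
  have eq_quadJet : (fun y => ℓ (y - c) ^ 2) = quadJet c 0 0 ((2 : ℝ) • ℓ.smulRight ℓ) := by
    ext y
    simp only [quadJet, zero_apply, smul_apply, ContinuousLinearMap.smulRight_apply, smul_eq_mul]
    ring
  have expansion := hasQuadExpansionAt_quadJet (c := 0) (L := 0) (Q := (2 : ℝ) • ℓ.smulRight ℓ)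
    (fun v w => by simp [mul_comm]) c x
  rw [eq_quadJet]
  convert expansion using 1
  ext v
  simp [mul_assoc]

theorem hasQuadExpansionAt_affine (a : E →ᴬ[ℝ] ℝ) (x : E) :
    HasQuadExpansionAt a a.contLinear 0 x := by
  have remainder_zero (y : E) : a y - quadJet x (a x) a.contLinear 0 y = 0 := by
    have linear_part := a.contLinear_map_vsub y x
    rw [vsub_eq_sub, vsub_eq_sub] at linear_part
    simp [quadJet, linear_part]
  simp only [HasQuadExpansionAt, remainder_zero, isLittleO_zero]

end QuadraticExpansion

section InnerForm

variable {H : Type*} [NormedAddCommGroup H] [InnerProductSpace ℝ H]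

/-- The inner product as a continuous bilinear form; `innerSL ℝ` is only conjugate-linear in its
first argument as far as elaboration is concerned. -/
def innerForm : H →L[ℝ] H →L[ℝ] ℝ := innerSL ℝ

@[simp]
theorem innerForm_apply (v w : H) : innerForm v w = ⟪v, w⟫ := rfl

theorem hasQuadExpansionAt_mul_normSq_sub (k : ℝ) (c x : H) :
    HasQuadExpansionAt (fun y => k * ‖y - c‖ ^ 2) ((2 * k) • innerForm (x - c))
      ((2 * k) • innerForm) x := by
  have eq_quadJet : (fun y => k * ‖y - c‖ ^ 2) = quadJet c 0 0 ((2 * k) • innerForm) := by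
    ext y
    simp only [quadJet, zero_apply, smul_apply, innerForm_apply, real_inner_self_eq_norm_sq,
      smul_eq_mul]
    ring
  rw [eq_quadJet]
  simpa using hasQuadExpansionAt_quadJet (c := 0) (L := 0) (Q := (2 * k) • innerForm)
    (fun v w : H => by simp [real_inner_comm]) c x

end InnerForm

section Hessian

variable {n : ℕ} {f : Euc n → ℝ} {x : Euc n} {A : SymMat n}

theorem bilin_hessMat (f : Euc n → ℝ) (x v w : Euc n) :
    bilin (hessMat f x) v w = fderiv ℝ (fderiv ℝ f) x v w := by
  have sum_single (v : Euc n) : v = ∑ i, v i • EuclideanSpace.single i (1 : ℝ) := by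
    ext j
    simp [Finset.sum_apply, Pi.single_apply]
  conv_rhs => rw [sum_single v, sum_single w]
  simp only [map_sum, map_smul, sum_apply, smul_apply, smul_eq_mul, bilin, hessMat,
    iteratedFDeriv_two_apply, Matrix.cons_val_zero, Matrix.cons_val_one, Finset.mul_sum]
  rw [Finset.sum_comm]
  exact Finset.sum_congr rfl fun i _ => Finset.sum_congr rfl fun j _ => by ring

theorem coe_eq_hessMat_iff :
    (A : Matrix (Fin n) (Fin n) ℝ) = hessMat f x ↔ symForm A = fderiv ℝ (fderiv ℝ f) x := by
  constructor
  · intro h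
    ext v w
    rw [symForm_apply, h, bilin_hessMat]
  · intro h
    ext i j
    have entry := congr($h (EuclideanSpace.single i 1) (EuclideanSpace.single j 1))
    rw [symForm_apply, ← bilin_hessMat] at entry
    simpa [bilin, Pi.single_apply] using entry

theorem hessMat_quadJet {c : ℝ} {L : Euc n →L[ℝ] ℝ} (x y : Euc n) :
    hessMat (quadJet x c L (symForm A)) y = A := by
  have fderiv_eq : fderiv ℝ (quadJet x c L (symForm A)) = fun y => L + symForm A (y - x) :=
    funext fun y => (hasFDerivAt_quadJet (symForm_comm A) x y).fderiv
  refine (coe_eq_hessMat_iff.2 ?_).symm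
  rw [fderiv_eq, fderiv_const_add, fderiv_comp_sub, ContinuousLinearMap.fderiv]

end Hessian

section Subsolution

variable {n : ℕ} {F : Set (SymMat n)} {X Y : Set (Euc n)} {u g : Euc n → ℝ} {x : Euc n}
  {A : SymMat n}

/-- Viscosity subsolutions: every quadratic polynomial touching `u` from above at a point of `X`
has its Hessian in `F`. -/
def IsSubsolutionOn (F : Set (SymMat n)) (X : Set (Euc n)) (u : Euc n → ℝ) : Prop :=
  ∀ x ∈ X, ∀ (A : SymMat n) (L : Euc n →L[ℝ] ℝ),
    (∀ᶠ y in 𝓝 x, u y ≤ quadJet x (u x) L (symForm A) y) → A ∈ F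

theorem isTypeF_coe_iff : IsTypeF F X (fun x => (u x : EReal)) ↔
    ∀ v, IsTypeFC2 (dirDual F) X v → ∀ K, IsCompact K → K ⊆ X → ∀ a : Euc n →ᵃ[ℝ] ℝ,
      (∀ x ∈ frontier K, u x + v x ≤ a x) → ∀ x ∈ K, u x + v x ≤ a x := by
  simp only [IsTypeF, SubaffineOn, ← EReal.coe_add, EReal.coe_le_coe_iff]

namespace IsSubsolutionOn

theorem mono (hu : IsSubsolutionOn F X u) (hYX : Y ⊆ X) : IsSubsolutionOn F Y u :=
  fun x hx => hu x (hYX hx)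

theorem mem_of_isLocalMax (hu : IsSubsolutionOn F X u) (hF : IsClosed F) (hx : x ∈ X)
    {L : Euc n →L[ℝ] ℝ} {Q : Euc n →L[ℝ] Euc n →L[ℝ] ℝ} (hg : HasQuadExpansionAt g L Q x)
    (hmax : IsLocalMax (fun y => u y - g y) x) (hQA : ∀ h, Q h h ≤ symForm A h h) : A ∈ F := by
  refine mem_of_forall_add_smul_one_mem hF fun ε hε => hu x hx _ L ?_
  filter_upwards [hmax, hg.eventually_abs_sub_le (half_pos hε)] with y touch expansion
  have g_le := (abs_le.1 expansion).2
  simp only [quadJet, symForm_add_smul_one] at g_le ⊢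
  linarith [hQA (y - x)]

theorem of_hasQuadExpansionAt (hF : IsDirichletSet F)
    (hu : ∀ x ∈ X, ∃ L Q, HasQuadExpansionAt u L Q x ∧ ∃ A ∈ F, ∀ h, symForm A h h ≤ Q h h) :
    IsSubsolutionOn F X u := by
  intro x hx B M touch
  obtain ⟨L, Q, expansion, A, hA, hAQ⟩ := hu x hx
  refine hF.mem_of_symForm_le hA fun h => ?_
  have gap_min : IsLocalMin (fun y => quadJet x (u x) M (symForm B) y - u y) x := by
    filter_upwards [touch] with y hy
    rw [quadJet_self]
    linarith
  have gap_nonneg := ((hasQuadExpansionAt_quadJet (symForm_comm B) x x).sub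
    expansion).nonneg_of_isLocalMin gap_min h
  rw [sub_apply, sub_apply] at gap_nonneg
  linarith [hAQ h]

theorem of_isTypeF (hF : IsDirichletSet F) (hX : IsOpen X)
    (hu : IsTypeF F X fun x => (u x : EReal)) : IsSubsolutionOn F X u := by
  intro x hx A L touch
  refine mem_of_forall_add_smul_one_mem hF.isClosed fun ε hε => ?_
  by_contra notMem
  let v := quadJet x 0 (-L) (symForm (-(A + ε • 1)))
  have v_type : IsTypeFC2 (dirDual F) X v := by
    refine ⟨contDiff_quadJet.contDiffOn, fun y _ => ⟨-(A + ε • 1), ?_, (hessMat_quadJet x y).symm⟩⟩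
    exact fun h => notMem (interior_subset (by simpa only [neg_neg] using h))
  obtain ⟨r, hr, hball⟩ := Metric.nhds_basis_closedBall.eventually_iff.1
    (touch.and (hX.eventually_mem hx))
  have sum_le : ∀ y ∈ frontier (closedBall x r),
      u y + v y ≤ AffineMap.const ℝ (Euc n) (u x - ε / 2 * r ^ 2) y := by
    intro y hy
    have norm_eq : ‖y - x‖ = r := by rwa [frontier_closedBall x hr.ne', mem_sphere_iff_norm] at hy
    have u_le := (hball (isClosed_closedBall.frontier_subset hy)).1
    simp only [v, quadJet, map_neg, neg_apply, symForm_add_smul_one, norm_eq,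
      AffineMap.const_apply] at u_le ⊢
    linarith
  have center_le := isTypeF_coe_iff.1 hu v v_type _ (isCompact_closedBall x r)
    (fun y hy => (hball hy).2) _ sum_le x (mem_closedBall_self hr.le)
  simp only [v, quadJet_self, AffineMap.const_apply] at center_le
  have : 0 < ε / 2 * r ^ 2 := by positivity
  linarith

end IsSubsolutionOn

theorem exists_isLocalMax_add_normSq {E : Type*} [NormedAddCommGroup E] {K : Set E} {w : E → ℝ}
    (hK : IsCompact K) (hw : ContinuousOn w K) (hfr : ∀ x ∈ frontier K, w x ≤ 0) {x₀ : E}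
    (hx₀ : x₀ ∈ K) (hpos : 0 < w x₀) :
    ∃ ε > 0, ∃ x ∈ interior K, IsLocalMax (fun y => w y + ε * ‖y‖ ^ 2) x := by
  obtain ⟨R, hR⟩ := hK.isBounded.exists_norm_le
  have small : ∀ᶠ ε in 𝓝[>] (0 : ℝ), ε * R ^ 2 < w x₀ := by
    have continuous_mul : Continuous fun ε : ℝ => ε * R ^ 2 := by fun_prop
    exact nhdsWithin_le_nhds (continuous_mul.continuousAt.eventually_lt_const (by simpa using hpos))
  obtain ⟨ε, hεR, hε : 0 < ε⟩ := (small.and eventually_mem_nhdsWithin).exists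
  obtain ⟨x, hxK, hmax⟩ := hK.exists_isMaxOn ⟨x₀, hx₀⟩
    (hw.add (f := w) (g := fun y => ε * ‖y‖ ^ 2) (by fun_prop))
  have x_interior : x ∈ interior K := by
    by_contra notMem
    have w_nonpos := hfr x ⟨subset_closure hxK, notMem⟩
    have norm_le : ε * ‖x‖ ^ 2 ≤ ε * R ^ 2 := by gcongr; exact hR x hxK
    have max_ge : w x₀ + ε * ‖x₀‖ ^ 2 ≤ w x + ε * ‖x‖ ^ 2 := hmax hx₀
    have : 0 ≤ ε * ‖x₀‖ ^ 2 := by positivity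
    linarith
  exact ⟨ε, hε, x, x_interior, hmax.isLocalMax (mem_interior_iff_mem_nhds.1 x_interior)⟩

theorem IsSubsolutionOn.isTypeF (hF : IsDirichletSet F) (hX : IsOpen X) (hc : ContinuousOn u X)
    (hu : IsSubsolutionOn F X u) : IsTypeF F X fun x => (u x : EReal) := by
  rw [isTypeF_coe_iff]
  intro v hv K hK hKX a boundary_le x₀ hx₀
  by_contra! x₀_lt
  let b : Euc n →ᴬ[ℝ] ℝ := ⟨a, a.continuous_of_finiteDimensional⟩
  obtain ⟨ε, hε, x, hx, hmax⟩ := exists_isLocalMax_add_normSq hK (w := fun y => u y + v y - b y)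
    (((hc.mono hKX).add (hv.1.continuousOn.mono hKX)).sub b.continuous.continuousOn)
    (fun x hx => sub_nonpos.2 (boundary_le x hx)) hx₀ (sub_pos.2 x₀_lt)
  have hxX := hKX (interior_subset hx)
  obtain ⟨H, hH, hess⟩ := hv.2 x hxX
  have v_expansion : HasQuadExpansionAt v (fderiv ℝ v x) (symForm H) x :=
    coe_eq_hessMat_iff.1 hess ▸ .of_contDiffAt (hv.1.contDiffAt (hX.mem_nhds hxX))
  have test_expansion := ((hasQuadExpansionAt_affine b x).sub v_expansion).sub
    (hasQuadExpansionAt_mul_normSq_sub ε 0 x)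
  refine hH (hF.mem_interior_iff.2 ⟨2 * ε, by positivity, ?_⟩)
  refine hu.mem_of_isLocalMax hF.isClosed hxX test_expansion ?_ fun h => ?_
  · filter_upwards [hmax] with y touch
    simp only [sub_zero]
    linarith
  · rw [symForm_sub_smul_one]
    simp

end Subsolution

section Semiconvex

variable {E : Type*} [NormedAddCommGroup E] [InnerProductSpace ℝ E] {Λ Λ' : ℝ} {U V : E → ℝ}
  {q r : E → E} {x y p : E}

/-- `U` is semiconvex with constant `Λ`: at every `y` it is touched from below by a paraboloid of
opening `-Λ` and slope `q y`. -/
def IsSemiconvexWith (Λ : ℝ) (U : E → ℝ) (q : E → E) : Prop :=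
  ∀ y z, U y + ⟪q y, z - y⟫ - Λ / 2 * ‖z - y‖ ^ 2 ≤ U z

theorem dist_le_of_forall_dist_le_add_sq {α : Type*} [PseudoMetricSpace α] {G : ℝ → α} {a C : ℝ}
    (hG : ∀ s t, 0 ≤ s → s ≤ t → t ≤ 1 → dist (G s) (G t) ≤ a * (t - s) + C * (t - s) ^ 2) :
    dist (G 0) (G 1) ≤ a := by
  have subdivided : ∀ N : ℕ, 0 < N → dist (G 0) (G 1) ≤ a + C * (1 / N) := by
    intro N hN
    have N_pos : (0 : ℝ) < N := mod_cast hN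
    have piece {k : ℕ} (hk : k < N) :
        dist (G (k / N)) (G ((k + 1 : ℕ) / N)) ≤ a * (1 / N) + C * (1 / N) ^ 2 := by
      have succ_le : ((k + 1 : ℕ) : ℝ) ≤ N := mod_cast hk
      have width : ((k + 1 : ℕ) : ℝ) / N - k / N = 1 / N := by push_cast; ring
      rw [← width]
      exact hG _ _ (by positivity) (by gcongr; simp) ((div_le_one N_pos).2 succ_le)
    have total := dist_le_range_sum_of_dist_le (f := fun k : ℕ => G (k / N)) N piece
    simp only [Nat.cast_zero, zero_div, div_self N_pos.ne', Finset.sum_const, Finset.card_range,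
      nsmul_eq_mul] at total
    refine total.trans_eq ?_
    field_simp
  have limit : Tendsto (fun N : ℕ => a + C * (1 / (N : ℝ))) atTop (𝓝 (a + C * 0)) :=
    (tendsto_one_div_atTop_nhds_zero_nat.const_mul C).const_add a
  simpa using ge_of_tendsto limit ((eventually_gt_atTop 0).mono subdivided)

namespace IsSemiconvexWith

theorem add (hU : IsSemiconvexWith Λ U q) (hV : IsSemiconvexWith Λ' V r) :
    IsSemiconvexWith (Λ + Λ') (fun y => U y + V y) (fun y => q y + r y) := by
  intro y z
  rw [inner_add_left]
  linarith [hU y z, hV y z]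

theorem convexOn (hU : IsSemiconvexWith Λ U q) :
    ConvexOn ℝ univ fun y => U y + Λ / 2 * ‖y‖ ^ 2 := by
  have supported (w z : E) : U w + Λ / 2 * ‖w‖ ^ 2 + ⟪q w + Λ • w, z - w⟫ ≤
      U z + Λ / 2 * ‖z‖ ^ 2 := by
    have below := hU w z
    rw [norm_sub_sq_real, real_inner_comm w z] at below
    simp only [inner_add_left, inner_sub_right, real_inner_smul_left,
      real_inner_self_eq_norm_sq] at below ⊢
    linarith
  refine ⟨convex_univ, fun y _ z _ a b ha hb hab => ?_⟩
  have at_y := mul_le_mul_of_nonneg_left (supported (a • y + b • z) y) ha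
  have at_z := mul_le_mul_of_nonneg_left (supported (a • y + b • z) z) hb
  generalize q (a • y + b • z) + Λ • (a • y + b • z) = p at at_y at_z
  simp only [inner_sub_right, inner_add_right, real_inner_smul_right, smul_eq_mul]
    at at_y at_z ⊢
  obtain rfl : b = 1 - a := by linarith
  linarith

theorem continuous [FiniteDimensional ℝ E] (hU : IsSemiconvexWith Λ U q) : Continuous U := by
  have convex_continuous : Continuous fun y => U y + Λ / 2 * ‖y‖ ^ 2 :=
    continuousOn_univ.1 (hU.convexOn.continuousOn isOpen_univ)
  have norm_sq_continuous : Continuous fun y : E => Λ / 2 * ‖y‖ ^ 2 := by fun_prop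
  exact (convex_continuous.sub norm_sq_continuous).congr fun y => by simp

theorem eq_of_eventually_le (hU : IsSemiconvexWith Λ U q)
    (hx : ∀ᶠ z in 𝓝 x, U z ≤ U x + ⟪p, z - x⟫) : p = q x := by
  have gap_min : IsLocalMin (quadJet x 0 (innerForm (p - q x)) (Λ • innerForm)) x := by
    filter_upwards [hx] with z hz
    have below := hU x z
    rw [quadJet_self, quadJet, smul_apply, smul_apply, innerForm_apply, innerForm_apply,
      real_inner_self_eq_norm_sq, inner_sub_left, smul_eq_mul]
    linarith
  have deriv := hasFDerivAt_quadJet (c := 0) (L := innerForm (p - q x)) (Q := Λ • innerForm)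
    (fun v w : E => by simp [real_inner_comm]) x x
  have slope_zero := congr($(gap_min.hasFDerivAt_eq_zero deriv) (p - q x))
  rw [sub_self, map_zero, add_zero, innerForm_apply, zero_apply, inner_self_eq_zero] at slope_zero
  exact sub_eq_zero.1 slope_zero

theorem norm_sub_le (hU : IsSemiconvexWith Λ U q) (hΛ : 0 ≤ Λ) {s : ℝ}
    (hx : ∀ z ∈ ball x s, U z ≤ U x + ⟪q x, z - x⟫ + Λ / 2 * ‖z - x‖ ^ 2)
    (hy : 2 * ‖y - x‖ < s) : ‖q y - q x‖ ≤ 3 * Λ * ‖y - x‖ := by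
  rcases eq_or_ne (q y) (q x) with same | hne
  · rw [same, sub_self, norm_zero]
    positivity
  rcases eq_or_ne y x with rfl | hyx
  · simp at hne
  have d_pos : 0 < ‖q y - q x‖ := norm_pos_iff.2 (sub_ne_zero.2 hne)
  have r_pos : 0 < ‖y - x‖ := norm_pos_iff.2 (sub_ne_zero.2 hyx)
  -- Compare the three paraboloids at `y + c`, where `c` is as long as `y - x` and points in the
  -- direction of the change of slope.
  obtain ⟨c, c_norm, c_inner⟩ :
      ∃ c : E, ‖c‖ = ‖y - x‖ ∧ ⟪q y - q x, c⟫ = ‖y - x‖ * ‖q y - q x‖ := by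
    refine ⟨(‖y - x‖ / ‖q y - q x‖) • (q y - q x), ?_, ?_⟩
    · rw [norm_smul, Real.norm_of_nonneg (by positivity), div_mul_cancel₀ _ d_pos.ne']
    · rw [inner_smul_right, real_inner_self_eq_norm_sq]
      field_simp
  have split : y + c - x = (y - x) + c := by abel
  have dist_le : ‖y + c - x‖ ≤ 2 * ‖y - x‖ := by
    rw [split]
    linarith [norm_add_le (y - x) c]
  have above := hx (y + c) (mem_ball_iff_norm.2 (dist_le.trans_lt hy))
  have below_y := hU y (y + c)
  have below_x := hU x y
  have sq_le : Λ / 2 * ‖y + c - x‖ ^ 2 ≤ Λ / 2 * (2 * ‖y - x‖) ^ 2 := by gcongr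
  have inner_split : ⟪q x, y + c - x⟫ = ⟪q x, y - x⟫ + ⟪q x, c⟫ := by
    rw [split, inner_add_right]
  rw [add_sub_cancel_left, c_norm] at below_y
  rw [inner_sub_left] at c_inner
  refine le_of_mul_le_mul_left ?_ r_pos
  linarith

theorem abs_sub_quadJet_le (hU : IsSemiconvexWith Λ U q) {A : E →L[ℝ] E} {h : E} {a : ℝ}
    (hq : ∀ t ∈ Icc (0 : ℝ) 1, |⟪q (x + t • h) - q x - A (t • h), h⟫| ≤ a) :
    |U (x + h) - quadJet x (U x) (innerForm (q x)) (innerForm ∘L A) (x + h)| ≤ a := by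
  let G (t : ℝ) := U (x + t • h) - (t * ⟪q x, h⟫ + t ^ 2 / 2 * ⟪A h, h⟫)
  have increment (s t : ℝ) (hs : 0 ≤ s) (hst : s ≤ t) (ht : t ≤ 1) :
      dist (G s) (G t) ≤ a * (t - s) + (Λ / 2 * ‖h‖ ^ 2 + |⟪A h, h⟫| / 2) * (t - s) ^ 2 := by
    have below := hU (x + s • h) (x + t • h)
    have above := hU (x + t • h) (x + s • h)
    have forward : x + t • h - (x + s • h) = (t - s) • h := by rw [sub_smul]; abel
    have backward : x + s • h - (x + t • h) = (s - t) • h := by rw [sub_smul]; abel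
    have slope_s := hq s ⟨hs, hst.trans ht⟩
    have slope_t := hq t ⟨hs.trans hst, ht⟩
    simp only [forward, backward, inner_smul_right, norm_smul, mul_pow, Real.norm_eq_abs, sq_abs,
      map_smul, inner_sub_left, real_inner_smul_left] at below above slope_s slope_t
    have lower := mul_le_mul_of_nonneg_left (abs_le.1 slope_s).1 (sub_nonneg.2 hst)
    have upper := mul_le_mul_of_nonneg_left (abs_le.1 slope_t).2 (sub_nonneg.2 hst)
    have curv_le := mul_le_mul_of_nonneg_left (le_abs_self ⟪A h, h⟫) (sq_nonneg (t - s))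
    have curv_ge := mul_le_mul_of_nonneg_left (neg_abs_le ⟪A h, h⟫) (sq_nonneg (t - s))
    rw [Real.dist_eq, abs_le]
    constructor <;> simp only [G] <;> linarith [curv_le, curv_ge]
  have bound := dist_le_of_forall_dist_le_add_sq increment
  rw [dist_comm, Real.dist_eq] at bound
  convert bound using 2
  simp only [G, quadJet, add_sub_cancel_left, innerForm_apply, one_smul, zero_smul, add_zero,
    ContinuousLinearMap.comp_apply]
  ring

theorem hasQuadExpansionAt (hU : IsSemiconvexWith Λ U q) {A : E →L[ℝ] E}
    (hq : HasFDerivAt q A x) :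
    HasQuadExpansionAt U (innerForm (q x)) (innerForm ∘L A) x := by
  refine IsLittleO.of_bound fun θ hθ => ?_
  obtain ⟨r, hr, near⟩ := Metric.eventually_nhds_iff_ball.1
    ((hasFDerivAt_iff_isLittleO_nhds_zero.1 hq).def hθ)
  filter_upwards [Metric.ball_mem_nhds x hr] with y hy
  rw [norm_pow, norm_norm, Real.norm_eq_abs]
  have along_segment : ∀ t ∈ Icc (0 : ℝ) 1,
      |⟪q (x + t • (y - x)) - q x - A (t • (y - x)), y - x⟫| ≤ θ * ‖y - x‖ ^ 2 := by
    intro t ht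
    have smul_le : ‖t • (y - x)‖ ≤ ‖y - x‖ := by
      rw [norm_smul, Real.norm_of_nonneg ht.1]
      exact mul_le_of_le_one_left (norm_nonneg _) ht.2
    have smul_mem : t • (y - x) ∈ ball 0 r :=
      mem_ball_zero_iff.2 (smul_le.trans_lt (mem_ball_iff_norm.1 hy))
    calc |⟪q (x + t • (y - x)) - q x - A (t • (y - x)), y - x⟫|
        ≤ ‖q (x + t • (y - x)) - q x - A (t • (y - x))‖ * ‖y - x‖ := abs_real_inner_le_norm _ _
      _ ≤ θ * ‖y - x‖ * ‖y - x‖ := by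
        gcongr
        exact (near _ smul_mem).trans (by gcongr)
      _ = θ * ‖y - x‖ ^ 2 := by ring
  simpa using hU.abs_sub_quadJet_le along_segment

end IsSemiconvexWith

end Semiconvex

theorem exists_lipschitzOnWith_of_forall_norm_sub_le {E G : Type*} [SeminormedAddCommGroup E]
    [SeminormedAddCommGroup G] {q : E → G} {S : Set E} {s C M : ℝ} (hs : 0 < s)
    (hM : ∀ x ∈ S, ‖q x‖ ≤ M)
    (hC : ∀ y ∈ S, ∀ z, ‖z - y‖ < s → ‖q z - q y‖ ≤ C * ‖z - y‖) :
    ∃ K, LipschitzOnWith K q S := by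
  refine ⟨(max C (2 * M / s)).toNNReal, LipschitzOnWith.of_dist_le_mul fun z hz y hy => ?_⟩
  rw [dist_eq_norm, dist_eq_norm]
  suffices ‖q z - q y‖ ≤ max C (2 * M / s) * ‖z - y‖ from
    this.trans (by gcongr; exact Real.le_coe_toNNReal _)
  rcases lt_or_ge ‖z - y‖ s with near | far
  · exact (hC y hy z near).trans (by gcongr; exact le_max_left _ _)
  · have M_nonneg : 0 ≤ M := (norm_nonneg _).trans (hM y hy)
    calc ‖q z - q y‖ ≤ ‖q z‖ + ‖q y‖ := norm_sub_le _ _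
      _ ≤ 2 * M / s * s := by rw [div_mul_cancel₀ _ hs.ne']; linarith [hM z hz, hM y hy]
      _ ≤ max C (2 * M / s) * ‖z - y‖ := by
        gcongr
        exact le_max_right _ _

section ContactSet

variable {E G : Type*} [NormedAddCommGroup E] [NormedSpace ℝ E] [NormedAddCommGroup G]
  [NormedSpace ℝ G] {q : E → G} {S : Set E} {x : E} {s C : ℝ}

theorem exists_mem_norm_sub_isLittleO (hx : x ∈ S)
    (hd : DifferentiableAt ℝ (fun y => infDist y S) x) :
    ∃ Y : E → E, (∀ y, Y y ∈ S) ∧ (fun y => y - Y y) =o[𝓝 x] fun y => y - x := by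
  have infDist_x : infDist x S = 0 := infDist_zero_of_mem hx
  have infDist_min : IsLocalMin (fun y => infDist y S) x :=
    Eventually.of_forall fun y => infDist_x.trans_le infDist_nonneg
  have infDist_isLittleO : (fun y => infDist y S) =o[𝓝 x] fun y => y - x := by
    have deriv := hd.hasFDerivAt
    rw [infDist_min.hasFDerivAt_eq_zero deriv, hasFDerivAt_iff_isLittleO] at deriv
    simpa [infDist_x] using deriv
  have almost_nearest (y : E) : ∃ z ∈ S, ‖y - z‖ ≤ infDist y S + ‖y - x‖ ^ 2 := by
    rcases eq_or_ne y x with rfl | hne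
    · exact ⟨y, hx, by simp [infDist_x]⟩
    · have : 0 < ‖y - x‖ := norm_pos_iff.2 (sub_ne_zero.2 hne)
      obtain ⟨z, hz, near⟩ := (infDist_lt_iff (r := infDist y S + ‖y - x‖ ^ 2) ⟨x, hx⟩).1
        (lt_add_of_pos_right _ (by positivity))
      exact ⟨z, hz, (dist_eq_norm y z).symm.trans_le near.le⟩
  choose Y hY near using almost_nearest
  have sq_isLittleO : (fun y => ‖y - x‖ ^ 2) =o[𝓝 x] fun y => y - x := by
    exact (isLittleO_norm_pow_id one_lt_two).comp_tendsto (tendsto_sub_nhds_zero_iff.2 tendsto_id)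
  refine ⟨Y, hY, (IsBigO.of_bound 1 (Eventually.of_forall fun y => ?_)).trans_isLittleO
    (infDist_isLittleO.add sq_isLittleO)⟩
  rw [one_mul]
  exact (near y).trans (le_abs_self _)

theorem hasFDerivAt_of_hasFDerivWithinAt_of_differentiableAt_infDist {A : E →L[ℝ] G} (hx : x ∈ S)
    (hq : HasFDerivWithinAt q A S x) (hs : 0 < s)
    (hC : ∀ y ∈ S, ∀ z, ‖z - y‖ < s → ‖q z - q y‖ ≤ C * ‖z - y‖)
    (hd : DifferentiableAt ℝ (fun y => infDist y S) x) : HasFDerivAt q A x := by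
  obtain ⟨Y, hY, nearby⟩ := exists_mem_norm_sub_isLittleO hx hd
  have Y_isBigO : (fun y => Y y - x) =O[𝓝 x] fun y => y - x := by
    simpa using (isBigO_refl (fun y => y - x) (𝓝 x)).sub nearby.isBigO
  have gap_tendsto : Tendsto (fun y => y - Y y) (𝓝 x) (𝓝 0) :=
    nearby.isBigO.trans_tendsto (tendsto_sub_nhds_zero_iff.2 tendsto_id)
  have Y_tendsto : Tendsto Y (𝓝 x) (𝓝[S] x) :=
    tendsto_nhdsWithin_iff.2 ⟨tendsto_sub_nhds_zero_iff.1
      (Y_isBigO.trans_tendsto (tendsto_sub_nhds_zero_iff.2 tendsto_id)), Eventually.of_forall hY⟩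
  have on_S : (fun y => q (Y y) - q x - A (Y y - x)) =o[𝓝 x] fun y => y - x :=
    ((hasFDerivWithinAt_iff_isLittleO.1 hq).comp_tendsto Y_tendsto).trans_isBigO Y_isBigO
  have off_S : (fun y => q y - q (Y y)) =o[𝓝 x] fun y => y - x := by
    refine (IsBigO.of_bound C ?_).trans_isLittleO nearby
    filter_upwards [gap_tendsto (Metric.ball_mem_nhds 0 hs)] with y hy
    exact hC (Y y) (hY y) y (mem_ball_zero_iff.1 hy)
  have linear_part : (fun y => A (y - Y y)) =o[𝓝 x] fun y => y - x :=
    (A.isBigO_comp _ _).trans_isLittleO nearby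
  refine hasFDerivAt_iff_isLittleO.2 (((off_S.add on_S).sub linear_part).congr_left fun y => ?_)
  simp only [map_sub]
  abel

/-- Rademacher's theorem gives differentiability along `S`; at points where moreover
`infDist · S` is differentiable, `S` is so dense that the derivative is a full one. -/
theorem ae_differentiableAt_of_forall_norm_sub_le [FiniteDimensional ℝ E] [FiniteDimensional ℝ G]
    [MeasurableSpace E] [BorelSpace E] (μ : Measure E) [μ.IsAddHaarMeasure] {M : ℝ} (hs : 0 < s)
    (hM : ∀ x ∈ S, ‖q x‖ ≤ M)
    (hC : ∀ y ∈ S, ∀ z, ‖z - y‖ < s → ‖q z - q y‖ ≤ C * ‖z - y‖) :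
    ∀ᵐ x ∂μ, x ∈ S → DifferentiableAt ℝ q x := by
  obtain ⟨K, lipschitz⟩ := exists_lipschitzOnWith_of_forall_norm_sub_le hs hM hC
  filter_upwards [lipschitz.ae_differentiableWithinAt_of_mem (μ := μ),
    (lipschitz_infDist_pt S).ae_differentiableAt (μ := μ)] with x along_S infDist_diff hx
  exact (hasFDerivAt_of_hasFDerivWithinAt_of_differentiableAt_infDist hx
    (along_S hx).hasFDerivWithinAt hs hC infDist_diff).differentiableAt

end ContactSet

section Jensen

variable {E : Type*} [NormedAddCommGroup E] [InnerProductSpace ℝ E] [FiniteDimensional ℝ E]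
  [MeasurableSpace E] [BorelSpace E] {S : Set E}

theorem measure_image_eq_zero_of_lipschitzOnWith (μ : Measure E) [μ.IsAddHaarMeasure] {f : E → E}
    {C : NNReal} (hf : LipschitzOnWith C f S) (hS : μ S = 0) : μ (f '' S) = 0 := by
  let ν : Measure E := Measure.hausdorffMeasure (Module.finrank ℝ E)
  have ν_image_le := hf.hausdorffMeasure_image_le (d := Module.finrank ℝ E) (Nat.cast_nonneg _)
  have ν_S : ν S = 0 := Measure.absolutelyContinuous_isAddHaarMeasure ν μ hS
  have ν_image : ν (f '' S) = 0 := le_zero_iff.1 (ν_image_le.trans_eq (mul_eq_zero_of_right _ ν_S))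
  exact Measure.absolutelyContinuous_isAddHaarMeasure μ ν ν_image

variable {Λ s M : ℝ} {U V : E → ℝ} {qU qV : E → E}

/-- Jensen's lemma: the slope map is Lipschitz on the contact set `S` of `U + V`, so `S` is not
null, and almost everywhere on `S` both functions are twice differentiable. -/
theorem IsSemiconvexWith.exists_hasQuadExpansionAt_add_nonpos (μ : Measure E) [μ.IsAddHaarMeasure]
    (hU : IsSemiconvexWith Λ U qU) (hV : IsSemiconvexWith Λ V qV) (hΛ : 0 ≤ Λ) (hs : 0 < s)
    (hS : ∀ x ∈ S, ∀ z ∈ ball x s, U z + V z ≤ U x + V x + ⟪qU x + qV x, z - x⟫)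
    (hMU : ∀ x ∈ S, ‖qU x‖ ≤ M) (hMV : ∀ x ∈ S, ‖qV x‖ ≤ M)
    (hμ : μ ((fun x => qU x + qV x) '' S) ≠ 0) :
    ∃ x ∈ S, ∃ A B : E →L[ℝ] E,
      HasQuadExpansionAt U (innerForm (qU x)) (innerForm ∘L A) x ∧
      HasQuadExpansionAt V (innerForm (qV x)) (innerForm ∘L B) x ∧
      ∀ h, ⟪A h, h⟫ + ⟪B h, h⟫ ≤ 0 := by
  have slopes_U : ∀ x ∈ S, ∀ y, ‖y - x‖ < s / 2 → ‖qU y - qU x‖ ≤ 3 * Λ * ‖y - x‖ := by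
    refine fun x hx y hy => hU.norm_sub_le hΛ (s := s) (fun z hz => ?_) (by linarith)
    have contact := hS x hx z hz
    rw [inner_add_left] at contact
    linarith [hV x z]
  have slopes_V : ∀ x ∈ S, ∀ y, ‖y - x‖ < s / 2 → ‖qV y - qV x‖ ≤ 3 * Λ * ‖y - x‖ := by
    refine fun x hx y hy => hV.norm_sub_le hΛ (s := s) (fun z hz => ?_) (by linarith)
    have contact := hS x hx z hz
    rw [inner_add_left] at contact
    linarith [hU x z]
  obtain ⟨_, lipschitz_U⟩ := exists_lipschitzOnWith_of_forall_norm_sub_le (half_pos hs) hMU slopes_U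
  obtain ⟨_, lipschitz_V⟩ := exists_lipschitzOnWith_of_forall_norm_sub_le (half_pos hs) hMV slopes_V
  have S_not_null : ∃ᶠ x in ae μ, x ∈ S := by
    rw [frequently_ae_mem_iff]
    exact fun h => hμ (measure_image_eq_zero_of_lipschitzOnWith μ (lipschitz_U.add lipschitz_V) h)
  obtain ⟨x, hx, diff_U, diff_V⟩ := (S_not_null.and_eventually
    ((ae_differentiableAt_of_forall_norm_sub_le μ (half_pos hs) hMU slopes_U).and
      (ae_differentiableAt_of_forall_norm_sub_le μ (half_pos hs) hMV slopes_V))).exists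
  have exp_U := hU.hasQuadExpansionAt (diff_U hx).hasFDerivAt
  have exp_V := hV.hasQuadExpansionAt (diff_V hx).hasFDerivAt
  exact ⟨x, hx, _, _, exp_U, exp_V, (exp_U.add exp_V).nonpos_of_eventually_le
    (M := innerForm (qU x + qV x)) (mem_of_superset (Metric.ball_mem_nhds x hs) (hS x hx))⟩

end Jensen

section SupConvolution

variable {E : Type*} [NormedAddCommGroup E] {Λ M δ : ℝ} {K : Set E}
  {u U : E → ℝ} {Y : E → E} {x : E}

/-- `U` is the sup-convolution `U x = max_{y ∈ K} (u y - Λ / 2 * ‖x - y‖ ^ 2)` of `u` over `K`,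
attained at `Y x`. -/
structure IsSupConvolution (Λ : ℝ) (K : Set E) (u U : E → ℝ) (Y : E → E) : Prop where
  mem : ∀ x, Y x ∈ K
  eq : ∀ x, U x = u (Y x) - Λ / 2 * ‖x - Y x‖ ^ 2
  sub_le : ∀ x, ∀ y ∈ K, u y - Λ / 2 * ‖x - y‖ ^ 2 ≤ U x

theorem exists_isSupConvolution (Λ : ℝ) (hK : IsCompact K) (hne : K.Nonempty)
    (hu : ContinuousOn u K) : ∃ U Y, IsSupConvolution Λ K u U Y := by
  have attained (x : E) : ∃ y ∈ K, IsMaxOn (fun y => u y - Λ / 2 * ‖x - y‖ ^ 2) K y :=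
    hK.exists_isMaxOn hne (hu.sub (by fun_prop))
  choose Y hY hmax using attained
  exact ⟨fun x => u (Y x) - Λ / 2 * ‖x - Y x‖ ^ 2, Y, hY, fun _ => rfl, fun x y hy => hmax x hy⟩

namespace IsSupConvolution

theorem isSemiconvexWith [InnerProductSpace ℝ E] (hU : IsSupConvolution Λ K u U Y) :
    IsSemiconvexWith Λ U fun x => Λ • (Y x - x) := by
  intro x z
  have below := hU.sub_le z (Y x) (hU.mem x)
  have expand : ‖z - Y x‖ ^ 2 = ‖z - x‖ ^ 2 - 2 * ⟪Y x - x, z - x⟫ + ‖x - Y x‖ ^ 2 := by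
    rw [← sub_sub_sub_cancel_right z (Y x) x, norm_sub_sq_real, real_inner_comm,
      norm_sub_rev (Y x) x]
  rw [expand] at below
  rw [hU.eq, real_inner_smul_left]
  linarith

theorem self_le (hU : IsSupConvolution Λ K u U Y) (hx : x ∈ K) : u x ≤ U x := by
  simpa using hU.sub_le x x hx

theorem le (hU : IsSupConvolution Λ K u U Y) (hΛ : 0 ≤ Λ) (x : E) : U x ≤ u (Y x) := by
  rw [hU.eq]
  exact sub_le_self _ (by positivity)

theorem norm_sub_lt (hU : IsSupConvolution Λ K u U Y) (hM : ∀ x ∈ K, |u x| ≤ M) (hΛ : 0 ≤ Λ)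
    (hδ : 0 ≤ δ) (hΛδ : 4 * M < Λ * δ ^ 2) (hx : x ∈ K) : ‖Y x - x‖ < δ := by
  by_contra! far
  rw [norm_sub_rev] at far
  have sq_le : Λ * δ ^ 2 ≤ Λ * ‖x - Y x‖ ^ 2 := by gcongr
  have upper := hU.self_le hx
  rw [hU.eq] at upper
  linarith [(abs_le.1 (hM x hx)).1, (abs_le.1 (hM _ (hU.mem x))).2]

end IsSupConvolution

theorem IsSupConvolution.mem_of_hasQuadExpansionAt {n : ℕ} {F : Set (SymMat n)}
    {Ω : Set (Euc n)} {u U : Euc n → ℝ} {Y : Euc n → Euc n} {x : Euc n} {A : SymMat n}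
    {L : Euc n →L[ℝ] ℝ} {Q : Euc n →L[ℝ] Euc n →L[ℝ] ℝ}
    (hU : IsSupConvolution Λ (closure Ω) u U Y) (hΩ : IsOpen Ω) (hF : IsClosed F)
    (hu : IsSubsolutionOn F Ω u) (hx : Y x ∈ Ω) (hQ : HasQuadExpansionAt U L Q x)
    (hQA : ∀ h, Q h h ≤ symForm A h h) : A ∈ F := by
  rw [← add_sub_cancel (Y x) x] at hQ
  refine hu.mem_of_isLocalMax hF hx hQ.comp_add_const ?_ hQA
  filter_upwards [hΩ.mem_nhds hx] with y hy
  have below := hU.sub_le (y + (x - Y x)) y (subset_closure hy)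
  rw [add_sub_cancel_left] at below
  rw [add_sub_cancel, hU.eq x]
  linarith

end SupConvolution

section Comparison

theorem ball_subset_of_forall_frontier_notMem {E : Type*} [SeminormedAddCommGroup E]
    [NormedSpace ℝ E] {Ω : Set E} {x : E} {δ : ℝ} (hΩ : IsOpen Ω) (hδ : 0 < δ)
    (hx : x ∈ closure Ω) (hfr : ∀ b ∈ frontier Ω, b ∉ ball x δ) : ball x δ ⊆ Ω := by
  refine (convex_ball x δ).isPreconnected.subset_of_closure_inter_subset hΩ
    (mem_closure_iff.1 hx _ isOpen_ball (mem_ball_self hδ)) fun b ⟨hbΩ, hb⟩ => ?_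
  by_contra notMem
  exact hfr b ⟨hbΩ, by rwa [hΩ.interior_eq]⟩ hb

theorem exists_pos_forall_add_le_of_frontier {E : Type*} [PseudoMetricSpace E] {Ω : Set E}
    {u v : E → ℝ} {ε : ℝ} (hΩ : IsCompact (closure Ω)) (hu : ContinuousOn u (closure Ω))
    (hv : ContinuousOn v (closure Ω)) (hfr : ∀ x ∈ frontier Ω, u x + v x ≤ 0) (hε : 0 < ε) :
    ∃ δ > 0, ∀ b ∈ frontier Ω, ∀ y ∈ closure Ω, ∀ z ∈ closure Ω,
      dist y b < 2 * δ → dist z b < 2 * δ → u y + v z ≤ ε := by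
  obtain ⟨α, hα, u_near⟩ := Metric.uniformContinuousOn_iff.1
    (hΩ.uniformContinuousOn_of_continuous hu) (ε / 2) (half_pos hε)
  obtain ⟨β, hβ, v_near⟩ := Metric.uniformContinuousOn_iff.1
    (hΩ.uniformContinuousOn_of_continuous hv) (ε / 2) (half_pos hε)
  refine ⟨min α β / 2, half_pos (lt_min hα hβ), fun b hb y hy z hz hyb hzb => ?_⟩
  rw [mul_div_cancel₀ _ two_ne_zero, lt_min_iff] at hyb hzb
  have u_close := u_near y hy b (frontier_subset_closure hb) hyb.1
  have v_close := v_near z hz b (frontier_subset_closure hb) hzb.2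
  rw [Real.dist_eq, abs_lt] at u_close v_close
  linarith [hfr b hb]

/-- The maximum of `U + V - ⟪p, ·⟫` is interior for every small `p`, because near the boundary
`U + V` is at most `m / 2`. -/
theorem exists_ball_subset_image_contactSet {E : Type*} [NormedAddCommGroup E]
    [InnerProductSpace ℝ E] [FiniteDimensional ℝ E] {Ω : Set E} {Λ δ m : ℝ} {u v U V : E → ℝ}
    {Y Z : E → E} {x₀ : E} (hΩ : IsOpen Ω) (hb : Bornology.IsBounded Ω) (hΛ : 0 ≤ Λ)
    (hδ : 0 < δ) (hU : IsSupConvolution Λ (closure Ω) u U Y)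
    (hV : IsSupConvolution Λ (closure Ω) v V Z)
    (hY : ∀ x ∈ closure Ω, ‖Y x - x‖ < δ) (hZ : ∀ x ∈ closure Ω, ‖Z x - x‖ < δ)
    (hm : 0 < m) (hx₀ : x₀ ∈ closure Ω) (hmx₀ : m ≤ u x₀ + v x₀)
    (hbdry : ∀ b ∈ frontier Ω, ∀ y ∈ closure Ω, ∀ z ∈ closure Ω,
      dist y b < 2 * δ → dist z b < 2 * δ → u y + v z ≤ m / 2) :
    ∃ κ > 0, ball 0 κ ⊆ (fun x => Λ • (Y x - x) + Λ • (Z x - x)) '' {x ∈ closure Ω |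
      ball x δ ⊆ Ω ∧ ∀ z ∈ ball x δ,
        U z + V z ≤ U x + V x + ⟪Λ • (Y x - x) + Λ • (Z x - x), z - x⟫} := by
  obtain ⟨R, R_pos, hR⟩ := hb.closure.exists_pos_norm_le
  have semiconvex := hU.isSemiconvexWith.add hV.isSemiconvexWith
  refine ⟨m / (4 * R), by positivity, fun p hp => ?_⟩
  obtain ⟨x, hx, hmax⟩ := hb.isCompact_closure.exists_isMaxOn ⟨x₀, hx₀⟩
    (f := fun x => U x + V x - ⟪p, x⟫) (semiconvex.continuous.sub (by fun_prop)).continuousOn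
  have inner_le : |⟪p, x - x₀⟫| < m / 2 := calc
    |⟪p, x - x₀⟫| ≤ ‖p‖ * ‖x - x₀‖ := abs_real_inner_le_norm _ _
    _ ≤ ‖p‖ * (R + R) := by gcongr; exact norm_sub_le_of_le (hR x hx) (hR x₀ hx₀)
    _ < m / (4 * R) * (R + R) := by gcongr; exact mem_ball_zero_iff.1 hp
    _ = m / 2 := by field_simp; ring
  have max_gt : m / 2 < U x + V x := by
    have at_x₀ : U x₀ + V x₀ - ⟪p, x₀⟫ ≤ U x + V x - ⟪p, x⟫ := hmax hx₀
    rw [inner_sub_right] at inner_le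
    linarith [hU.self_le hx₀, hV.self_le hx₀, (abs_lt.1 inner_le).1]
  have inside : ball x δ ⊆ Ω := by
    refine ball_subset_of_forall_frontier_notMem hΩ hδ hx fun b hb hbx => ?_
    have near {y : E} (hy : ‖y - x‖ < δ) : dist y b < 2 * δ := by
      rw [← dist_eq_norm] at hy
      linarith [dist_triangle_right y b x, mem_ball.1 hbx]
    linarith [hU.le hΛ x, hV.le hΛ x,
      hbdry b hb _ (hU.mem x) _ (hV.mem x) (near (hY x hx)) (near (hZ x hx))]
  have contact : ∀ z ∈ ball x δ, U z + V z ≤ U x + V x + ⟪p, z - x⟫ := by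
    intro z hz
    have at_z : U z + V z - ⟪p, z⟫ ≤ U x + V x - ⟪p, x⟫ := hmax (subset_closure (inside hz))
    rw [inner_sub_right]
    linarith
  have slope := semiconvex.eq_of_eventually_le
    (mem_of_superset (Metric.ball_mem_nhds x hδ) contact)
  exact ⟨x, ⟨hx, inside, slope ▸ contact⟩, slope.symm⟩

theorem IsSubsolutionOn.add_nonpos_of_frontier {n : ℕ} {F G : Set (SymMat n)} {Ω : Set (Euc n)}
    {u v : Euc n → ℝ} (hF : IsClosed F) (hG : IsClosed G)
    (hFG : ∀ A ∈ F, ∀ B ∈ G, ∃ h, 0 < symForm (A + B) h h)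
    (hΩ : IsOpen Ω) (hb : Bornology.IsBounded Ω)
    (huc : ContinuousOn u (closure Ω)) (hvc : ContinuousOn v (closure Ω))
    (hu : IsSubsolutionOn F Ω u) (hv : IsSubsolutionOn G Ω v)
    (hfr : ∀ x ∈ frontier Ω, u x + v x ≤ 0) : ∀ x ∈ closure Ω, u x + v x ≤ 0 := by
  intro x₀ hx₀
  by_contra! m_pos
  have hK := hb.isCompact_closure
  obtain ⟨δ, hδ, hbdry⟩ := exists_pos_forall_add_le_of_frontier hK huc hvc hfr (half_pos m_pos)
  obtain ⟨M, hM⟩ := hK.exists_bound_of_continuousOn huc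
  obtain ⟨N, hN⟩ := hK.exists_bound_of_continuousOn hvc
  have mul_atTop : Tendsto (fun Λ => Λ * δ ^ 2) atTop atTop :=
    tendsto_id.atTop_mul_const (by positivity)
  obtain ⟨Λ, hΛ, hΛM, hΛN⟩ := ((eventually_ge_atTop (0 : ℝ)).and
    ((mul_atTop.eventually_gt_atTop (4 * M)).and (mul_atTop.eventually_gt_atTop (4 * N)))).exists
  obtain ⟨U, Y, hU⟩ := exists_isSupConvolution Λ hK ⟨x₀, hx₀⟩ huc
  obtain ⟨V, Z, hV⟩ := exists_isSupConvolution Λ hK ⟨x₀, hx₀⟩ hvc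
  have hY : ∀ x ∈ closure Ω, ‖Y x - x‖ < δ :=
    fun x hx => hU.norm_sub_lt hM hΛ hδ.le hΛM hx
  have hZ : ∀ x ∈ closure Ω, ‖Z x - x‖ < δ :=
    fun x hx => hV.norm_sub_lt hN hΛ hδ.le hΛN hx
  obtain ⟨κ, hκ, ball_subset⟩ :=
    exists_ball_subset_image_contactSet hΩ hb hΛ hδ hU hV hY hZ m_pos hx₀ le_rfl hbdry
  have smul_le {w x : Euc n} (h : ‖w - x‖ < δ) : ‖Λ • (w - x)‖ ≤ Λ * δ := by
    rw [norm_smul, Real.norm_of_nonneg hΛ]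
    gcongr
  obtain ⟨x, ⟨hx, inside, -⟩, S, T, exp_U, exp_V, sum_nonpos⟩ :=
    hU.isSemiconvexWith.exists_hasQuadExpansionAt_add_nonpos volume hV.isSemiconvexWith hΛ hδ
      (fun x hx => hx.2.2) (fun x hx => smul_le (hY x hx.1)) (fun x hx => smul_le (hZ x hx.1))
      (measure_pos_of_superset ball_subset (measure_ball_pos volume 0 hκ).ne').ne'
  obtain ⟨A, hA⟩ := exists_symForm_self_eq S
  obtain ⟨B, hB⟩ := exists_symForm_self_eq T
  have A_mem : A ∈ F := hU.mem_of_hasQuadExpansionAt hΩ hF hu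
    (inside (mem_ball_iff_norm.2 (hY x hx))) exp_U fun h => (hA h).ge
  have B_mem : B ∈ G := hV.mem_of_hasQuadExpansionAt hΩ hG hv
    (inside (mem_ball_iff_norm.2 (hZ x hx))) exp_V fun h => (hB h).ge
  obtain ⟨h, h_pos⟩ := hFG A A_mem B B_mem
  rw [map_add, add_apply, add_apply, hA, hB] at h_pos
  exact h_pos.not_ge (sum_nonpos h)

theorem IsSubsolutionOn.add_mul_normSq_sub {n : ℕ} {G : Set (SymMat n)} {X : Set (Euc n)}
    {v : Euc n → ℝ} (hG : IsClosed G) (hv : IsSubsolutionOn G X v) (η c : ℝ) :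
    IsSubsolutionOn {B | B - (2 * η) • 1 ∈ G} X fun y => v y + η * (‖y‖ ^ 2 - c) := by
  intro x hx B L touch
  have expansion := (hasQuadExpansionAt_quadJet_self (x := x) (L := L) (Q := symForm B)
    (c := v x + η * (‖x‖ ^ 2 - c))).sub (hasQuadExpansionAt_mul_normSq_sub η 0 x)
  refine hv.mem_of_isLocalMax hG hx expansion ?_ fun h => ?_
  · filter_upwards [touch] with y hy
    simp only [quadJet_self, sub_zero]
    linarith
  · simp [symForm_one]

theorem exists_symForm_add_pos {n : ℕ} {F : Set (SymMat n)} {A B : SymMat n} {η : ℝ}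
    (hF : IsDirichletSet F) (hη : 0 < η) (hA : A ∈ F) (hB : B - η • 1 ∈ dirDual F) :
    ∃ h, 0 < symForm (A + B) h h := by
  by_contra! nonpos
  have neg_mem : -B ∈ F := hF.mem_of_symForm_le hA fun h => by
    have := nonpos h
    rw [map_add, add_apply, add_apply] at this
    rw [map_neg, neg_apply, neg_apply]
    linarith
  exact hB (hF.mem_interior_iff.2 ⟨η, hη, by simpa using neg_mem⟩)

theorem IsSubsolutionOn.add_nonpos_of_dirDual {n : ℕ} {F : Set (SymMat n)} {Ω : Set (Euc n)}
    {u v : Euc n → ℝ} (hF : IsDirichletSet F) (hΩ : IsOpen Ω) (hb : Bornology.IsBounded Ω)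
    (huc : ContinuousOn u (closure Ω)) (hvc : ContinuousOn v (closure Ω))
    (hu : IsSubsolutionOn F Ω u) (hv : IsSubsolutionOn (dirDual F) Ω v)
    (hfr : ∀ x ∈ frontier Ω, u x + v x ≤ 0) : ∀ x ∈ closure Ω, u x + v x ≤ 0 := by
  obtain ⟨R, -, hR⟩ := hb.closure.exists_pos_norm_le
  have perturbed : ∀ η > 0, ∀ x ∈ closure Ω, u x + (v x + η * (‖x‖ ^ 2 - R ^ 2)) ≤ 0 := by
    intro η hη
    refine hu.add_nonpos_of_frontier hF.isClosed (hF.dual.isClosed.preimage (by fun_prop))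
      (fun A hA B hB => exists_symForm_add_pos hF (by positivity) hA hB) hΩ hb huc
      (hvc.add (by fun_prop)) (hv.add_mul_normSq_sub hF.dual.isClosed η (R ^ 2)) fun x hx => ?_
    have norm_le : ‖x‖ ^ 2 ≤ R ^ 2 := by gcongr; exact hR x (frontier_subset_closure hx)
    linarith [hfr x hx, mul_nonpos_of_nonneg_of_nonpos hη.le (sub_nonpos.2 norm_le)]
  intro x hx
  have continuous_bound : Continuous fun η : ℝ => u x + (v x + η * (‖x‖ ^ 2 - R ^ 2)) := by
    fun_prop
  have limit := (continuous_bound.continuousWithinAt (s := Ioi 0) (x := 0)).tendsto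
  rw [zero_mul, add_zero] at limit
  exact le_of_tendsto limit (eventually_mem_nhdsWithin.mono fun η hη => perturbed η hη x hx)

theorem IsSubsolutionOn.le_of_dirDual_neg {n : ℕ} {F : Set (SymMat n)} {Ω : Set (Euc n)}
    {u w : Euc n → ℝ} (hF : IsDirichletSet F) (hΩ : IsOpen Ω) (hb : Bornology.IsBounded Ω)
    (huc : ContinuousOn u (closure Ω)) (hwc : ContinuousOn w (closure Ω))
    (hu : IsSubsolutionOn F Ω u) (hw : IsSubsolutionOn (dirDual F) Ω fun x => -w x)
    (hfr : ∀ x ∈ frontier Ω, u x ≤ w x) : ∀ x ∈ closure Ω, u x ≤ w x := by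
  simp only [← sub_nonpos (b := w _), sub_eq_add_neg] at hfr ⊢
  exact hu.add_nonpos_of_dirDual hF hΩ hb huc hwc.neg hw hfr

end Comparison

section DegenerateForms

variable {E : Type*} [NormedAddCommGroup E] [NormedSpace ℝ E] {ℓ : E →L[ℝ] ℝ}
  {D : E →L[ℝ] E →L[ℝ] ℝ}

theorem exists_forall_abs_apply_self_le_mul (hD : ∀ v, ℓ v = 0 → D v v = 0) :
    ∃ C, ∀ v, |D v v| ≤ C * (|ℓ v| * ‖v‖) := by
  by_cases hℓ : ∀ v, ℓ v = 0
  · exact ⟨0, fun v => by simp [hD v (hℓ v)]⟩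
  obtain ⟨v₀, hv₀⟩ := not_forall.1 hℓ
  let e := (ℓ v₀)⁻¹ • v₀
  refine ⟨‖D‖ * ‖e‖ * (2 + ‖ℓ‖ * ‖e‖), fun v => ?_⟩
  let w := v - ℓ v • e
  have w_mem_ker : ℓ w = 0 := by simp [w, e, hv₀]
  have split : D v v = ℓ v * D e v + ℓ v * D w e := by
    have := hD w w_mem_ker
    simp only [w, map_sub, map_smul, sub_apply, smul_apply, smul_eq_mul] at this ⊢
    linarith
  have w_le : ‖w‖ ≤ ‖v‖ + ‖ℓ‖ * ‖v‖ * ‖e‖ := calc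
    ‖w‖ ≤ ‖v‖ + ‖ℓ v‖ * ‖e‖ := (norm_sub_le _ _).trans_eq (by rw [norm_smul])
    _ ≤ ‖v‖ + ‖ℓ‖ * ‖v‖ * ‖e‖ := by gcongr; exact ℓ.le_opNorm v
  calc |D v v| ≤ |ℓ v| * ‖D e v‖ + |ℓ v| * ‖D w e‖ := by
        rw [split, Real.norm_eq_abs, Real.norm_eq_abs, ← abs_mul, ← abs_mul]
        exact abs_add_le _ _
    _ ≤ |ℓ v| * (‖D‖ * ‖e‖ * ‖v‖) + |ℓ v| * (‖D‖ * (‖v‖ + ‖ℓ‖ * ‖v‖ * ‖e‖) * ‖e‖) := by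
        gcongr
        · exact D.le_opNorm₂ e v
        · exact (D.le_opNorm₂ w e).trans (by gcongr)
    _ = ‖D‖ * ‖e‖ * (2 + ‖ℓ‖ * ‖e‖) * (|ℓ v| * ‖v‖) := by ring

theorem exists_forall_abs_apply_self_le_add (hD : ∀ v, ℓ v = 0 → D v v = 0) {ε : ℝ} (hε : 0 < ε) :
    ∃ k, 0 ≤ k ∧ ∀ v, |D v v| ≤ ε * ‖v‖ ^ 2 + k * ℓ v ^ 2 := by
  obtain ⟨C, hC⟩ := exists_forall_abs_apply_self_le_mul hD
  refine ⟨C ^ 2 / (4 * ε), by positivity, fun v => (hC v).trans ?_⟩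
  have square : ε * ‖v‖ ^ 2 + C ^ 2 / (4 * ε) * ℓ v ^ 2 - C * (|ℓ v| * ‖v‖) =
      (2 * ε * ‖v‖ - C * |ℓ v|) ^ 2 / (4 * ε) := by
    rw [← sq_abs (ℓ v)]
    field_simp
    ring
  have : 0 ≤ (2 * ε * ‖v‖ - C * |ℓ v|) ^ 2 / (4 * ε) := by positivity
  linarith

end DegenerateForms

namespace IsLocalDefiningFn

variable {n : ℕ} {Ω U : Set (Euc n)} {ρ : Euc n → ℝ} {x : Euc n}

theorem contDiffAt (hρ : IsLocalDefiningFn Ω U ρ) (hxU : x ∈ U) : ContDiffAt ℝ 2 ρ x :=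
  (hρ.2.1.contDiffAt (hρ.1.mem_nhds hxU)).of_le (WithTop.coe_le_coe.2 le_top)

theorem nonpos (hρ : IsLocalDefiningFn Ω U ρ) (hx : x ∈ closure Ω) (hxU : x ∈ U) : ρ x ≤ 0 := by
  by_contra! pos
  obtain ⟨y, ⟨hy, hyU⟩, hyΩ⟩ := mem_closure_iff_nhds.1 hx _
    (((hρ.contDiffAt hxU).continuousAt.eventually_const_lt pos).and (hρ.1.mem_nhds hxU))
  have neg : y ∈ {y ∈ U | ρ y < 0} := hρ.2.2.1 ▸ ⟨hyΩ, hyU⟩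
  exact lt_asymm hy neg.2

theorem eq_zero (hρ : IsLocalDefiningFn Ω U ρ) (hΩ : IsOpen Ω) (hx : x ∈ frontier Ω)
    (hxU : x ∈ U) : ρ x = 0 := by
  refine (hρ.nonpos (frontier_subset_closure hx) hxU).eq_of_not_lt fun neg => hx.2 ?_
  have mem : x ∈ Ω ∩ U := hρ.2.2.1 ▸ ⟨hxU, neg⟩
  exact hΩ.interior_eq.symm ▸ mem.1

end IsLocalDefiningFn

section LocalBarrier

/-- The peak function at a boundary point `x₀` of `{ρ < 0}`. The square of the differential of `ρ`
corrects the Hessian of `ρ` in the direction normal to the boundary, where convexity gives no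
information. -/
def localBarrier {n : ℕ} (ρ : Euc n → ℝ) (x₀ : Euc n) (k ε : ℝ) (x : Euc n) : ℝ :=
  ρ x + k / 2 * fderiv ℝ ρ x₀ (x - x₀) ^ 2 - ε * ‖x - x₀‖ ^ 2

variable {n : ℕ} {ρ : Euc n → ℝ} {x₀ : Euc n} {k ε : ℝ}

theorem eventually_localBarrier_le (hρ : DifferentiableAt ℝ ρ x₀) (hρ₀ : ρ x₀ = 0) (hk : 0 ≤ k)
    (hε : 0 < ε) : ∀ᶠ x in 𝓝 x₀, ρ x ≤ 0 → localBarrier ρ x₀ k ε x ≤ -(ε / 2) * ‖x - x₀‖ ^ 2 := by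
  have remainder : ∀ᶠ x in 𝓝 x₀, k * (ρ x - fderiv ℝ ρ x₀ (x - x₀)) ^ 2 ≤ ε / 2 * ‖x - x₀‖ ^ 2 := by
    have first_order := ((hasFDerivAt_iff_isLittleO.1 hρ.hasFDerivAt).norm_right.pow
      two_pos).const_mul_left k
    simp only [hρ₀, sub_zero] at first_order
    filter_upwards [first_order.def (half_pos hε)] with x hx
    rw [Real.norm_eq_abs, norm_pow, norm_norm] at hx
    exact (abs_le.1 hx).2
  have small : ∀ᶠ x in 𝓝 x₀, -1 < k * ρ x :=
    (hρ.continuousAt.const_mul k).eventually_const_lt (by simp [hρ₀])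
  filter_upwards [remainder, small] with x hx hkρ hneg
  have square_le : k / 2 * fderiv ℝ ρ x₀ (x - x₀) ^ 2 ≤
      k * ρ x ^ 2 + k * (ρ x - fderiv ℝ ρ x₀ (x - x₀)) ^ 2 := by
    linarith [mul_nonneg hk (sq_nonneg (2 * ρ x - fderiv ℝ ρ x₀ (x - x₀)))]
  have absorb : ρ x * (1 + k * ρ x) ≤ 0 := mul_nonpos_of_nonpos_of_nonneg hneg (by linarith)
  unfold localBarrier
  linarith

theorem hasQuadExpansionAt_localBarrier {x : Euc n} (hρ : ContDiffAt ℝ 2 ρ x) :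
    HasQuadExpansionAt (localBarrier ρ x₀ k ε)
      (fderiv ℝ ρ x + (k / 2) • (2 * fderiv ℝ ρ x₀ (x - x₀)) • fderiv ℝ ρ x₀ -
        (2 * ε) • innerForm (x - x₀))
      (fderiv ℝ (fderiv ℝ ρ) x + (k / 2) • (2 : ℝ) • (fderiv ℝ ρ x₀).smulRight (fderiv ℝ ρ x₀) -
        (2 * ε) • innerForm) x :=
  ((HasQuadExpansionAt.of_contDiffAt hρ).add
    ((hasQuadExpansionAt_sq_sub (fderiv ℝ ρ x₀) x₀ x).const_mul (k / 2))).sub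
    (hasQuadExpansionAt_mul_normSq_sub ε x₀ x)

theorem continuousAt_localBarrier {x : Euc n} (hρ : ContinuousAt ρ x) :
    ContinuousAt (localBarrier ρ x₀ k ε) x := by
  unfold localBarrier
  fun_prop

theorem StrictlyConvexAt.exists_localBarrier {F : Set (SymMat n)} {Ω : Set (Euc n)}
    (hF : IsDirichletSet F) (hΩ : IsOpen Ω) (hx₀ : x₀ ∈ frontier Ω)
    (hc : StrictlyConvexAt (raySet F) Ω x₀) :
    ∃ r > 0, ∃ e > 0, ∃ ψ : Euc n → ℝ, ∃ t₀ : ℝ, ContinuousOn ψ (ball x₀ r) ∧ ψ x₀ = 0 ∧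
      (∀ x ∈ closure Ω, x ∈ ball x₀ r → ψ x ≤ -e * ‖x - x₀‖ ^ 2) ∧
      ∀ t, 0 < t → t₀ ≤ t → ∀ c : ℝ, IsSubsolutionOn F (ball x₀ r) fun x => c + t * ψ x := by
  obtain ⟨U, ρ, hx₀U, hρ, B, hB, tangential⟩ := hc
  obtain ⟨A, δ, hδ, t₀, ray, hAB⟩ := exists_ray_add_smul_one_le_of_mem_interior_raySet hB
  have ρ_zero := hρ.eq_zero hΩ hx₀ hx₀U
  have ρ_smooth := hρ.contDiffAt hx₀U
  obtain ⟨k, hk, normal⟩ := exists_forall_abs_apply_self_le_add (ℓ := fderiv ℝ ρ x₀)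
    (D := fderiv ℝ (fderiv ℝ ρ) x₀ - symForm B) (fun v hv => by
      rw [sub_apply, sub_apply, ← bilin_hessMat, symForm_apply, tangential v v hv hv, sub_self])
    (show 0 < δ / 4 by positivity)
  have hess_continuous : ContinuousAt (fderiv ℝ (fderiv ℝ ρ)) x₀ :=
    ((ρ_smooth.fderiv_right (m := 1) (by norm_num)).fderiv_right (m := 0)
      (by norm_num)).continuousAt
  obtain ⟨r, hr, hball⟩ := Metric.eventually_nhds_iff_ball.1
    ((hρ.1.eventually_mem hx₀U).and
      ((eventually_localBarrier_le (ρ_smooth.differentiableAt (by norm_num)) ρ_zero hk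
        (show 0 < δ / 4 by positivity)).and
      (eventually_abs_apply_self_sub_le hess_continuous (show 0 < δ / 4 by positivity))))
  refine ⟨r, hr, δ / 4 / 2, by positivity, localBarrier ρ x₀ k (δ / 4), t₀, fun x hx => ?_, ?_,
    fun x hx hxr => (hball x hxr).2.1 (hρ.nonpos hx (hball x hxr).1), fun t ht htt₀ c => ?_⟩
  · exact (continuousAt_localBarrier
      (hρ.contDiffAt (hball x hx).1).continuousAt).continuousWithinAt
  · simp [localBarrier, ρ_zero]
  · refine .of_hasQuadExpansionAt hF fun x hx => ⟨_, _, ((hasQuadExpansionAt_localBarrier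
      (hρ.contDiffAt (hball x hx).1)).const_mul t).const_add c, t • A, ray t htt₀, fun h => ?_⟩
    have near := (abs_le.1 ((hball x hx).2.2 h)).1
    have at_x₀ := (abs_le.1 (normal h)).1
    simp only [map_smul, smul_apply, sub_apply, add_apply, innerForm_apply, smul_eq_mul,
      ContinuousLinearMap.smulRight_apply, real_inner_self_eq_norm_sq] at near at_x₀ ⊢
    gcongr
    linarith [hAB h]

end LocalBarrier

section GlueMax

variable {α : Type*} {K U : Set α} {f g : α → ℝ} {x : α}

open scoped Classical in
/-- The gluing of `g`, relevant only on `U`, into `f` by taking maxima. -/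
def glueMax {α : Type*} (U : Set α) (f g : α → ℝ) (x : α) : ℝ :=
  if x ∈ U then max (f x) (g x) else f x

theorem glueMax_of_mem (hx : x ∈ U) : glueMax U f g x = max (f x) (g x) := if_pos hx

theorem glueMax_of_notMem (hx : x ∉ U) : glueMax U f g x = f x := if_neg hx

theorem le_glueMax_left : f x ≤ glueMax U f g x := by
  by_cases hx : x ∈ U
  · exact (le_max_left _ _).trans_eq (glueMax_of_mem hx).symm
  · exact (glueMax_of_notMem hx).ge

theorem le_glueMax_right (hx : x ∈ U) : g x ≤ glueMax U f g x :=
  (le_max_right _ _).trans_eq (glueMax_of_mem hx).symm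

theorem glueMax_eq_left_or_right : glueMax U f g x = f x ∨ x ∈ U ∧ glueMax U f g x = g x := by
  by_cases hx : x ∈ U
  · rw [glueMax_of_mem hx]
    exact (max_choice (f x) (g x)).imp_right fun h => ⟨hx, h⟩
  · exact .inl (glueMax_of_notMem hx)

theorem continuousOn_glueMax [TopologicalSpace α] (hU : IsOpen U) (hf : ContinuousOn f K)
    (hg : ContinuousOn g (K ∩ U))
    (hgf : ∀ x ∈ K, x ∉ U → ∀ᶠ y in 𝓝[K] x, y ∈ U → g y ≤ f y) :
    ContinuousOn (glueMax U f g) K := by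
  intro x hx
  by_cases hxU : x ∈ U
  · have g_continuous : ContinuousWithinAt g K x :=
      (continuousWithinAt_inter (hU.mem_nhds hxU)).1 (hg x ⟨hx, hxU⟩)
    have max_continuous : ContinuousWithinAt (fun y => max (f y) (g y)) K x :=
      (hf x hx).max g_continuous
    refine max_continuous.congr_of_eventuallyEq ?_ (glueMax_of_mem hxU)
    filter_upwards [mem_nhdsWithin_of_mem_nhds (hU.mem_nhds hxU)] with y hy using glueMax_of_mem hy
  · refine (hf x hx).congr_of_eventuallyEq ?_ (glueMax_of_notMem hxU)
    filter_upwards [hgf x hx hxU] with y hy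
    by_cases hyU : y ∈ U
    · rw [glueMax_of_mem hyU, max_eq_left (hy hyU)]
    · exact glueMax_of_notMem hyU

end GlueMax

section SubsolutionStability

variable {n : ℕ} {F : Set (SymMat n)} {X U : Set (Euc n)} {u v f g : Euc n → ℝ}

namespace IsSubsolutionOn

theorem glueMax (hf : IsSubsolutionOn F X f) (hU : IsOpen U) (hg : IsSubsolutionOn F (X ∩ U) g) :
    IsSubsolutionOn F X (glueMax U f g) := by
  intro x hx A L touch
  obtain h | ⟨hxU, h⟩ := glueMax_eq_left_or_right (U := U) (f := f) (g := g) (x := x)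
  · exact hf x hx A L (h ▸ touch.mono fun y => le_glueMax_left.trans)
  · refine hg x ⟨hx, hxU⟩ A L (h ▸ ?_)
    filter_upwards [touch, hU.mem_nhds hxU] with y hy hyU using (le_glueMax_right hyU).trans hy

theorem comp_add_const_sub (hv : IsSubsolutionOn F X v) (a : Euc n) (c : ℝ) :
    IsSubsolutionOn F {x | x + a ∈ X} fun x => v (x + a) - c := by
  intro x hx A L touch
  have translation : Tendsto (· - a) (𝓝 (x + a)) (𝓝 x) :=
    (continuous_sub_right a).tendsto' _ _ (add_sub_cancel_right x a)
  refine hv (x + a) hx A L ?_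
  filter_upwards [translation.eventually touch] with z hz
  simp only [quadJet, sub_add_cancel, sub_sub, add_comm a x] at hz ⊢
  linarith

theorem of_forall_exists_lt (hF : IsClosed F) (hX : IsOpen X)
    (hu : ∀ x ∈ X, ∀ η > 0, ∃ v, ContinuousOn v X ∧ IsSubsolutionOn F X v ∧
      (∀ y ∈ X, v y ≤ u y) ∧ u x - η < v x) : IsSubsolutionOn F X u := by
  intro x hx A L touch
  refine mem_of_forall_add_smul_one_mem hF fun ε hε => ?_
  obtain ⟨r, hr, hball⟩ := Metric.nhds_basis_closedBall.eventually_iff.1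
    (touch.and (hX.eventually_mem hx))
  obtain ⟨v, v_continuous, hv, v_le, lt_v⟩ := hu x hx (ε / 2 * r ^ 2) (by positivity)
  let q := quadJet x (u x) L (symForm (A + ε • 1))
  have q_continuous : Continuous q := contDiff_quadJet (k := 0).continuous
  obtain ⟨z, hz, hmax⟩ := (isCompact_closedBall x r).exists_isMaxOn
    (nonempty_closedBall.2 hr.le) (f := fun y => v y - q y)
    ((v_continuous.mono fun y hy => (hball hy).2).sub q_continuous.continuousOn)
  have z_interior : z ∈ ball x r := by
    have at_center : v x - q x ≤ v z - q z := hmax (mem_closedBall_self hr.le)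
    have touch_z := (hball hz).1
    simp only [q, quadJet_self] at at_center
    simp only [quadJet, symForm_add_smul_one] at at_center touch_z
    have : ‖z - x‖ ^ 2 < r ^ 2 := by
      refine lt_of_mul_lt_mul_left ?_ (half_pos hε).le
      linarith [v_le z (hball hz).2]
    exact mem_ball_iff_norm.2 (lt_of_pow_lt_pow_left₀ 2 hr.le this)
  exact hv.mem_of_isLocalMax hF (hball hz).2 (hasQuadExpansionAt_quadJet (symForm_comm _) x z)
    (hmax.isLocalMax (closedBall_mem_nhds_of_mem z_interior)) fun h => le_rfl

end IsSubsolutionOn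

end SubsolutionStability

section PerronFamily

variable {n : ℕ} {F : Set (SymMat n)} {Ω U : Set (Euc n)} {φ f g v w : Euc n → ℝ} {x₀ : Euc n}
  {ε r s c : ℝ}

/-- The Perron family: continuous viscosity subsolutions with boundary values at most `φ`. -/
structure IsPerronSubsolution {n : ℕ} (F : Set (SymMat n)) (Ω : Set (Euc n)) (φ v : Euc n → ℝ) :
    Prop where
  continuousOn : ContinuousOn v (closure Ω)
  isSubsolutionOn : IsSubsolutionOn F Ω v
  le_boundary : ∀ b ∈ frontier Ω, v b ≤ φ b

namespace IsPerronSubsolution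

theorem glueMax (hf : IsPerronSubsolution F Ω φ f) (hU : IsOpen U)
    (hgc : ContinuousOn g (closure Ω ∩ U)) (hg : IsSubsolutionOn F (Ω ∩ U) g)
    (hgφ : ∀ b ∈ frontier Ω, b ∈ U → g b ≤ φ b)
    (hgf : ∀ x ∈ closure Ω, x ∉ U → ∀ᶠ y in 𝓝[closure Ω] x, y ∈ U → g y ≤ f y) :
    IsPerronSubsolution F Ω φ (glueMax U f g) where
  continuousOn := continuousOn_glueMax hU hf.continuousOn hgc hgf
  isSubsolutionOn := hf.isSubsolutionOn.glueMax hU hg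
  le_boundary b hb := by
    obtain h | ⟨hbU, h⟩ := glueMax_eq_left_or_right (U := U) (f := f) (g := g) (x := b)
    · exact h ▸ hf.le_boundary b hb
    · exact h ▸ hgφ b hb hbU

theorem glueMax_univ (hv : IsPerronSubsolution F Ω φ v) (hw : IsPerronSubsolution F Ω φ w) :
    IsPerronSubsolution F Ω φ (_root_.glueMax univ v w) :=
  hv.glueMax isOpen_univ (hw.continuousOn.mono inter_subset_left)
    (hw.isSubsolutionOn.mono inter_subset_left) (fun b hb _ => hw.le_boundary b hb)
    fun x _ hx => absurd (mem_univ x) hx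

theorem glueMax_ball (hf : IsPerronSubsolution F Ω φ f) (hgc : ContinuousOn g (ball x₀ r))
    (hg : IsSubsolutionOn F (Ω ∩ ball x₀ r) g)
    (hgφ : ∀ b ∈ frontier Ω, b ∈ ball x₀ r → g b ≤ φ b) (hs : s < r)
    (hgf : ∀ y ∈ closure Ω, y ∈ ball x₀ r → s < dist y x₀ → g y ≤ f y) :
    IsPerronSubsolution F Ω φ (_root_.glueMax (ball x₀ r) f g) := by
  refine hf.glueMax isOpen_ball (hgc.mono inter_subset_right) hg hgφ fun x _ hxr => ?_
  have s_lt : s < dist x x₀ := hs.trans_le (not_lt.1 hxr)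
  have dist_continuous : ContinuousAt (fun y => dist y x₀) x := by fun_prop
  filter_upwards [mem_nhdsWithin_of_mem_nhds (dist_continuous.eventually_const_lt s_lt),
    self_mem_nhdsWithin] with y hy hyΩ hyr using hgf y hyΩ hyr hy

theorem glueMax_translate (hf : IsPerronSubsolution F Ω φ f) (hv : IsPerronSubsolution F Ω φ v)
    (hΩ : IsOpen Ω) {a : Euc n} (hvφ : ∀ b ∈ frontier Ω, b + a ∈ Ω → v (b + a) - c ≤ φ b)
    (hvf : ∀ z ∈ closure Ω, z + a ∈ frontier Ω → v (z + a) - c < f z) :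
    IsPerronSubsolution F Ω φ (_root_.glueMax {z | z + a ∈ Ω} f fun z => v (z + a) - c) := by
  have translate_continuous : Continuous (· + a) := continuous_add_const a
  have v_continuous : ContinuousOn (fun z => v (z + a) - c) ((· + a) ⁻¹' closure Ω) :=
    (hv.continuousOn.comp translate_continuous.continuousOn (mapsTo_preimage _ _)).sub
      continuousOn_const
  refine hf.glueMax (hΩ.preimage translate_continuous)
    (v_continuous.mono fun z hz => subset_closure hz.2)
    ((hv.isSubsolutionOn.comp_add_const_sub a c).mono inter_subset_right) hvφ fun z hz notMem => ?_
  by_cases hza : z + a ∈ closure Ω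
  · have lt : v (z + a) - c < f z := hvf z hz ⟨hza, by rwa [hΩ.interior_eq]⟩
    obtain ⟨m, v_lt, lt_f⟩ := exists_between lt
    filter_upwards [(hf.continuousOn z hz).eventually_const_lt lt_f,
      mem_nhdsWithin_of_mem_nhds
        (eventually_nhdsWithin_iff.1 ((v_continuous z hza).eventually_lt_const v_lt))]
      with y f_gt v_lt_m hy
    exact ((v_lt_m (subset_closure hy)).trans f_gt).le
  · have away : ∀ᶠ y in 𝓝 z, y + a ∉ closure Ω :=
      (isClosed_closure.preimage translate_continuous).isOpen_compl.mem_nhds hza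
    filter_upwards [mem_nhdsWithin_of_mem_nhds away] with y hy hyΩ
    exact absurd (subset_closure hyΩ) hy

theorem add_nonpos (hv : IsPerronSubsolution F Ω φ v)
    (hw : IsPerronSubsolution (dirDual F) Ω (fun x => -φ x) w) (hF : IsDirichletSet F)
    (hΩ : IsOpen Ω) (hb : Bornology.IsBounded Ω) : ∀ x ∈ closure Ω, v x + w x ≤ 0 :=
  hv.isSubsolutionOn.add_nonpos_of_dirDual hF hΩ hb hv.continuousOn hw.continuousOn
    hw.isSubsolutionOn fun b hb => by linarith [hv.le_boundary b hb, hw.le_boundary b hb]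

end IsPerronSubsolution

theorem exists_isPerronSubsolution (hF : IsDirichletSet F) (hb : Bornology.IsBounded Ω)
    (hφ : ContinuousOn φ (frontier Ω)) : ∃ v, IsPerronSubsolution F Ω φ v := by
  obtain ⟨A, hA⟩ := hF.nonempty
  let q : Euc n → ℝ := quadJet 0 0 0 (symForm A)
  have q_continuous : Continuous q := contDiff_quadJet (k := 0).continuous
  have frontier_compact : IsCompact (frontier Ω) :=
    hb.isCompact_closure.of_isClosed_subset isClosed_frontier frontier_subset_closure
  obtain ⟨C, hC⟩ := frontier_compact.bddAbove_image (q_continuous.continuousOn.sub hφ)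
  refine ⟨fun x => -C + q x, ⟨by fun_prop, ?_, fun b hb => ?_⟩⟩
  · exact .of_hasQuadExpansionAt hF fun x _ => ⟨_, _,
      (hasQuadExpansionAt_quadJet (symForm_comm A) 0 x).const_add (-C), A, hA, fun h => le_rfl⟩
  · have q_sub_le : q b - φ b ≤ C := hC (mem_image_of_mem _ hb)
    linarith

theorem exists_isPerronSubsolution_sub_le (hF : IsDirichletSet F) (hΩ : IsOpen Ω)
    (hb : Bornology.IsBounded Ω) (hφ : ContinuousOn φ (frontier Ω)) (hx₀ : x₀ ∈ frontier Ω)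
    (hc : StrictlyConvexAt (raySet F) Ω x₀) (hε : 0 < ε) :
    ∃ v, IsPerronSubsolution F Ω φ v ∧ φ x₀ - ε ≤ v x₀ := by
  obtain ⟨f, hf⟩ := exists_isPerronSubsolution hF hb hφ
  obtain ⟨r, hr, e, he, ψ, t₀, ψ_continuous, ψ_zero, ψ_le, hψ⟩ := hc.exists_localBarrier hF hΩ hx₀
  obtain ⟨r', hr', φ_near⟩ := Metric.continuousWithinAt_iff.1 (hφ x₀ hx₀) ε hε
  obtain ⟨C, hC⟩ := hb.isCompact_closure.bddBelow_image hf.continuousOn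
  let R := min r r'
  have R_pos : 0 < R := lt_min hr hr'
  have ball_subset : ball x₀ R ⊆ ball x₀ r := ball_subset_ball (min_le_left r r')
  have mul_atTop : Tendsto (fun t => t * (e * (R / 2) ^ 2)) atTop atTop :=
    tendsto_id.atTop_mul_const (by positivity)
  obtain ⟨t, t_pos, ht₀, t_large⟩ := ((eventually_gt_atTop (0 : ℝ)).and
    ((eventually_ge_atTop t₀).and (mul_atTop.eventually_ge_atTop (φ x₀ - ε - C)))).exists
  have barrier_le : ∀ x ∈ closure Ω, x ∈ ball x₀ R → t * ψ x ≤ -(t * (e * dist x x₀ ^ 2)) := by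
    intro x hx hxR
    rw [dist_eq_norm]
    linarith [mul_le_mul_of_nonneg_left (ψ_le x hx (ball_subset hxR)) t_pos.le]
  refine ⟨_, hf.glueMax_ball (r := R) (s := R / 2) (g := fun x => φ x₀ - ε + t * ψ x)
    (((ψ_continuous.mono ball_subset).const_mul t).const_add _)
    ((hψ t t_pos ht₀ _).mono (inter_subset_right.trans ball_subset)) (fun b hb hbR => ?_)
    (half_lt_self R_pos) (fun y hy hyR far => ?_), ?_⟩
  · have φ_close := φ_near hb (hbR.trans_le (min_le_right r r'))
    rw [Real.dist_eq, abs_lt] at φ_close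
    have : 0 ≤ t * (e * dist b x₀ ^ 2) := by positivity
    linarith [barrier_le b (frontier_subset_closure hb) hbR]
  · have f_ge : C ≤ f y := hC (mem_image_of_mem f hy)
    have : t * (e * (R / 2) ^ 2) ≤ t * (e * dist y x₀ ^ 2) := by gcongr
    linarith [barrier_le y hy hyR]
  · simpa only [ψ_zero, mul_zero, add_zero] using
      le_glueMax_right (f := f) (x := x₀) (g := fun x => φ x₀ - ε + t * ψ x) (mem_ball_self R_pos)

theorem exists_isPerronSubsolution_sub_le_near (hF : IsDirichletSet F) (hΩ : IsOpen Ω)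
    (hb : Bornology.IsBounded Ω) (hφ : ContinuousOn φ (frontier Ω))
    (hc : ∀ x ∈ frontier Ω, StrictlyConvexAt (raySet F) Ω x) (hε : 0 < ε) :
    ∃ δ > 0, ∃ v, IsPerronSubsolution F Ω φ v ∧
      ∀ b ∈ frontier Ω, ∀ x ∈ closure Ω, dist x b < δ → φ b - ε ≤ v x := by
  have frontier_compact : IsCompact (frontier Ω) :=
    hb.isCompact_closure.of_isClosed_subset isClosed_frontier frontier_subset_closure
  refine frontier_compact.induction_on (p := fun S => ∃ δ > 0, ∃ v, IsPerronSubsolution F Ω φ v ∧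
    ∀ b ∈ S, ∀ x ∈ closure Ω, dist x b < δ → φ b - ε ≤ v x) ?_ ?_ ?_ fun x₀ hx₀ => ?_
  · obtain ⟨v, hv⟩ := exists_isPerronSubsolution hF hb hφ
    exact ⟨1, one_pos, v, hv, fun b hb => absurd hb (notMem_empty b)⟩
  · rintro S T hST ⟨δ, hδ, v, hv, near⟩
    exact ⟨δ, hδ, v, hv, fun b hb => near b (hST hb)⟩
  · rintro S T ⟨δ, hδ, v, hv, near_S⟩ ⟨δ', hδ', w, hw, near_T⟩
    refine ⟨min δ δ', lt_min hδ hδ', _, hv.glueMax_univ hw, fun b hb x hx close => ?_⟩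
    rw [lt_min_iff] at close
    obtain hbS | hbT := hb
    · exact (near_S b hbS x hx close.1).trans le_glueMax_left
    · exact (near_T b hbT x hx close.2).trans (le_glueMax_right (mem_univ x))
  · obtain ⟨v, hv, at_x₀⟩ := exists_isPerronSubsolution_sub_le hF hΩ hb hφ hx₀ (hc x₀ hx₀)
      (show 0 < ε / 3 by positivity)
    have φ_near : ∀ᶠ b in 𝓝[frontier Ω] x₀, φ b < φ x₀ + ε / 3 :=
      (hφ x₀ hx₀).eventually_lt_const (by linarith)
    have v_near : ∀ᶠ x in 𝓝[closure Ω] x₀, v x₀ - ε / 3 < v x :=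
      (hv.continuousOn x₀ (frontier_subset_closure hx₀)).eventually_const_lt (by linarith)
    obtain ⟨r, hr, lt_v⟩ := Metric.eventually_nhds_iff_ball.1 (eventually_nhdsWithin_iff.1 v_near)
    refine ⟨{b | φ b < φ x₀ + ε / 3} ∩ ball x₀ (r / 2),
      inter_mem φ_near (mem_nhdsWithin_of_mem_nhds (ball_mem_nhds x₀ (half_pos hr))), r / 2,
      half_pos hr, v, hv, fun b ⟨φ_lt, hb⟩ x hx close => ?_⟩
    have x_near : x ∈ ball x₀ r := by
      rw [mem_ball] at hb ⊢
      linarith [dist_triangle x b x₀]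
    linarith [φ_lt.out, lt_v x x_near hx]

end PerronFamily

section PerronSolution

variable {n : ℕ} {F : Set (SymMat n)} {Ω : Set (Euc n)} {φ u v : Euc n → ℝ} {x : Euc n} {ε : ℝ}

/-- Walsh's argument: a translate of `v`, lowered by `2 * ε`, is glued into a member of the family
that is already large near the boundary. -/
theorem exists_isPerronSubsolution_sub_le_of_dist_lt (hF : IsDirichletSet F) (hΩ : IsOpen Ω)
    (hb : Bornology.IsBounded Ω) (hφ : ContinuousOn φ (frontier Ω))
    (hc : ∀ x ∈ frontier Ω, StrictlyConvexAt (raySet F) Ω x)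
    (hc' : ∀ x ∈ frontier Ω, StrictlyConvexAt (raySet (dirDual F)) Ω x) (hε : 0 < ε) :
    ∃ δ > 0, ∀ v, IsPerronSubsolution F Ω φ v → ∀ x ∈ closure Ω, ∀ y ∈ closure Ω, dist x y < δ →
      ∃ w, IsPerronSubsolution F Ω φ w ∧ v y - 2 * ε ≤ w x := by
  obtain ⟨α, hα, l, hl, lower⟩ := exists_isPerronSubsolution_sub_le_near hF hΩ hb hφ hc hε
  obtain ⟨β, hβ, m, hm, upper⟩ := exists_isPerronSubsolution_sub_le_near hF.dual hΩ hb hφ.neg hc' hε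
  refine ⟨min α β, lt_min hα hβ, fun v hv x hx y hy close => ?_⟩
  rw [lt_min_iff] at close
  by_cases hyΩ : y ∈ Ω
  · have dist_translate (z : Euc n) : dist z (z + (y - x)) = dist x y := by
      rw [dist_self_add_right, ← dist_eq_norm']
    refine ⟨_, (hv.glueMax_univ hl).glueMax_translate hv (a := y - x) (c := 2 * ε) hΩ
      (fun b hbfr hbΩ => ?_) fun z hz hz' => ?_, ?_⟩
    · have m_ge : -φ b - ε ≤ m (b + (y - x)) := upper b hbfr _ (subset_closure hbΩ)
        (by rw [dist_comm, dist_translate]; exact close.2)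
      linarith [hv.add_nonpos hm hF hΩ hb _ (subset_closure hbΩ)]
    · have l_ge := lower _ hz' z hz (by rw [dist_translate]; exact close.1)
      linarith [hv.le_boundary _ hz',
        le_glueMax_right (U := univ) (f := v) (g := l) (mem_univ z)]
    · have mem : x + (y - x) ∈ Ω := by rwa [add_sub_cancel]
      simpa only [add_sub_cancel] using le_glueMax_right (U := {z | z + (y - x) ∈ Ω})
        (f := glueMax univ v l) (g := fun z => v (z + (y - x)) - 2 * ε) mem
  · have hyfr : y ∈ frontier Ω := ⟨hy, by rwa [hΩ.interior_eq]⟩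
    exact ⟨l, hl, by linarith [lower y hyfr x hx close.1, hv.le_boundary y hyfr]⟩

theorem IsPerronSubsolution.isSubsolutionOn_neg (hF : IsDirichletSet F) (hΩ : IsOpen Ω)
    (hu : IsPerronSubsolution F Ω φ u)
    (hmax : ∀ v, IsPerronSubsolution F Ω φ v → ∀ x ∈ Ω, v x ≤ u x) :
    IsSubsolutionOn (dirDual F) Ω fun x => -u x := by
  intro x hx A L touch hA
  obtain ⟨δ, hδ, hB⟩ := hF.mem_interior_iff.1 hA
  obtain ⟨r, hr, hball⟩ := Metric.eventually_nhds_iff_ball.1 (touch.and (hΩ.eventually_mem hx))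
  let s := δ / 2 * (r / 2) ^ 2
  have s_pos : 0 < s := by positivity
  let g := quadJet x (u x + s) (-L) (symForm (-A - δ • 1))
  have g_continuous : Continuous g := contDiff_quadJet (k := 0).continuous
  have g_subsolution : IsSubsolutionOn F (Ω ∩ ball x r) g := .of_hasQuadExpansionAt hF fun y _ =>
    ⟨_, _, hasQuadExpansionAt_quadJet (symForm_comm _) x y, _, hB, fun h => le_rfl⟩
  have glued := hu.glueMax_ball (s := r / 2) g_continuous.continuousOn g_subsolution
    (fun b hb hbr => absurd (hball b hbr).2 (hΩ.frontier_eq ▸ hb).2) (half_lt_self hr)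
    fun y _ hyr far => ?_
  · have at_x : g x ≤ u x := (le_glueMax_right (mem_ball_self hr)).trans (hmax _ glued x hx)
    simp only [g, quadJet_self] at at_x
    linarith
  · have u_ge := (hball y hyr).1
    have s_le : δ / 2 * (r / 2) ^ 2 ≤ δ / 2 * ‖y - x‖ ^ 2 := by
      rw [← dist_eq_norm]
      gcongr
    simp only [g, s, quadJet, symForm_sub_smul_one, map_neg, neg_apply] at u_ge ⊢
    linarith

/-- The upper envelope of the Perron family. At points where the family is unbounded it takes the
junk value `0`, but by comparison this never happens on the closure of a bounded domain. -/
def perronSolution {n : ℕ} (F : Set (SymMat n)) (Ω : Set (Euc n)) (φ : Euc n → ℝ) (x : Euc n) : ℝ :=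
  ⨆ v : {v // IsPerronSubsolution F Ω φ v}, v.1 x

theorem IsPerronSubsolution.le_perronSolution (hv : IsPerronSubsolution F Ω φ v)
    (hF : IsDirichletSet F) (hΩ : IsOpen Ω) (hb : Bornology.IsBounded Ω)
    (hφ : ContinuousOn φ (frontier Ω)) (hx : x ∈ closure Ω) : v x ≤ perronSolution F Ω φ x := by
  obtain ⟨w, hw⟩ := exists_isPerronSubsolution hF.dual hb hφ.neg
  refine le_ciSup (f := fun v : {v // IsPerronSubsolution F Ω φ v} => v.1 x) ⟨-w x, ?_⟩ ⟨v, hv⟩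
  rintro _ ⟨⟨v', hv'⟩, rfl⟩
  linarith [hv'.add_nonpos hw hF hΩ hb x hx]

theorem perronSolution_le (hF : IsDirichletSet F) (hb : Bornology.IsBounded Ω)
    (hφ : ContinuousOn φ (frontier Ω)) {C : ℝ}
    (h : ∀ v, IsPerronSubsolution F Ω φ v → v x ≤ C) : perronSolution F Ω φ x ≤ C := by
  obtain ⟨v, hv⟩ := exists_isPerronSubsolution hF hb hφ
  have : Nonempty {v // IsPerronSubsolution F Ω φ v} := ⟨v, hv⟩
  exact ciSup_le fun v => h v.1 v.2

theorem perronSolution_eq_of_mem_frontier (hF : IsDirichletSet F) (hΩ : IsOpen Ω)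
    (hb : Bornology.IsBounded Ω) (hφ : ContinuousOn φ (frontier Ω)) (hx : x ∈ frontier Ω)
    (hc : StrictlyConvexAt (raySet F) Ω x) : perronSolution F Ω φ x = φ x := by
  refine le_antisymm (perronSolution_le hF hb hφ fun v hv => hv.le_boundary x hx) ?_
  refine le_of_forall_sub_le fun ε hε => ?_
  obtain ⟨v, hv, hvx⟩ := exists_isPerronSubsolution_sub_le hF hΩ hb hφ hx hc hε
  exact hvx.trans (hv.le_perronSolution hF hΩ hb hφ (frontier_subset_closure hx))

theorem continuousOn_perronSolution (hF : IsDirichletSet F) (hΩ : IsOpen Ω)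
    (hb : Bornology.IsBounded Ω) (hφ : ContinuousOn φ (frontier Ω))
    (hc : ∀ x ∈ frontier Ω, StrictlyConvexAt (raySet F) Ω x)
    (hc' : ∀ x ∈ frontier Ω, StrictlyConvexAt (raySet (dirDual F)) Ω x) :
    ContinuousOn (perronSolution F Ω φ) (closure Ω) := by
  refine Metric.continuousOn_iff.2 fun x hx ε hε => ?_
  obtain ⟨δ, hδ, walsh⟩ :=
    exists_isPerronSubsolution_sub_le_of_dist_lt hF hΩ hb hφ hc hc' (show 0 < ε / 4 by positivity)
  have sub_le : ∀ x ∈ closure Ω, ∀ y ∈ closure Ω, dist x y < δ →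
      perronSolution F Ω φ y ≤ perronSolution F Ω φ x + ε / 2 := by
    intro x hx y hy close
    refine perronSolution_le hF hb hφ fun v hv => ?_
    obtain ⟨w, hw, v_le⟩ := walsh v hv x hx y hy close
    linarith [hw.le_perronSolution hF hΩ hb hφ hx]
  refine ⟨δ, hδ, fun y hy close => ?_⟩
  rw [Real.dist_eq, abs_lt]
  constructor <;> linarith [sub_le x hx y hy (dist_comm y x ▸ close), sub_le y hy x hx close]

theorem isSubsolutionOn_perronSolution (hF : IsDirichletSet F) (hΩ : IsOpen Ω)
    (hb : Bornology.IsBounded Ω) (hφ : ContinuousOn φ (frontier Ω)) :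
    IsSubsolutionOn F Ω (perronSolution F Ω φ) := by
  refine .of_forall_exists_lt hF.isClosed hΩ fun x _ η hη => ?_
  obtain ⟨v₀, hv₀⟩ := exists_isPerronSubsolution hF hb hφ
  have : Nonempty {v // IsPerronSubsolution F Ω φ v} := ⟨v₀, hv₀⟩
  obtain ⟨⟨v, hv⟩, lt_v⟩ := exists_lt_of_lt_ciSup (sub_lt_self (perronSolution F Ω φ x) hη)
  exact ⟨v, hv.continuousOn.mono subset_closure, hv.isSubsolutionOn,
    fun y hy => hv.le_perronSolution hF hΩ hb hφ (subset_closure hy), lt_v⟩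

theorem isSubsolutionOn_neg_perronSolution (hF : IsDirichletSet F) (hΩ : IsOpen Ω)
    (hb : Bornology.IsBounded Ω) (hφ : ContinuousOn φ (frontier Ω))
    (hc : ∀ x ∈ frontier Ω, StrictlyConvexAt (raySet F) Ω x)
    (hc' : ∀ x ∈ frontier Ω, StrictlyConvexAt (raySet (dirDual F)) Ω x) :
    IsSubsolutionOn (dirDual F) Ω fun x => -perronSolution F Ω φ x :=
  IsPerronSubsolution.isSubsolutionOn_neg hF hΩ (φ := φ)
    ⟨continuousOn_perronSolution hF hΩ hb hφ hc hc', isSubsolutionOn_perronSolution hF hΩ hb hφ,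
      fun b hbΩ => (perronSolution_eq_of_mem_frontier hF hΩ hb hφ hbΩ (hc b hbΩ)).le⟩
    fun _ hv _ hx => hv.le_perronSolution hF hΩ hb hφ (subset_closure hx)

end PerronSolution

/-- Theorem 6.2, the Dirichlet problem: existence and uniqueness of
the `F`-Dirichlet solution with given continuous boundary values on a bounded domain
whose boundary is strictly `F⃗`- and `F̃⃗`-convex. -/
theorem dirichlet_problem {n : ℕ} (F : Set (SymMat n)) (hF : IsDirichletSet F)
    (Ω : Set (Euc n)) (hΩo : IsOpen Ω) (hΩb : Bornology.IsBounded Ω)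
    (hsb : HasSmoothBoundary Ω)
    (hconvF : ∀ x ∈ frontier Ω, StrictlyConvexAt (raySet F) Ω x)
    (hconvFd : ∀ x ∈ frontier Ω, StrictlyConvexAt (raySet (dirDual F)) Ω x)
    (φ : Euc n → ℝ) (hφ : ContinuousOn φ (frontier Ω)) :
    ∃ u : Euc n → ℝ,
      (ContinuousOn u (closure Ω) ∧ (∀ x ∈ frontier Ω, u x = φ x) ∧
        IsTypeF F Ω (fun x => (u x : EReal)) ∧
        IsTypeF (dirDual F) Ω (fun x => ((-u x : ℝ) : EReal))) ∧
      ∀ u' : Euc n → ℝ,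
        (ContinuousOn u' (closure Ω) ∧ (∀ x ∈ frontier Ω, u' x = φ x) ∧
          IsTypeF F Ω (fun x => (u' x : EReal)) ∧
          IsTypeF (dirDual F) Ω (fun x => ((-u' x : ℝ) : EReal))) →
        ∀ x ∈ closure Ω, u' x = u x := by
  have hu_cont := continuousOn_perronSolution hF hΩo hΩb hφ hconvF hconvFd
  have hu_bdry : ∀ x ∈ frontier Ω, perronSolution F Ω φ x = φ x := fun x hx =>
    perronSolution_eq_of_mem_frontier hF hΩo hΩb hφ hx (hconvF x hx)
  have hu_sub := isSubsolutionOn_perronSolution hF hΩo hΩb hφ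
  have hu_super := isSubsolutionOn_neg_perronSolution hF hΩo hΩb hφ hconvF hconvFd
  refine ⟨perronSolution F Ω φ, ⟨hu_cont, hu_bdry,
    hu_sub.isTypeF hF hΩo (hu_cont.mono subset_closure),
    hu_super.isTypeF hF.dual hΩo (hu_cont.mono subset_closure).neg⟩, ?_⟩
  rintro u' ⟨hu'_cont, hu'_bdry, hu'_type, hu'_dual⟩ x hx
  have u'_le := (IsSubsolutionOn.of_isTypeF hF hΩo hu'_type).le_of_dirDual_neg hF hΩo hΩb
    hu'_cont hu_cont hu_super fun b hb => (hu'_bdry b hb).trans_le (hu_bdry b hb).ge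
  have u_le := hu_sub.le_of_dirDual_neg hF hΩo hΩb hu_cont hu'_cont
    (.of_isTypeF hF.dual hΩo hu'_dual) fun b hb => (hu_bdry b hb).trans_le (hu'_bdry b hb).ge
  exact le_antisymm (u'_le x hx) (u_le x hx)
end
end
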